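/- arXiv:2506.06477 — 7 statements merged into one kernel-verified Lean document; each statement's English description precedes it below -/
import Mathlib

section
/- For every integer n ≥ 14, every set S of n points in the Euclidean plane in general position, and every positive integer k satisfying 12k < 7n − 6 − √(37n² − 72n + 36), there exist two distinct points p, q ∈ S such that every closed disk having both p and q on its boundary contains at least k points of S in its open interior and leaves at least k points of S strictly outside the closed disk. -/
/-!
Call a pair `{p, q}` of points of `S` bad if some circle through `p` and `q` has fewer than `k`
points of `S` inside it or fewer than `k` outside it. The theorem follows from the bound
`6k(n - 1 - k)` for the number of bad pairs, because the hypothesis on `k` implies that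
`k(7n - 6k - 6) = 6k(n - 1 - k) + kn` is less than `n(n - 1)/2`.

**From bad pairs to triples.** In the pencil of circles through `p` and `q`, ordered by the position
of the centre on the bisector, every other point of `S` enters or leaves the disk exactly once, so
the number of points inside moves in steps of one. At the two ends of the pencil the disk is
one of the two sides of the line `pq`, so at one end at least `k` points are inside and at one end at
least `k` are outside. Hence a bad pair lies on a circle through a third
point of `S` with exactly `k - 1` points inside or exactly `k - 1` outside (`bad_pair`).

**Counting triples.** The number of triples of `S` whose circle has `j` points inside or `j` outside
(counted twice when both happen) is exactly `2(j + 1)(n - 2 - j)`. Fix a generic direction of the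
abscissa, so that each triple has a middle point `q`. Inversion at `q` turns circles through `q` into
lines and the two sides of the circle into the two sides of the line, and it preserves the left and
right sides of the vertical line through `q`. The triples with middle point `q` thus become lines
spanned by a point on the left and a point on the right of the origin, and we count those with
exactly `j` points above them (`crossing_sum`). Rotating a line about a point `b` gives, again by
a one-step walk, the difference between the numbers of such lines leading from `b` to the right
and from `b` to the left (`flow_sum`). Summing over all `b` left of the origin cancels the lines
with both ends there, and the result depends only on `n`, `j` and the rank of `q`. Summing over `q`
yields `(j + 1)(n - 2 - j)` (`card_triples`). The side above the line is the inside or the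
outside of the circle, so both `j` and `n - 3 - j` are used, which accounts for the factor 2. Each
triple contains three pairs, which gives the bound on the number of bad pairs (`core`).
-/

open EuclideanGeometry Metric

noncomputable section

/-- Points of the Euclidean plane. -/
abbrev Pt := EuclideanSpace ℝ (Fin 2)

/-- A set of points in the plane is in general position if no three of its points are
collinear and no four of its points are concyclic. -/
def GenPos (S : Set Pt) : Prop :=
  (∀ T ⊆ S, T.ncard = 3 → ¬Collinear ℝ T) ∧
  (∀ T ⊆ S, T.ncard = 4 → ¬Cospherical T)

namespace InOut

/-! ### Walks with unit steps -/

/-- The integer indicator of a proposition. -/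
def ind (p : Prop) [Decidable p] : ℤ := if p then 1 else 0

variable {α : Type*} [DecidableEq α]

/-- The points of `P` have positions `τ`, and those satisfying `c` count while they lie beyond the
moving parameter, the others once they have been passed. This is the number of points that count
when the parameter is at `τ r`; the point `r` itself is not counted. -/
def walk (P : Finset α) (c : α → Prop) [DecidablePred c] (τ : α → ℝ) (r : α) : ℕ :=
  (P.filter (fun s => c s ∧ τ r < τ s)).card + (P.filter (fun s => ¬ c s ∧ τ s < τ r)).card

/-- The count goes from the number of points satisfying `c` to the number of those that do not.
Each point changes it by one, so the passages between the levels `j` and `j + 1`, counted with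
sign, are determined by the two end values. -/
theorem walk_sum (c : α → Prop) [DecidablePred c] (τ : α → ℝ) (P : Finset α) :
    Set.InjOn τ P → ∀ j : ℤ,
    ∑ r ∈ P, (if c r then ind ((walk P c τ r : ℤ) = j) else - ind ((walk P c τ r : ℤ) = j))
      = ind (j < ((P.filter (fun s => c s)).card : ℤ))
        - ind (j < ((P.filter (fun s => ¬ c s)).card : ℤ)) := by
  induction P using Finset.induction_on_max_value τ with
  | empty => intro _ j; simp [ind]
  | insert z P hz hmax ih =>
    intro hinj j
    have hlt : ∀ x ∈ P, τ x < τ z := by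
      intro x hx
      refine lt_of_le_of_ne (hmax x hx) (fun h => hz ?_)
      have := hinj (by simp [hx]) (by simp) h
      exact this ▸ hx
    have hP : Set.InjOn τ P := hinj.mono (by simp)
    rw [Finset.sum_insert hz]
    have e1 : P.filter (fun s => c s ∧ τ z < τ s) = ∅ := by
      apply Finset.filter_eq_empty_iff.2
      intro x hx h
      exact absurd h.2 (hlt x hx).le.not_gt
    have e2 : P.filter (fun s => ¬ c s ∧ τ s < τ z) = P.filter (fun s => ¬ c s) := by
      apply Finset.filter_congr
      intro x hx
      simp [hlt x hx]
    have hzw : walk (insert z P) c τ z = (P.filter (fun s => ¬ c s)).card := by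
      unfold walk
      rw [Finset.filter_insert, Finset.filter_insert]
      simp [e1, e2]
    by_cases hc : c z
    · have hw : ∀ r ∈ P, walk (insert z P) c τ r = walk P c τ r + 1 := by
        intro r hr
        unfold walk
        rw [Finset.filter_insert, Finset.filter_insert, if_pos ⟨hc, hlt r hr⟩,
          if_neg (by simp [hc]), Finset.card_insert_of_notMem (by simp [hz])]
        omega
      have hsum := ih hP (j - 1)
      have : ∀ r ∈ P, (if c r then ind ((walk (insert z P) c τ r : ℤ) = j)
          else - ind ((walk (insert z P) c τ r : ℤ) = j))
          = (if c r then ind ((walk P c τ r : ℤ) = j - 1)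
          else - ind ((walk P c τ r : ℤ) = j - 1)) := by
        intro r hr
        have : ind ((walk (insert z P) c τ r : ℤ) = j) = ind ((walk P c τ r : ℤ) = j - 1) := by
          rw [hw r hr]; unfold ind; congr 1; push_cast; apply propext
          constructor <;> intro h <;> linarith
        rw [this]
      rw [Finset.sum_congr rfl this, hsum, hzw, if_pos hc, Finset.filter_insert,
        Finset.filter_insert, if_pos hc, if_neg (by simp [hc]),
        Finset.card_insert_of_notMem (by simp [hz])]
      unfold ind
      push_cast
      split_ifs <;> omega
    · have hw : ∀ r ∈ P, walk (insert z P) c τ r = walk P c τ r := by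
        intro r hr
        unfold walk
        rw [Finset.filter_insert, Finset.filter_insert, if_neg (by simp [hc]),
          if_neg (by simp [(hlt r hr).le])]
      have hsum := ih hP j
      have : ∀ r ∈ P, (if c r then ind ((walk (insert z P) c τ r : ℤ) = j)
          else - ind ((walk (insert z P) c τ r : ℤ) = j))
          = (if c r then ind ((walk P c τ r : ℤ) = j)
          else - ind ((walk P c τ r : ℤ) = j)) := by
        intro r hr
        rw [hw r hr]
      rw [Finset.sum_congr rfl this, hsum, hzw, if_neg hc, Finset.filter_insert,
        Finset.filter_insert, if_neg hc, if_pos (by simp [hc]),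
        Finset.card_insert_of_notMem (by simp [hz])]
      unfold ind
      push_cast
      split_ifs <;> omega

/-- The ranks of the elements of `A` with respect to an injective `τ` are `0, …, A.card - 1`. -/
theorem sum_rank (τ : α → ℝ) (F : ℕ → ℤ) (A : Finset α) : Set.InjOn τ A →
    ∑ b ∈ A, F (A.filter (fun a => τ a < τ b)).card = ∑ i ∈ Finset.range A.card, F i := by
  induction A using Finset.induction_on_max_value τ with
  | empty => simp
  | insert z P hz hmax ih =>
    intro hinj
    have hlt : ∀ x ∈ P, τ x < τ z := by
      intro x hx
      refine lt_of_le_of_ne (hmax x hx) (fun h => hz ?_)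
      have := hinj (by simp [hx]) (by simp) h
      exact this ▸ hx
    rw [Finset.sum_insert hz, Finset.card_insert_of_notMem hz, Finset.sum_range_succ,
      ← ih (hinj.mono (by simp)), add_comm]
    congr 1
    · refine Finset.sum_congr rfl fun b hb => ?_
      rw [Finset.filter_insert, if_neg (hlt b hb).le.not_gt]
    · rw [Finset.filter_insert, if_neg (lt_irrefl _), Finset.filter_true_of_mem hlt]

/-- Discrete intermediate value property. Let the points satisfying `c` count once they have been
passed, and the others until then. If the count is at most `j` at `t₀` and exceeds `j` at the
far end, where it equals the number of points satisfying `c`, then it is `j` at some point of `P`. -/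
theorem exists_level (P : Finset α) (c : α → Prop) [DecidablePred c] (τ : α → ℝ)
    (hinj : Set.InjOn τ P) (t₀ : ℝ) (j : ℕ)
    (h₀ : (P.filter (fun s => c s ∧ τ s < t₀)).card
      + (P.filter (fun s => ¬ c s ∧ t₀ < τ s)).card ≤ j)
    (h₁ : j < (P.filter (fun s => c s)).card) :
    ∃ r ∈ P, (P.filter (fun s => c s ∧ τ s < τ r)).card
      + (P.filter (fun s => ¬ c s ∧ τ r < τ s)).card = j := by
  set a := (P.filter (fun s => c s ∧ τ s < t₀)).card with ha
  -- `T` is the part of the walk after `t₀`; a point at `t₀` itself still has to be passed only if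
  -- it satisfies `c`, since otherwise it has already stopped counting.
  set T := P.filter (fun s => t₀ < τ s ∨ (c s ∧ τ s = t₀)) with hT
  have hsum := walk_sum c (fun s => - τ s) T
    (fun x hx y hy h => hinj (Finset.mem_filter.1 hx).1 (Finset.mem_filter.1 hy).1
      (by simpa using h)) ((j : ℤ) - a)
  have hR : (T.filter (fun s => c s)).card + a = (P.filter (fun s => c s)).card := by
    rw [ha, ← Finset.card_filter_add_card_filter_not (s := P.filter (fun s => c s))
      (fun s => ¬ τ s < t₀), hT, Finset.filter_filter, Finset.filter_filter, Finset.filter_filter]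
    congr 2
    · apply Finset.filter_congr; intro x _
      rw [not_lt, le_iff_lt_or_eq, eq_comm (a := t₀)]; tauto
    · apply Finset.filter_congr; intro x _; tauto
  have hL : T.filter (fun s => ¬ c s) = P.filter (fun s => ¬ c s ∧ t₀ < τ s) := by
    rw [hT, Finset.filter_filter]
    apply Finset.filter_congr; intro x _; tauto
  have hone : ind ((j : ℤ) - a < ((T.filter (fun s => c s)).card : ℤ))
        - ind ((j : ℤ) - a < ((T.filter (fun s => ¬ c s)).card : ℤ)) = 1 := by
    rw [hL]; unfold ind
    rw [if_pos (by omega), if_neg (by omega)]; rfl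
  rw [hone] at hsum
  obtain ⟨r, hr, hne⟩ := Finset.exists_ne_zero_of_sum_ne_zero (by rw [hsum]; exact one_ne_zero)
  have hw : (walk T c (fun s => - τ s) r : ℤ) = (j : ℤ) - a := by
    by_contra h
    apply hne
    simp [ind, h]
  have hrP := Finset.mem_filter.1 hr
  have hle : t₀ ≤ τ r := by
    rcases hrP.2 with h | h
    · exact h.le
    · exact h.2.ge
  refine ⟨r, hrP.1, ?_⟩
  have h1 : (P.filter (fun s => c s ∧ τ s < τ r)).card
      = (T.filter (fun s => c s ∧ - τ r < - τ s)).card + a := by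
    rw [ha, ← Finset.card_filter_add_card_filter_not (s := P.filter (fun s => c s ∧ τ s < τ r))
      (fun s => ¬ τ s < t₀), hT, Finset.filter_filter, Finset.filter_filter, Finset.filter_filter]
    congr 2
    · apply Finset.filter_congr; intro x _
      rw [not_lt, le_iff_lt_or_eq, eq_comm (a := t₀), neg_lt_neg_iff]; tauto
    · apply Finset.filter_congr; intro x _
      rw [not_not]
      constructor
      · rintro ⟨⟨h, _⟩, h'⟩; exact ⟨h, h'⟩
      · rintro ⟨h, h'⟩; exact ⟨⟨h, h'.trans_le hle⟩, h'⟩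
  have h2 : P.filter (fun s => ¬ c s ∧ τ r < τ s) = T.filter (fun s => ¬ c s ∧ - τ s < - τ r) := by
    rw [hT, Finset.filter_filter]
    apply Finset.filter_congr; intro x _
    rw [neg_lt_neg_iff]
    constructor
    · rintro ⟨h, h'⟩; exact ⟨Or.inl (hle.trans_lt h'), h, h'⟩
    · rintro ⟨_, h⟩; exact h
  unfold walk at hw
  rw [h1, h2]
  push_cast at hw
  omega

/-- As `exists_level`, where one of the two ends exceeds the level `j` because `P` is large. -/
theorem exists_level' (P : Finset α) (c : α → Prop) [DecidablePred c] (τ : α → ℝ)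
    (hinj : Set.InjOn τ P) (t₀ : ℝ) (j : ℕ)
    (h₀ : (P.filter (fun s => c s ∧ τ s < t₀)).card
      + (P.filter (fun s => ¬ c s ∧ t₀ < τ s)).card ≤ j)
    (h₁ : 2 * j < P.card) :
    ∃ r ∈ P, (P.filter (fun s => c s ∧ τ s < τ r)).card
      + (P.filter (fun s => ¬ c s ∧ τ r < τ s)).card = j := by
  have := Finset.card_filter_add_card_filter_not (s := P) (fun s => c s)
  by_cases h : j < (P.filter (fun s => c s)).card
  · exact exists_level P c τ hinj t₀ j h₀ h
  · obtain ⟨r, hr, h⟩ := exists_level P (fun s => ¬ c s) (fun s => - τ s)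
      (fun x hx y hy h => hinj hx hy (by simpa using h)) (-t₀) j
      (by simpa [add_comm] using h₀) (by omega)
    exact ⟨r, hr, by simpa [add_comm] using h⟩

/-! ### Lines with a given number of points above them -/

/-- The orientation determinant of the points with coordinates `(u, v)` indexed by `a`, `b`, `s`.
For `u a < u b` it is positive exactly when `s` lies above the line through `a` and `b`. -/
def det (u v : α → ℝ) (a b s : α) : ℝ :=
  (u b - u a) * (v s - v a) - (v b - v a) * (u s - u a)

/-- The number of points of `P` to the left of the line directed from `a` to `b`; these are the
points above the line if `u a < u b`. -/
def above (P : Finset α) (u v : α → ℝ) (a b : α) : ℕ :=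
  (P.filter (fun s => 0 < det u v a b s)).card

/-- `1` if the line through `b` and `r` has exactly `j` points above it and leads from `b` to the
right, `-1` if it leads to the left, and `0` otherwise. -/
def flow (P : Finset α) (u v : α → ℝ) (j : ℤ) (b r : α) : ℤ :=
  if u b < u r then ind ((above P u v b r : ℤ) = j)
  else if u r < u b then - ind ((above P u v r b : ℤ) = j) else 0

/-- The rotation argument: the slope of the line through `b` and `r` is the parameter of a walk that
counts the points above a line rotating about `b`. -/
theorem flow_sum (P : Finset α) (u v : α → ℝ) (hu : Set.InjOn u P)
    (hd : ∀ a ∈ P, ∀ b ∈ P, ∀ c ∈ P, a ≠ b → a ≠ c → b ≠ c → det u v a b c ≠ 0)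
    (j : ℤ) (b : α) (hb : b ∈ P) :
    ∑ r ∈ P, flow P u v j b r = ind (j < ((P.filter (fun s => u b < u s)).card : ℤ))
      - ind (j < ((P.filter (fun s => u s < u b)).card : ℤ)) := by
  set τ : α → ℝ := fun r => (v r - v b) / (u r - u b) with hτ
  have hne : ∀ s ∈ P.erase b, u s - u b ≠ 0 := by
    intro s hs h
    exact (Finset.ne_of_mem_erase hs) (hu (Finset.mem_of_mem_erase hs) hb (sub_eq_zero.1 h))
  have hinj : Set.InjOn τ (P.erase b : Finset α) := by
    intro x hx y hy h
    by_contra hxy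
    rw [Finset.mem_coe] at hx hy
    refine hd b hb x (Finset.mem_of_mem_erase hx) y (Finset.mem_of_mem_erase hy)
      (Finset.ne_of_mem_erase hx).symm (Finset.ne_of_mem_erase hy).symm hxy ?_
    simp only [hτ] at h
    rw [div_eq_div_iff (hne x hx) (hne y hy)] at h
    unfold det; linarith
  have key : ∀ r ∈ P.erase b, ∀ s ∈ P.erase b,
      (u b < u r → (0 < det u v b r s ↔ (u b < u s ∧ τ r < τ s ∨ ¬ u b < u s ∧ τ s < τ r))) ∧
      (u r < u b → (0 < det u v r b s ↔ (u b < u s ∧ τ r < τ s ∨ ¬ u b < u s ∧ τ s < τ r))) := by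
    intro r hr s hs
    have er : v r - v b = τ r * (u r - u b) := by simp only [hτ]; field_simp [hne r hr]
    have es : v s - v b = τ s * (u s - u b) := by simp only [hτ]; field_simp [hne s hs]
    have d1 : det u v b r s = (u r - u b) * ((u s - u b) * (τ s - τ r)) := by
      unfold det; rw [er, es]; ring
    have d2 : det u v r b s = (u b - u r) * ((u s - u b) * (τ s - τ r)) := by
      have : det u v r b s = - det u v b r s := by unfold det; ring
      rw [this, d1]; ring
    have d3 : 0 < (u s - u b) * (τ s - τ r) ↔
        (u b < u s ∧ τ r < τ s ∨ ¬ u b < u s ∧ τ s < τ r) := by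
      rw [mul_pos_iff, sub_pos, sub_pos, sub_neg, sub_neg]
      have := hne s hs
      have h' : ¬ u b < u s ↔ u s < u b :=
        ⟨fun h => lt_of_le_of_ne (not_lt.1 h) (fun e => this (by linarith)), fun h => h.le.not_gt⟩
      rw [h']
    constructor
    · intro h; rw [d1, mul_pos_iff_of_pos_left (by linarith), d3]
    · intro h; rw [d2, mul_pos_iff_of_pos_left (by linarith), d3]
  have hab : ∀ r ∈ P.erase b, ∀ x y : α, (x = b ∧ y = r ∧ u b < u r ∨ x = r ∧ y = b ∧ u r < u b) →
      above P u v x y = walk (P.erase b) (fun s => u b < u s) τ r := by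
    intro r hr x y hxy
    unfold above walk
    rw [← Finset.card_union_of_disjoint, ← Finset.filter_or]
    · have : P.filter (fun s => 0 < det u v x y s)
          = (P.erase b).filter (fun s => 0 < det u v x y s) := by
        ext s
        simp only [Finset.mem_filter, Finset.mem_erase]
        constructor
        · rintro ⟨h1, h2⟩
          refine ⟨⟨?_, h1⟩, h2⟩
          rintro rfl
          rcases hxy with ⟨rfl, rfl, _⟩ | ⟨rfl, rfl, _⟩ <;>
          · unfold det at h2; ring_nf at h2; exact lt_irrefl _ h2
        · rintro ⟨⟨_, h1⟩, h2⟩; exact ⟨h1, h2⟩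
      rw [this]
      congr 1
      apply Finset.filter_congr
      intro s hs
      rcases hxy with ⟨rfl, rfl, h⟩ | ⟨rfl, rfl, h⟩
      · exact (key _ hr s hs).1 h
      · exact (key _ hr s hs).2 h
    · rw [Finset.disjoint_filter]; intro s _ h1 h2; exact h2.1 h1.1
  have hsum := walk_sum (fun s => u b < u s) τ (P.erase b) hinj j
  have hRr : (P.erase b).filter (fun s => u b < u s) = P.filter (fun s => u b < u s) := by
    ext s; simp only [Finset.mem_filter, Finset.mem_erase]
    constructor
    · rintro ⟨⟨_, h⟩, h'⟩; exact ⟨h, h'⟩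
    · rintro ⟨h, h'⟩; exact ⟨⟨by rintro rfl; exact lt_irrefl _ h', h⟩, h'⟩
  have hLl : (P.erase b).filter (fun s => ¬ u b < u s) = P.filter (fun s => u s < u b) := by
    ext s; simp only [Finset.mem_filter, Finset.mem_erase]
    constructor
    · rintro ⟨⟨h0, h⟩, h'⟩
      exact ⟨h, lt_of_le_of_ne (not_lt.1 h') (fun e => h0 (hu h hb e))⟩
    · rintro ⟨h, h'⟩; exact ⟨⟨by rintro rfl; exact lt_irrefl _ h', h⟩, h'.le.not_gt⟩
  rw [hRr, hLl] at hsum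
  rw [← hsum, ← Finset.add_sum_erase P _ hb]
  have : flow P u v j b b = 0 := by simp [flow]
  rw [this, zero_add]
  refine Finset.sum_congr rfl fun r hr => ?_
  unfold flow
  by_cases h : u b < u r
  · rw [if_pos h, if_pos h, hab r hr b r (Or.inl ⟨rfl, rfl, h⟩)]
  · have hrb : u r < u b := lt_of_le_of_ne (not_lt.1 h) (fun e => hne r hr (by linarith))
    rw [if_neg h, if_neg h, if_pos hrb, hab r hr r b (Or.inr ⟨rfl, rfl, hrb⟩)]

/-- The number of lines with exactly `j` points above them that are spanned by a point on the left
and a point on the right of the line `u = 0`: it depends on the number of points on the left only. -/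
theorem crossing_sum (P : Finset α) (u v : α → ℝ) (hu : Set.InjOn u P)
    (hd : ∀ a ∈ P, ∀ b ∈ P, ∀ c ∈ P, a ≠ b → a ≠ c → b ≠ c → det u v a b c ≠ 0)
    (hu0 : ∀ a ∈ P, u a ≠ 0) (j : ℤ) :
    ∑ a ∈ P.filter (fun a => u a < 0), ∑ c ∈ P.filter (fun c => 0 < u c),
      ind ((above P u v a c : ℤ) = j) =
    ∑ i ∈ Finset.range (P.filter (fun a => u a < 0)).card,
      (ind (j < (P.card : ℤ) - 1 - i) - ind (j < (i : ℤ))) := by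
  set A := P.filter (fun a => u a < 0) with hA
  set C := P.filter (fun c => 0 < u c) with hC
  have hAP : A ⊆ P := Finset.filter_subset _ _
  have hsplit : ∀ f : α → ℤ, ∑ r ∈ P, f r = ∑ r ∈ A, f r + ∑ r ∈ C, f r := by
    intro f
    rw [hA, hC, ← Finset.sum_filter_add_sum_filter_not P (fun a => u a < 0)]
    congr 1
    apply Finset.sum_congr _ (fun _ _ => rfl)
    apply Finset.filter_congr
    intro x hx
    exact ⟨fun h => lt_of_le_of_ne (not_lt.1 h) (hu0 x hx).symm, fun h => h.le.not_gt⟩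
  have hanti : ∑ b ∈ A, ∑ r ∈ A, flow P u v j b r = 0 := by
    have h1 : ∑ b ∈ A, ∑ r ∈ A, flow P u v j b r = - ∑ b ∈ A, ∑ r ∈ A, flow P u v j b r := by
      conv_rhs => rw [Finset.sum_comm]
      rw [← Finset.sum_neg_distrib]
      refine Finset.sum_congr rfl fun b _ => ?_
      rw [← Finset.sum_neg_distrib]
      refine Finset.sum_congr rfl fun r _ => ?_
      unfold flow
      rcases lt_trichotomy (u b) (u r) with h | h | h
      · simp [h, h.le.not_gt]
      · simp [h]
      · simp [h, h.le.not_gt]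
    omega
  -- Lines with both ends in `A` cancel, and those leading to `C` remain.
  have hmain : ∑ b ∈ A, ∑ r ∈ P, flow P u v j b r
      = ∑ a ∈ A, ∑ c ∈ C, ind ((above P u v a c : ℤ) = j) := by
    simp_rw [hsplit]
    rw [Finset.sum_add_distrib, hanti, zero_add]
    refine Finset.sum_congr rfl fun a ha => Finset.sum_congr rfl fun c hc => ?_
    have h1 := (Finset.mem_filter.1 ha).2
    have h2 := (Finset.mem_filter.1 hc).2
    simp [flow, h1.trans h2]
  rw [← hmain, ← sum_rank u (fun i => ind (j < (P.card : ℤ) - 1 - i) - ind (j < (i : ℤ))) A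
    (hu.mono (by exact_mod_cast hAP))]
  refine Finset.sum_congr rfl fun b hb => ?_
  rw [flow_sum P u v hu hd j b (hAP hb)]
  have e1 : P.filter (fun s => u s < u b) = A.filter (fun s => u s < u b) := by
    rw [hA, Finset.filter_filter]
    apply Finset.filter_congr
    intro s _
    exact ⟨fun h => ⟨h.trans (Finset.mem_filter.1 hb).2, h⟩, fun h => h.2⟩
  have e2 : (P.filter (fun s => u b < u s)).card + (P.filter (fun s => u s < u b)).card + 1
      = P.card := by
    rw [← Finset.card_erase_add_one (hAP hb),
      ← Finset.card_filter_add_card_filter_not (s := P.erase b) (fun s => u b < u s)]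
    congr 3
    · ext s; simp only [Finset.mem_filter, Finset.mem_erase]
      constructor
      · rintro ⟨h, h'⟩; exact ⟨⟨by rintro rfl; exact lt_irrefl _ h', h⟩, h'⟩
      · rintro ⟨⟨_, h⟩, h'⟩; exact ⟨h, h'⟩
    · ext s; simp only [Finset.mem_filter, Finset.mem_erase]
      constructor
      · rintro ⟨h, h'⟩; exact ⟨⟨by rintro rfl; exact lt_irrefl _ h', h⟩, h'.le.not_gt⟩
      · rintro ⟨⟨h0, h⟩, h'⟩
        exact ⟨h, lt_of_le_of_ne (not_lt.1 h') (fun e => h0 (hu h (hAP hb) e))⟩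
  rw [← e1]
  congr 3
  omega

/-- The inner sums are `min m M - (m - (j + 1))` with truncated subtraction. -/
theorem double_sum_eval (M j : ℕ) :
    ∑ m ∈ Finset.range (M + j + 2), ∑ i ∈ Finset.range m,
      (ind ((j : ℤ) < ((M + j + 1 : ℕ) : ℤ) - 1 - i) - ind ((j : ℤ) < (i : ℤ)))
      = (j + 1) * M := by
  have i1 : ∀ m : ℕ, ∑ i ∈ Finset.range m, ind ((j : ℤ) < ((M + j + 1 : ℕ) : ℤ) - 1 - i)
      = ((min m M : ℕ) : ℤ) := by
    intro m
    induction m with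
    | zero => simp
    | succ m ih =>
      rw [Finset.sum_range_succ, ih]; unfold ind; push_cast; split_ifs <;> omega
  have i2 : ∀ m : ℕ, ∑ i ∈ Finset.range m, ind ((j : ℤ) < (i : ℤ)) = ((m - (j + 1) : ℕ) : ℤ) := by
    intro m
    induction m with
    | zero => simp
    | succ m ih =>
      rw [Finset.sum_range_succ, ih]; unfold ind; split_ifs <;> omega
  have s1 : ∀ d : ℕ, 2 * ∑ m ∈ Finset.range (M + d), ((min m M : ℕ) : ℤ)
      = M * (M - 1) + 2 * d * M := by
    intro d
    induction d with
    | zero =>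
      have : ∀ N ≤ M, 2 * ∑ m ∈ Finset.range N, ((min m M : ℕ) : ℤ) = N * (N - 1) := by
        intro N
        induction N with
        | zero => simp
        | succ N ih =>
          intro h
          rw [Finset.sum_range_succ, mul_add, ih (by omega), min_eq_left (by omega)]
          push_cast; ring
      simpa using this M le_rfl
    | succ d ih =>
      rw [← add_assoc, Finset.sum_range_succ, mul_add, ih, min_eq_right (by omega)]
      push_cast; ring
  have s2 : ∀ e : ℕ, 2 * ∑ m ∈ Finset.range (j + 1 + e), ((m - (j + 1) : ℕ) : ℤ)
      = e * (e - 1) := by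
    intro e
    induction e with
    | zero =>
      have : ∑ m ∈ Finset.range (j + 1 + 0), ((m - (j + 1) : ℕ) : ℤ) = 0 := by
        apply Finset.sum_eq_zero
        intro m hm
        rw [Finset.mem_range] at hm
        have : m - (j + 1) = 0 := by omega
        simp [this]
      rw [this]; simp
    | succ e ih =>
      rw [← add_assoc, Finset.sum_range_succ, mul_add, ih, Nat.add_sub_cancel_left]
      push_cast; ring
  simp_rw [Finset.sum_sub_distrib, i1, i2]
  have a1 := s1 (j + 2)
  have a2 := s2 (M + 1)
  rw [show j + 1 + (M + 1) = M + j + 2 by ring] at a2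
  rw [← add_assoc] at a1
  push_cast at a1 a2 ⊢
  linarith


/-! ### Circles and inversion -/

/-- The squared distance from the point `s` with coordinates `(X, Y)` to `(x, y)`. -/
def sq (X Y : α → ℝ) (x y : ℝ) (s : α) : ℝ := (X s - x) ^ 2 + (Y s - y) ^ 2

/-- The abscissa of the image of `s` under inversion at `q`, with `q` as the origin. -/
def invX (X Y : α → ℝ) (q s : α) : ℝ := (X s - X q) / sq X Y (X q) (Y q) s

/-- The ordinate of the image of `s` under inversion at `q`, with `q` as the origin. -/
def invY (X Y : α → ℝ) (q s : α) : ℝ := (Y s - Y q) / sq X Y (X q) (Y q) s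

/-- General position in coordinates: distinct abscissas, no three points collinear, no four
concyclic, and distinct abscissas after inversion at any of the points. -/
structure Generic (S : Finset α) (X Y : α → ℝ) : Prop where
  injX : Set.InjOn X S
  noncol : ∀ a ∈ S, ∀ b ∈ S, ∀ c ∈ S, a ≠ b → a ≠ c → b ≠ c → det X Y a b c ≠ 0
  nocirc : ∀ a ∈ S, ∀ b ∈ S, ∀ c ∈ S, ∀ d ∈ S, a ≠ b → a ≠ c → a ≠ d → b ≠ c → b ≠ d → c ≠ d →
    ∀ x y : ℝ, sq X Y x y b = sq X Y x y a → sq X Y x y c = sq X Y x y a →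
      sq X Y x y d ≠ sq X Y x y a
  injInv : ∀ q ∈ S, Set.InjOn (invX X Y q) (S.erase q : Finset α)

theorem sq_pos {S : Finset α} {X Y : α → ℝ} (hS : Generic S X Y) {q s : α} (hq : q ∈ S)
    (hs : s ∈ S) (h : s ≠ q) : 0 < sq X Y (X q) (Y q) s := by
  have : X s - X q ≠ 0 := fun e => h (hS.injX hs hq (by linarith))
  unfold sq; positivity

theorem filter_invX_neg {S : Finset α} {X Y : α → ℝ} (hS : Generic S X Y) {q : α}
    (hq : q ∈ S) : (S.erase q).filter (fun a => invX X Y q a < 0) = S.filter (fun a => X a < X q) := by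
  ext a
  simp only [Finset.mem_filter, Finset.mem_erase]
  constructor
  · rintro ⟨⟨h1, h2⟩, h3⟩
    refine ⟨h2, ?_⟩
    have := sq_pos hS hq h2 h1
    unfold invX at h3
    rw [div_neg_iff] at h3
    rcases h3 with h | h <;> linarith
  · rintro ⟨h1, h2⟩
    have h0 : a ≠ q := by rintro rfl; exact lt_irrefl _ h2
    exact ⟨⟨h0, h1⟩, div_neg_of_neg_of_pos (by linarith) (sq_pos hS hq h1 h0)⟩

theorem filter_invX_pos {S : Finset α} {X Y : α → ℝ} (hS : Generic S X Y) {q : α}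
    (hq : q ∈ S) : (S.erase q).filter (fun a => 0 < invX X Y q a) = S.filter (fun a => X q < X a) := by
  ext a
  simp only [Finset.mem_filter, Finset.mem_erase]
  constructor
  · rintro ⟨⟨h1, h2⟩, h3⟩
    refine ⟨h2, ?_⟩
    have := sq_pos hS hq h2 h1
    unfold invX at h3
    rw [div_pos_iff] at h3
    rcases h3 with h | h <;> linarith
  · rintro ⟨h1, h2⟩
    have h0 : a ≠ q := by rintro rfl; exact lt_irrefl _ h2
    exact ⟨⟨h0, h1⟩, div_pos (by linarith) (sq_pos hS hq h1 h0)⟩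

/-- After inversion at `q`, the side of the line through `a` and `c` on which `s` lies is given by the
power of `s` with respect to the circle through `q`, `a`, `c` and by the orientation of `q a c`. -/
theorem det_inv {β : Type*} {X Y : β → ℝ} {x y : ℝ} {q a c s : β}
    (ha0 : sq X Y (X q) (Y q) a ≠ 0) (hc0 : sq X Y (X q) (Y q) c ≠ 0)
    (hs0 : sq X Y (X q) (Y q) s ≠ 0)
    (ha : sq X Y x y a = sq X Y x y q) (hc : sq X Y x y c = sq X Y x y q) :
    det (invX X Y q) (invY X Y q) a c s =
      det X Y q a c * (sq X Y x y s - sq X Y x y q) /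
      (sq X Y (X q) (Y q) a * sq X Y (X q) (Y q) c * sq X Y (X q) (Y q) s) := by
  have hh : ∀ t, sq X Y (X q) (Y q) t ≠ 0 →
      1 - 2 * ((x - X q) * invX X Y q t + (y - Y q) * invY X Y q t)
      = (sq X Y x y t - sq X Y x y q) / sq X Y (X q) (Y q) t := by
    intro t ht
    unfold invX invY
    rw [eq_div_iff ht]
    have : (1 - 2 * ((x - X q) * ((X t - X q) / sq X Y (X q) (Y q) t)
        + (y - Y q) * ((Y t - Y q) / sq X Y (X q) (Y q) t))) * sq X Y (X q) (Y q) t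
        = sq X Y (X q) (Y q) t - 2 * ((x - X q) * (X t - X q) + (y - Y q) * (Y t - Y q)) := by
      field_simp
    rw [this]
    unfold sq; ring
  -- The inverse points of `a` and `c` lie on the line `2 ⟨centre, ·⟩ = 1`.
  have h1 := hh a ha0
  have h2 := hh c hc0
  have h3 := hh s hs0
  rw [ha, sub_self, zero_div] at h1
  rw [hc, sub_self, zero_div] at h2
  have h4 : invX X Y q a * invY X Y q c - invX X Y q c * invY X Y q a
      = det X Y q a c / (sq X Y (X q) (Y q) a * sq X Y (X q) (Y q) c) := by
    unfold invX invY det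
    field_simp
  have h5 : det (invX X Y q) (invY X Y q) a c s =
      (invX X Y q a * invY X Y q c - invX X Y q c * invY X Y q a) *
      (1 - 2 * ((x - X q) * invX X Y q s + (y - Y q) * invY X Y q s)) := by
    unfold det
    linear_combination
      (invX X Y q c * invY X Y q s - invX X Y q s * invY X Y q c) * h1
      - (invX X Y q a * invY X Y q s - invX X Y q s * invY X Y q a) * h2
  rw [h5, h4, h3, div_mul_div_comm]

theorem exists_center {β : Type*} {X Y : β → ℝ} {q a c : β} (h : det X Y q a c ≠ 0) :
    ∃ x y : ℝ, sq X Y x y a = sq X Y x y q ∧ sq X Y x y c = sq X Y x y q := by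
  set A := sq X Y (X q) (Y q) a with hA
  set C := sq X Y (X q) (Y q) c with hC
  set D := det X Y q a c with hD
  set x := (A * (Y c - Y q) - C * (Y a - Y q)) / (2 * D) with hx
  set y := ((X a - X q) * C - (X c - X q) * A) / (2 * D) with hy
  have ex : x * (2 * D) = A * (Y c - Y q) - C * (Y a - Y q) := by rw [hx]; field_simp
  have ey : y * (2 * D) = (X a - X q) * C - (X c - X q) * A := by rw [hy]; field_simp
  refine ⟨X q + x, Y q + y, ?_, ?_⟩
  · have : 2 * (x * (X a - X q) + y * (Y a - Y q)) = A := by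
      apply mul_right_cancel₀ h
      have : 2 * (x * (X a - X q) + y * (Y a - Y q)) * D
        = (x * (2 * D)) * (X a - X q) + (y * (2 * D)) * (Y a - Y q) := by ring
      rw [this, ex, ey, hD]; unfold det; ring
    rw [hA] at this; unfold sq at *; linarith
  · have : 2 * (x * (X c - X q) + y * (Y c - Y q)) = C := by
      apply mul_right_cancel₀ h
      have : 2 * (x * (X c - X q) + y * (Y c - Y q)) * D
        = (x * (2 * D)) * (X c - X q) + (y * (2 * D)) * (Y c - Y q) := by ring
      rw [this, ex, ey, hD]; unfold det; ring
    rw [hC] at this; unfold sq at *; linarith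

theorem det_inv_ne {S : Finset α} {X Y : α → ℝ} (hS : Generic S X Y) {q : α} (hq : q ∈ S) :
    ∀ a ∈ S.erase q, ∀ b ∈ S.erase q, ∀ c ∈ S.erase q, a ≠ b → a ≠ c → b ≠ c →
      det (invX X Y q) (invY X Y q) a b c ≠ 0 := by
  intro a ha b hb c hc hab hac hbc
  obtain ⟨haq, ha⟩ := Finset.mem_erase.1 ha
  obtain ⟨hbq, hb⟩ := Finset.mem_erase.1 hb
  obtain ⟨hcq, hc⟩ := Finset.mem_erase.1 hc
  have hne := hS.noncol q hq a ha b hb haq.symm hbq.symm hab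
  obtain ⟨x, y, e1, e2⟩ := exists_center hne
  have pa := sq_pos hS hq ha haq
  have pb := sq_pos hS hq hb hbq
  have pc := sq_pos hS hq hc hcq
  rw [det_inv pa.ne' pb.ne' pc.ne' e1 e2]
  refine div_ne_zero (mul_ne_zero hne (sub_ne_zero.2 ?_)) (by positivity)
  exact hS.nocirc q hq a ha b hb c hc haq.symm hbq.symm hcq.symm hab hac hbc x y e1 e2

/-! ### Counting circles through three points -/

/-- The triples `(q, a, c)` with `a` to the left and `c` to the right of `q` such that, after
inversion at `q`, exactly `j` points lie above the line through `a` and `c`. -/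
def triples (S : Finset α) (X Y : α → ℝ) (j : ℕ) : Finset (α × α × α) :=
  (S ×ˢ S ×ˢ S).filter (fun t => X t.2.1 < X t.1 ∧ X t.1 < X t.2.2 ∧
    above (S.erase t.1) (invX X Y t.1) (invY X Y t.1) t.2.1 t.2.2 = j)

theorem card_triples {S : Finset α} {X Y : α → ℝ} (hS : Generic S X Y) (M j : ℕ)
    (hn : S.card = M + j + 2) : (triples S X Y j).card = (j + 1) * M := by
  have hcast : ((triples S X Y j).card : ℤ) = ∑ q ∈ S,
      ∑ a ∈ (S.erase q).filter (fun a => invX X Y q a < 0),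
      ∑ c ∈ (S.erase q).filter (fun c => 0 < invX X Y q c),
        ind ((above (S.erase q) (invX X Y q) (invY X Y q) a c : ℤ) = j) := by
    unfold triples
    rw [Finset.card_filter, Nat.cast_sum, Finset.sum_product]
    refine Finset.sum_congr rfl fun q hq => ?_
    rw [Finset.sum_product]
    rw [filter_invX_neg hS hq, filter_invX_pos hS hq, Finset.sum_filter]
    refine Finset.sum_congr rfl fun a _ => ?_
    by_cases h : X a < X q
    · rw [if_pos h, Finset.sum_filter]
      refine Finset.sum_congr rfl fun c _ => ?_
      by_cases h' : X q < X c
      · simp [h, h', ind]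
      · simp [h']
    · simp [h]
  have hrow : ∀ q ∈ S, ∑ a ∈ (S.erase q).filter (fun a => invX X Y q a < 0),
      ∑ c ∈ (S.erase q).filter (fun c => 0 < invX X Y q c),
        ind ((above (S.erase q) (invX X Y q) (invY X Y q) a c : ℤ) = j)
      = ∑ i ∈ Finset.range (S.filter (fun a => X a < X q)).card,
      (ind ((j : ℤ) < ((M + j + 1 : ℕ) : ℤ) - 1 - i) - ind ((j : ℤ) < (i : ℤ))) := by
    intro q hq
    rw [crossing_sum (S.erase q) (invX X Y q) (invY X Y q) (hS.injInv q hq) (det_inv_ne hS hq)]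
    · rw [filter_invX_neg hS hq, Finset.card_erase_of_mem hq, hn]
      rfl
    · intro a ha
      obtain ⟨haq, ha⟩ := Finset.mem_erase.1 ha
      refine div_ne_zero (fun e => haq (hS.injX ha hq (by linarith))) (sq_pos hS hq ha haq).ne'
  rw [Finset.sum_congr rfl hrow, sum_rank X (fun m => ∑ i ∈ Finset.range m,
    (ind ((j : ℤ) < ((M + j + 1 : ℕ) : ℤ) - 1 - i) - ind ((j : ℤ) < (i : ℤ)))) S hS.injX, hn,
    double_sum_eval] at hcast
  exact_mod_cast hcast

/-- Suppose the circle through `q`, `a`, `c` has exactly `j` points inside or exactly `j` outside.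
The side above the inverted line is one of the two sides, and together they contain
`S.card - 3 = M + j` points. -/
theorem mem_triples {S : Finset α} {X Y : α → ℝ} (hS : Generic S X Y) {M j : ℕ}
    (hn : S.card = M + 1 + j + 2) {q a c : α} (hq : q ∈ S) (ha : a ∈ S) (hc : c ∈ S)
    (haq : X a < X q) (hqc : X q < X c) {x y ρ : ℝ} (eq : sq X Y x y q = ρ)
    (ea : sq X Y x y a = ρ) (ec : sq X Y x y c = ρ)
    (hj : (S.filter (fun s => sq X Y x y s < ρ)).card = j ∨
      (S.filter (fun s => ρ < sq X Y x y s)).card = j) :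
    (q, a, c) ∈ triples S X Y j ∪ triples S X Y M := by
  have naq : a ≠ q := by rintro rfl; exact lt_irrefl _ haq
  have ncq : c ≠ q := by rintro rfl; exact lt_irrefl _ hqc
  have nac : a ≠ c := by rintro rfl; exact lt_asymm haq hqc
  have hne := hS.noncol q hq a ha c hc naq.symm ncq.symm nac
  have pa := sq_pos hS hq ha naq
  have pc := sq_pos hS hq hc ncq
  -- The three points are the only points of `S` on the circle.
  have htot : (S.filter (fun s => sq X Y x y s < ρ)).card
      + (S.filter (fun s => ρ < sq X Y x y s)).card + 3 = S.card := by
    have h1 := Finset.card_filter_add_card_filter_not (s := S) (fun s => sq X Y x y s < ρ)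
    have h2 := Finset.card_filter_add_card_filter_not
      (s := S.filter (fun s => ¬ sq X Y x y s < ρ)) (fun s => ρ < sq X Y x y s)
    rw [Finset.filter_filter, Finset.filter_filter] at h2
    have h3 : S.filter (fun s => ¬ sq X Y x y s < ρ ∧ ρ < sq X Y x y s)
        = S.filter (fun s => ρ < sq X Y x y s) := by
      apply Finset.filter_congr; intro s _
      exact ⟨fun h => h.2, fun h => ⟨h.le.not_gt, h⟩⟩
    have h4 : S.filter (fun s => ¬ sq X Y x y s < ρ ∧ ¬ ρ < sq X Y x y s) = {q, a, c} := by
      ext s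
      simp only [Finset.mem_filter, Finset.mem_insert, Finset.mem_singleton, not_lt]
      constructor
      · rintro ⟨hs, h1, h2⟩
        by_contra h
        push Not at h
        refine hS.nocirc q hq a ha c hc s hs naq.symm ncq.symm h.1.symm nac h.2.1.symm h.2.2.symm
          x y ?_ ?_ ?_ <;> linarith
      · rintro (rfl | rfl | rfl)
        · exact ⟨hq, eq.ge, eq.le⟩
        · exact ⟨ha, ea.ge, ea.le⟩
        · exact ⟨hc, ec.ge, ec.le⟩
    have h5 : ({q, a, c} : Finset α).card = 3 := Finset.card_eq_three.2
      ⟨q, a, c, naq.symm, ncq.symm, nac, rfl⟩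
    rw [h3, h4, h5] at h2
    omega
  have hdet : ∀ s ∈ S.erase q, (0 < det (invX X Y q) (invY X Y q) a c s ↔
      0 < det X Y q a c * (sq X Y x y s - ρ)) := by
    intro s hs
    obtain ⟨hsq, hs⟩ := Finset.mem_erase.1 hs
    have ps := sq_pos hS hq hs hsq
    rw [det_inv pa.ne' pc.ne' ps.ne' (ea.trans eq.symm) (ec.trans eq.symm), eq]
    exact div_pos_iff_of_pos_right (by positivity)
  have habove : above (S.erase q) (invX X Y q) (invY X Y q) a c
        = (S.filter (fun s => sq X Y x y s < ρ)).card ∨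
      above (S.erase q) (invX X Y q) (invY X Y q) a c
        = (S.filter (fun s => ρ < sq X Y x y s)).card := by
    unfold above
    rw [Finset.filter_congr hdet]
    rcases lt_or_gt_of_ne hne with h | h
    · left; congr 1; ext s
      simp only [Finset.mem_filter, Finset.mem_erase, mul_pos_iff, h, h.le.not_gt, true_and,
        false_and, false_or, sub_neg]
      constructor
      · rintro ⟨⟨_, h⟩, h'⟩; exact ⟨h, h'⟩
      · rintro ⟨h, h'⟩; exact ⟨⟨by rintro rfl; linarith, h⟩, h'⟩
    · right; congr 1; ext s
      simp only [Finset.mem_filter, Finset.mem_erase, mul_pos_iff, h, h.le.not_gt, true_and,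
        false_and, or_false, sub_pos]
      constructor
      · rintro ⟨⟨_, h⟩, h'⟩; exact ⟨h, h'⟩
      · rintro ⟨h, h'⟩; exact ⟨⟨by rintro rfl; linarith, h⟩, h'⟩
  have hor : above (S.erase q) (invX X Y q) (invY X Y q) a c = j ∨
      above (S.erase q) (invX X Y q) (invY X Y q) a c = M := by omega
  simp only [triples, Finset.mem_union, Finset.mem_filter, Finset.mem_product]
  tauto

/-! ### Bad pairs -/

/-- If some circle through `p` and `q` has at most `j` points inside or at most `j` outside, then a
circle through `p`, `q` and a third point has exactly `j` inside or exactly `j` outside. -/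
theorem bad_pair {S : Finset α} {X Y : α → ℝ} (hS : Generic S X Y) {j : ℕ}
    (hn : 2 * j + 2 < S.card) {p q : α} (hp : p ∈ S) (hq : q ∈ S) (hpq : p ≠ q) {x y ρ : ℝ}
    (ep : sq X Y x y p = ρ) (eq : sq X Y x y q = ρ)
    (hj : (S.filter (fun s => sq X Y x y s < ρ)).card ≤ j ∨
      (S.filter (fun s => ρ < sq X Y x y s)).card ≤ j) :
    ∃ r ∈ S, r ≠ p ∧ r ≠ q ∧ ∃ x y ρ : ℝ, sq X Y x y p = ρ ∧ sq X Y x y q = ρ ∧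
      sq X Y x y r = ρ ∧ ((S.filter (fun s => sq X Y x y s < ρ)).card = j ∨
      (S.filter (fun s => ρ < sq X Y x y s)).card = j) := by
  set P := (S.erase p).erase q with hP
  have hPc : P.card + 2 = S.card := by
    rw [hP, Finset.card_erase_of_mem (by simp [hq, hpq.symm]), Finset.card_erase_of_mem hp]
    omega
  -- The centres of the circles through `p` and `q`, parametrised by `t`; the circle through a third
  -- point `s` has parameter `τ s`, and the sign of `B s` is the side of the line `p q` containing `s`.
  set cx : ℝ → ℝ := fun t => (X p + X q) / 2 - t * (Y q - Y p) with hcx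
  set cy : ℝ → ℝ := fun t => (Y p + Y q) / 2 + t * (X q - X p) with hcy
  set B : α → ℝ := fun s => det X Y p q s with hB
  set A : α → ℝ := fun s => sq X Y (cx 0) (cy 0) s - sq X Y (cx 0) (cy 0) p with hA
  set τ : α → ℝ := fun s => A s / (2 * B s) with hτ
  have hB0 : ∀ s ∈ P, B s ≠ 0 := by
    intro s hs
    simp only [hP, Finset.mem_erase] at hs
    exact hS.noncol p hp q hq s hs.2.2 hpq hs.2.1.symm hs.1.symm
  have hpow : ∀ t s, B s ≠ 0 →
      sq X Y (cx t) (cy t) s - sq X Y (cx t) (cy t) p = 2 * B s * (τ s - t) := by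
    intro t s hs
    have h1 : 2 * B s * (τ s - t) = A s - 2 * B s * t := by
      simp only [hτ]; field_simp
    rw [h1]
    simp only [hA, hB, hcx, hcy, sq, det]; ring
  have hcq : ∀ t, sq X Y (cx t) (cy t) q = sq X Y (cx t) (cy t) p := by
    intro t; simp only [hcx, hcy, sq]; ring
  have hτinj : Set.InjOn τ P := by
    intro s hs s' hs' h
    by_contra hne
    rw [Finset.mem_coe] at hs hs'
    have e1 := hpow (τ s) s (hB0 s hs)
    have e2 := hpow (τ s) s' (hB0 s' hs')
    rw [← h] at e2
    simp only [hP, Finset.mem_erase] at hs hs'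
    refine hS.nocirc p hp q hq s hs.2.2 s' hs'.2.2 hpq hs.2.1.symm hs'.2.1.symm hs.1.symm
      hs'.1.symm hne _ _ (hcq (τ s)) ?_ ?_ <;> linarith
  -- The points inside and outside the circle are those passed, or still to be passed, in the pencil.
  have hin : ∀ t, (S.filter (fun s => sq X Y (cx t) (cy t) s < sq X Y (cx t) (cy t) p)).card
      = (P.filter (fun s => 0 < B s ∧ τ s < t)).card
        + (P.filter (fun s => ¬ 0 < B s ∧ t < τ s)).card := by
    intro t
    rw [← Finset.card_union_of_disjoint, ← Finset.filter_or]
    · congr 1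
      ext s
      simp only [Finset.mem_filter]
      have main : ∀ s ∈ P, (sq X Y (cx t) (cy t) s < sq X Y (cx t) (cy t) p ↔
          (0 < B s ∧ τ s < t ∨ ¬ 0 < B s ∧ t < τ s)) := by
        intro s hs
        have := hpow t s (hB0 s hs)
        rw [← sub_neg, this, mul_neg_iff]
        rcases lt_or_gt_of_ne (hB0 s hs) with h | h
        · have h' : ¬ 0 < 2 * B s := by linarith
          have h'' : 2 * B s < 0 := by linarith
          simp [h', h'', h.le.not_gt]
        · have h' : ¬ 2 * B s < 0 := by linarith
          have h'' : 0 < 2 * B s := by linarith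
          simp [h', h]
      constructor
      · rintro ⟨hs, h⟩
        have hsP : s ∈ P := by
          simp only [hP, Finset.mem_erase]
          refine ⟨?_, ?_, hs⟩
          · rintro rfl; linarith [hcq t]
          · rintro rfl; linarith
        exact ⟨hsP, (main s hsP).1 h⟩
      · rintro ⟨hs, h⟩
        exact ⟨by simp only [hP, Finset.mem_erase] at hs; exact hs.2.2, (main s hs).2 h⟩
    · rw [Finset.disjoint_filter]; intro s _ h1 h2; exact h2.1 h1.1
  have hout : ∀ t, (S.filter (fun s => sq X Y (cx t) (cy t) p < sq X Y (cx t) (cy t) s)).card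
      = (P.filter (fun s => 0 < B s ∧ t < τ s)).card
        + (P.filter (fun s => ¬ 0 < B s ∧ τ s < t)).card := by
    intro t
    rw [← Finset.card_union_of_disjoint, ← Finset.filter_or]
    · congr 1
      ext s
      simp only [Finset.mem_filter]
      have main : ∀ s ∈ P, (sq X Y (cx t) (cy t) p < sq X Y (cx t) (cy t) s ↔
          (0 < B s ∧ t < τ s ∨ ¬ 0 < B s ∧ τ s < t)) := by
        intro s hs
        have := hpow t s (hB0 s hs)
        rw [← sub_pos, this, mul_pos_iff]
        rcases lt_or_gt_of_ne (hB0 s hs) with h | h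
        · have h' : ¬ 0 < 2 * B s := by linarith
          have h'' : 2 * B s < 0 := by linarith
          simp [h', h'', h.le.not_gt]
        · have h' : ¬ 2 * B s < 0 := by linarith
          have h'' : 0 < 2 * B s := by linarith
          simp [h', h]
      constructor
      · rintro ⟨hs, h⟩
        have hsP : s ∈ P := by
          simp only [hP, Finset.mem_erase]
          refine ⟨?_, ?_, hs⟩
          · rintro rfl; linarith [hcq t]
          · rintro rfl; linarith
        exact ⟨hsP, (main s hsP).1 h⟩
      · rintro ⟨hs, h⟩
        exact ⟨by simp only [hP, Finset.mem_erase] at hs; exact hs.2.2, (main s hs).2 h⟩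
    · rw [Finset.disjoint_filter]; intro s _ h1 h2; exact h2.1 h1.1
  -- The given circle belongs to the pencil.
  obtain ⟨t₀, hx, hy⟩ : ∃ t₀, cx t₀ = x ∧ cy t₀ = y := by
    set d := (X q - X p) ^ 2 + (Y q - Y p) ^ 2 with hd
    have hd0 : d ≠ 0 := by
      have := sq_pos hS hp hq hpq.symm
      exact this.ne'
    have hperp : (x - (X p + X q) / 2) * (X q - X p) + (y - (Y p + Y q) / 2) * (Y q - Y p) = 0 := by
      have := ep.trans eq.symm
      unfold sq at this; linarith
    refine ⟨((y - (Y p + Y q) / 2) * (X q - X p) - (x - (X p + X q) / 2) * (Y q - Y p)) / d, ?_, ?_⟩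
    · simp only [hcx]
      field_simp
      rw [hd]
      linear_combination (-2) * (X q - X p) * hperp
    · simp only [hcy]
      field_simp
      rw [hd]
      linear_combination (-2) * (Y q - Y p) * hperp
  suffices hr : ∃ r ∈ P, ((S.filter (fun s => sq X Y (cx (τ r)) (cy (τ r)) s
        < sq X Y (cx (τ r)) (cy (τ r)) p)).card = j ∨
      (S.filter (fun s => sq X Y (cx (τ r)) (cy (τ r)) p
        < sq X Y (cx (τ r)) (cy (τ r)) s)).card = j) by
    obtain ⟨r, hr, h⟩ := hr
    have hpr := hpow (τ r) r (hB0 r hr)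
    simp only [hP, Finset.mem_erase] at hr
    exact ⟨r, hr.2.2, hr.2.1, hr.1, cx (τ r), cy (τ r), sq X Y (cx (τ r)) (cy (τ r)) p, rfl,
      hcq _, by linarith, h⟩
  subst hx hy ep
  rcases hj with hj | hj
  · rw [hin] at hj
    obtain ⟨r, hr, h⟩ := exists_level' P (fun s => 0 < B s) τ hτinj t₀ j hj (by omega)
    exact ⟨r, hr, Or.inl ((hin _).trans h)⟩
  · rw [hout] at hj
    obtain ⟨r, hr, h⟩ := exists_level' P (fun s => ¬ 0 < B s) τ hτinj t₀ j
      (by simpa only [not_not, add_comm] using hj) (by omega)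
    exact ⟨r, hr, Or.inr ((hout _).trans (by simpa only [not_not, add_comm] using h))⟩

/-- If every pair were bad, all `n (n - 1)` ordered pairs would be among the at most six ordered pairs
contained in each of the `2 (j + 1) (M + 1)` triples. -/
theorem core {S : Finset α} {X Y : α → ℝ} (hS : Generic S X Y) {M j : ℕ}
    (hn : S.card = M + 1 + j + 2) (hj : 2 * j + 2 < S.card)
    (hbound : 12 * (j + 1) * (M + 1) < S.card * (S.card - 1)) :
    ∃ p ∈ S, ∃ q ∈ S, p ≠ q ∧ ∀ x y ρ : ℝ, sq X Y x y p = ρ → sq X Y x y q = ρ →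
      j + 1 ≤ (S.filter (fun s => sq X Y x y s < ρ)).card ∧
      j + 1 ≤ (S.filter (fun s => ρ < sq X Y x y s)).card := by
  by_contra hcon
  push Not at hcon
  set T := triples S X Y j ∪ triples S X Y M with hT
  have hTc : T.card ≤ 2 * ((j + 1) * (M + 1)) := by
    refine (Finset.card_union_le _ _).trans ?_
    rw [card_triples hS (M + 1) j hn, card_triples hS (j + 1) M (by omega)]
    apply le_of_eq; ring
  have hsub : S.offDiag ⊆ T.biUnion (fun t => {(t.1, t.2.1), (t.2.1, t.1), (t.1, t.2.2),
      (t.2.2, t.1), (t.2.1, t.2.2), (t.2.2, t.2.1)}) := by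
    rintro ⟨p, q⟩ h
    obtain ⟨hp, hq, hpq⟩ := Finset.mem_offDiag.1 h
    obtain ⟨x, y, ρ, ep, eq, hbad⟩ := hcon p hp q hq hpq
    obtain ⟨r, hr, hrp, hrq, x', y', ρ', ep', eq', er', hj'⟩ :=
      bad_pair hS hj hp hq hpq ep eq (by
        by_cases h : j + 1 ≤ (S.filter (fun s => sq X Y x y s < ρ)).card
        · right; have := hbad h; omega
        · left; omega)
    rw [Finset.mem_biUnion]
    have key : ∀ m ∈ S, ∀ a ∈ S, ∀ c ∈ S, X a < X m → X m < X c → sq X Y x' y' m = ρ' →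
        sq X Y x' y' a = ρ' → sq X Y x' y' c = ρ' → (m, a, c) ∈ T :=
      fun m hm a ha c hc h1 h2 e1 e2 e3 => mem_triples hS hn hm ha hc h1 h2 e1 e2 e3 hj'
    have npq : X p ≠ X q := fun e => hpq (hS.injX hp hq e)
    have nrp : X r ≠ X p := fun e => hrp (hS.injX hr hp e)
    have nrq : X r ≠ X q := fun e => hrq (hS.injX hr hq e)
    rcases lt_or_gt_of_ne npq with h1 | h1 <;> rcases lt_or_gt_of_ne nrp with h2 | h2 <;>
      rcases lt_or_gt_of_ne nrq with h3 | h3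
    · exact ⟨_, key p hp r hr q hq h2 h1 ep' er' eq', by simp⟩
    · linarith
    · exact ⟨_, key r hr p hp q hq h2 h3 er' ep' eq', by simp⟩
    · exact ⟨_, key q hq p hp r hr h1 h3 eq' ep' er', by simp⟩
    · exact ⟨_, key q hq r hr p hp h3 h1 eq' er' ep', by simp⟩
    · exact ⟨_, key r hr q hq p hp h3 h2 er' eq' ep', by simp⟩
    · linarith
    · exact ⟨_, key p hp q hq r hr h1 h2 ep' eq' er', by simp⟩
  have hcard := (Finset.card_le_card hsub).trans
    (Finset.card_biUnion_le_card_mul T _ 6 (fun _ _ => Finset.card_le_six))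
  rw [Finset.offDiag_card] at hcard
  have : S.card * S.card - S.card = S.card * (S.card - 1) := by rw [Nat.mul_sub, mul_one]
  rw [this] at hcard
  have h6 : T.card * 6 ≤ 2 * ((j + 1) * (M + 1)) * 6 := Nat.mul_le_mul_right _ hTc
  have : 12 * (j + 1) * (M + 1) = 2 * ((j + 1) * (M + 1)) * 6 := by ring
  omega

/-! ### Choice of coordinates -/

theorem exists_generic_slope (V : Finset (ℝ × ℝ)) :
    ∃ t : ℝ, ∀ v ∈ V, v ≠ 0 → v.1 + t * v.2 ≠ 0 := by
  obtain ⟨t, ht⟩ := Infinite.exists_notMem_finset (V.image (fun v => - v.1 / v.2))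
  refine ⟨t, fun v hv h0 h => ?_⟩
  by_cases h2 : v.2 = 0
  · apply h0
    rw [h2, mul_zero, add_zero] at h
    exact Prod.ext h h2
  · apply ht
    rw [Finset.mem_image]
    exact ⟨v, hv, by rw [div_eq_iff h2]; linarith⟩

theorem dist_sq (a b : Pt) : dist a b ^ 2 = (a 0 - b 0) ^ 2 + (a 1 - b 1) ^ 2 := by
  rw [EuclideanSpace.dist_eq, Real.sq_sqrt (by positivity), Fin.sum_univ_two,
    Real.dist_eq, Real.dist_eq, _root_.sq_abs, _root_.sq_abs]

/-- The abscissa of `p` in the orthogonal coordinate system with first axis along `(1, t)`, scaled by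
the factor `√(1 + t²)`. -/
def rotX (t : ℝ) (p : Pt) : ℝ := p 0 + t * p 1

/-- The ordinate of `p` in the coordinate system of `rotX`. -/
def rotY (t : ℝ) (p : Pt) : ℝ := p 1 - t * p 0

theorem sq_rot (t : ℝ) (c s : Pt) :
    sq (rotX t) (rotY t) (rotX t c) (rotY t c) s = (1 + t ^ 2) * dist s c ^ 2 := by
  rw [dist_sq]; unfold sq rotX rotY; ring

theorem det_rot (t : ℝ) (a b c : Pt) : det (rotX t) (rotY t) a b c
    = (1 + t ^ 2) * det (fun p : Pt => p 0) (fun p : Pt => p 1) a b c := by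
  unfold det rotX rotY; ring

theorem collinear_of_det {a b c : Pt} (hab : a ≠ b)
    (h : det (fun p : Pt => p 0) (fun p : Pt => p 1) a b c = 0) :
    Collinear ℝ ({a, b, c} : Set Pt) := by
  have hd : (b 0 - a 0) ^ 2 + (b 1 - a 1) ^ 2 ≠ 0 := by
    rw [← dist_sq]
    exact pow_ne_zero _ (dist_ne_zero.2 hab.symm)
  rw [collinear_iff_of_mem (p₀ := a) (by simp)]
  refine ⟨b - a, ?_⟩
  unfold det at h
  intro p hp
  simp only [Set.mem_insert_iff, Set.mem_singleton_iff] at hp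
  rcases hp with rfl | rfl | rfl
  · exact ⟨0, by simp⟩
  · exact ⟨1, by simp⟩
  · refine ⟨((b 0 - a 0) * (p 0 - a 0) + (b 1 - a 1) * (p 1 - a 1)) /
      ((b 0 - a 0) ^ 2 + (b 1 - a 1) ^ 2), ?_⟩
    ext i
    fin_cases i
    · simp only [vadd_eq_add, PiLp.add_apply, PiLp.smul_apply, PiLp.sub_apply, smul_eq_mul,
        Fin.zero_eta, Fin.isValue]
      field_simp
      linear_combination (-(b 1 - a 1)) * h
    · simp only [vadd_eq_add, PiLp.add_apply, PiLp.smul_apply, PiLp.sub_apply, smul_eq_mul,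
        Fin.mk_one, Fin.isValue]
      field_simp
      linear_combination (b 0 - a 0) * h

open Classical in
/-- All but finitely many directions are suitable: two points or two inverse points have the same
abscissa for one direction only, two inverse points being distinct because otherwise the two
points would be collinear with the centre of inversion. -/
theorem exists_generic (S : Finset Pt) (hgp : GenPos (S : Set Pt)) :
    ∃ t : ℝ, Generic S (rotX t) (rotY t) := by
  have hnc : ∀ a ∈ S, ∀ b ∈ S, ∀ c ∈ S, a ≠ b → a ≠ c → b ≠ c →
      det (fun p : Pt => p 0) (fun p : Pt => p 1) a b c ≠ 0 := by
    intro a ha b hb c hc hab hac hbc h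
    refine hgp.1 {a, b, c} ?_ ?_ (collinear_of_det hab h)
    · rintro x (rfl | rfl | rfl) <;> assumption
    · exact Set.ncard_eq_three.2 ⟨a, b, c, hab, hac, hbc, rfl⟩
  obtain ⟨t, ht⟩ := exists_generic_slope
    ((S ×ˢ S).image (fun e => (e.1 0 - e.2 0, e.1 1 - e.2 1)) ∪
      (S ×ˢ S ×ˢ S).image (fun e =>
        ((e.2.1 0 - e.1 0) * dist e.2.2 e.1 ^ 2 - (e.2.2 0 - e.1 0) * dist e.2.1 e.1 ^ 2,
          (e.2.1 1 - e.1 1) * dist e.2.2 e.1 ^ 2 - (e.2.2 1 - e.1 1) * dist e.2.1 e.1 ^ 2)))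
  have ht1 : 0 < 1 + t ^ 2 := by positivity
  refine ⟨t, ?_, ?_, ?_, ?_⟩
  · intro a ha b hb h
    by_contra hab
    refine ht (a 0 - b 0, a 1 - b 1) (Finset.mem_union_left _ (Finset.mem_image.2
      ⟨(a, b), Finset.mem_product.2 ⟨ha, hb⟩, rfl⟩)) ?_ ?_
    · intro h0
      rw [Prod.mk_eq_zero] at h0
      apply hab
      ext i
      fin_cases i
      · exact sub_eq_zero.1 h0.1
      · exact sub_eq_zero.1 h0.2
    · unfold rotX at h; linarith
  · intro a ha b hb c hc hab hac hbc
    rw [det_rot]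
    exact mul_ne_zero ht1.ne' (hnc a ha b hb c hc hab hac hbc)
  · intro a ha b hb c hc d hd hab hac had hbc hbd hcd x y eb ec ed
    refine hgp.2 {a, b, c, d} ?_ ?_ ?_
    · rintro z (rfl | rfl | rfl | rfl) <;> assumption
    · rw [show ({a, b, c, d} : Set Pt) = (({a, b, c, d} : Finset Pt) : Set Pt) by simp,
        Set.ncard_coe_finset]
      exact Finset.card_eq_four.2 ⟨a, b, c, d, hab, hac, had, hbc, hbd, hcd, rfl⟩
    · -- The point `o` has rotated coordinates `(x, y)`.
      set o : Pt := !₂[(x - t * y) / (1 + t ^ 2), (y + t * x) / (1 + t ^ 2)] with ho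
      have hox : rotX t o = x := by
        simp [rotX, ho]; field_simp; ring
      have hoy : rotY t o = y := by
        simp [rotY, ho]; field_simp; ring
      have hdist : ∀ s, sq (rotX t) (rotY t) x y s = sq (rotX t) (rotY t) x y a →
          dist s o = dist a o := by
        intro s hs
        rw [← hox, ← hoy, sq_rot, sq_rot] at hs
        exact (pow_left_inj₀ dist_nonneg dist_nonneg two_ne_zero).1
          (mul_left_cancel₀ ht1.ne' hs)
      refine ⟨o, dist a o, ?_⟩
      rintro z (rfl | rfl | rfl | rfl)
      · rfl
      · exact hdist _ eb
      · exact hdist _ ec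
      · exact hdist _ ed
  · intro q hq a ha c hc h
    by_contra hac
    obtain ⟨haq, ha⟩ := Finset.mem_erase.1 ha
    obtain ⟨hcq, hc⟩ := Finset.mem_erase.1 hc
    have pa : 0 < dist a q ^ 2 := pow_pos (dist_pos.2 haq) 2
    have pc : 0 < dist c q ^ 2 := pow_pos (dist_pos.2 hcq) 2
    unfold invX at h
    rw [sq_rot, sq_rot, div_eq_div_iff (by positivity) (by positivity)] at h
    refine ht (_, _) (Finset.mem_union_right _ (Finset.mem_image.2
      ⟨(q, a, c), Finset.mem_product.2 ⟨hq, Finset.mem_product.2 ⟨ha, hc⟩⟩, rfl⟩)) ?_ ?_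
    · intro h0
      rw [Prod.mk_eq_zero] at h0
      refine hnc q hq a ha c hc haq.symm hcq.symm hac ?_
      apply mul_right_cancel₀ pa.ne'
      unfold det
      linear_combination (-(a 0 - q 0)) * h0.2 + (a 1 - q 1) * h0.1
    · apply mul_left_cancel₀ ht1.ne'
      unfold rotX at h
      linear_combination h

end InOut

/-- For every `n ≥ 14`, every set `S` of `n` points in the plane in general position and
every positive integer `k` with `12k < 7n − 6 − √(37n² − 72n + 36)`, there exist two
distinct points `p, q ∈ S` such that every closed disk having both `p` and `q` on its
boundary contains at least `k` points of `S` in its open interior and leaves at least `k`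
points of `S` strictly outside the closed disk. -/
theorem pi_in_out_lower_bound_improved (n : ℕ) (hn : 14 ≤ n) (S : Set Pt)
    (hfin : S.Finite) (hcard : S.ncard = n) (hgp : GenPos S)
    (k : ℕ) (hk : 0 < k)
    (hineq : 12 * (k : ℝ) <
      7 * (n : ℝ) - 6 - Real.sqrt (37 * (n : ℝ) ^ 2 - 72 * (n : ℝ) + 36)) :
    ∃ p ∈ S, ∃ q ∈ S, p ≠ q ∧
      ∀ (c : Pt) (r : ℝ), 0 < r → dist p c = r → dist q c = r →
        k ≤ (S ∩ ball c r).ncard ∧ k ≤ (S ∩ {x | r < dist x c}).ncard := by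
  classical
  obtain ⟨S, rfl⟩ := hfin.exists_finset_coe
  rw [Set.ncard_coe_finset] at hcard
  have hn' : (14 : ℝ) ≤ n := by exact_mod_cast hn
  have hk' : (1 : ℝ) ≤ k := by exact_mod_cast hk
  have hrad : 0 ≤ 37 * (n : ℝ) ^ 2 - 72 * (n : ℝ) + 36 := by nlinarith
  -- The root is at least `6n - 6`, so `12 k < n`.
  have hroot : 6 * (n : ℝ) - 6 ≤ Real.sqrt (37 * (n : ℝ) ^ 2 - 72 * (n : ℝ) + 36) :=
    Real.le_sqrt_of_sq_le (by nlinarith)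
  have hkn : 12 * k < n := by
    have : 12 * (k : ℝ) < n := by linarith
    exact_mod_cast this
  -- The hypothesis on `k`, squared.
  have hquad : 14 * (n : ℝ) * k < (n : ℝ) ^ 2 - n + 12 * (k : ℝ) ^ 2 + 12 * k := by
    have h1 := Real.sq_sqrt hrad
    have h2 := Real.sqrt_nonneg (37 * (n : ℝ) ^ 2 - 72 * (n : ℝ) + 36)
    nlinarith
  obtain ⟨j, rfl⟩ : ∃ j, k = j + 1 := ⟨k - 1, by omega⟩
  obtain ⟨M, hM⟩ : ∃ M, n = M + 1 + j + 2 := ⟨n - j - 3, by omega⟩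
  obtain ⟨t, ht⟩ := InOut.exists_generic S hgp
  have ht1 : 0 < 1 + t ^ 2 := by positivity
  obtain ⟨p, hp, q, hq, hpq, h⟩ := InOut.core ht (M := M) (j := j) (by omega) (by omega) (by
    rw [hcard]
    have hcast : ((n - 1 : ℕ) : ℝ) = n - 1 := by
      rw [Nat.cast_sub (by omega)]; simp
    have hM' : (n : ℝ) = M + 1 + j + 2 := by exact_mod_cast hM
    have : (12 * (j + 1) * (M + 1) : ℝ) < n * ((n - 1 : ℕ) : ℝ) := by
      rw [hcast]
      push_cast at hquad hk'
      have : (M : ℝ) + 1 = n - j - 2 := by linarith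
      rw [this]
      nlinarith
    exact_mod_cast this)
  refine ⟨p, hp, q, hq, hpq, fun c r hr ep eq => ?_⟩
  have hlt : ∀ a b : ℝ, 0 ≤ a → 0 ≤ b → ((1 + t ^ 2) * a ^ 2 < (1 + t ^ 2) * b ^ 2 ↔ a < b) := by
    intro a b ha hb
    rw [mul_lt_mul_iff_right₀ ht1, pow_lt_pow_iff_left₀ ha hb two_ne_zero]
  have h' := h (InOut.rotX t c) (InOut.rotY t c) ((1 + t ^ 2) * r ^ 2)
    (by rw [InOut.sq_rot, ep]) (by rw [InOut.sq_rot, eq])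
  simp only [InOut.sq_rot] at h'
  have e1 : (S : Set Pt) ∩ ball c r
      = ((S.filter (fun s => (1 + t ^ 2) * dist s c ^ 2 < (1 + t ^ 2) * r ^ 2) :
        Finset Pt) : Set Pt) := by
    ext s
    simp [hlt _ _ dist_nonneg hr.le, mem_ball]
  have e2 : (S : Set Pt) ∩ {x | r < dist x c}
      = ((S.filter (fun s => (1 + t ^ 2) * r ^ 2 < (1 + t ^ 2) * dist s c ^ 2) :
        Finset Pt) : Set Pt) := by
    ext s
    simp [hlt _ _ hr.le dist_nonneg]
  rw [e1, e2, Set.ncard_coe_finset, Set.ncard_coe_finset]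
  exact h'
end
end

section
/- For every integer n ≥ 4 and every set S of n points in the Euclidean plane in general position and in convex position, there exist two distinct points u, v ∈ S such that every closed disk containing both u and v contains at least ⌈n/3⌉ + 1 points of S. -/
/-!
Call a pair `u, v` of points of `S` *spanned* if some disk contains `S` and has `u` and `v` on its
boundary (an edge of the farthest-point Delaunay triangulation).

A disk `D` containing a spanned pair `u, v` contains all points of `S` on one of the two sides of
the line `uv` (`one_side`): otherwise it misses points `p`, `q` on the two sides. The power of a
point with respect to `D` minus that with respect to the enclosing circle is an affine function,
nonpositive at `u, v` and positive at `p, q`; but the segment `pq` meets the segment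
`uv`, a contradiction.

So it suffices to find a spanned pair with at least `⌈n/3⌉ - 1` points strictly on each side. Take
a spanned pair maximizing the smaller of the two side counts. If that count `L` is too small, move
the centre of the enclosing circle along the bisector of `uv` until the circle hits a point `w` on
the big side (`exists_third`). By convex position every other point of the big side lies beyond
`uw` or beyond `wv`, so one of these spanned pairs has more than `L` points beyond it
(`card_split`), and on its other side it has all the points of the small side of `uv` and one
more (`card_grow`). This contradicts maximality.
-/

open EuclideanGeometry Metric

noncomputable section

/-- A set of points is in convex position if every point of the set is an extreme point
of its convex hull, i.e. no point lies in the convex hull of the others. -/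
def ConvexPos (S : Set Pt) : Prop :=
  ∀ p ∈ S, p ∉ convexHull ℝ (S \ {p})

/-! ### Orientation, distance and spanned pairs -/

/-- Twice the signed area of the triangle `u v p`; positive iff `p` is to the left of `uv`. -/
def cr (u v p : Pt) : ℝ := (v 0 - u 0) * (p 1 - u 1) - (v 1 - u 1) * (p 0 - u 0)

/-- The squared distance from `c` to `p`, in coordinates. -/
def nq (c p : Pt) : ℝ := (p 0 - c 0) ^ 2 + (p 1 - c 1) ^ 2

/-- Some disk contains `s` and has both `u` and `v` on its boundary. -/
def Spanned (s : Finset Pt) (u v : Pt) : Prop :=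
  ∃ c : Pt, nq c u = nq c v ∧ ∀ p ∈ s, nq c p ≤ nq c u

open Classical in
/-- The points of `s` strictly to the left of the directed line `uv`. -/
def leftOf (s : Finset Pt) (u v : Pt) : Finset Pt := s.filter (fun p => 0 < cr u v p)

lemma mem_leftOf {s : Finset Pt} {u v p : Pt} : p ∈ leftOf s u v ↔ p ∈ s ∧ 0 < cr u v p := by
  simp [leftOf]

lemma nq_eq (c p : Pt) : nq c p = dist p c ^ 2 := by
  rw [EuclideanSpace.dist_eq, Real.sq_sqrt (by positivity)]
  simp [nq, Real.dist_eq, sq_abs]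

lemma mem_ball_iff {c p : Pt} {r : ℝ} (hr : 0 < r) : p ∈ closedBall c r ↔ nq c p ≤ r ^ 2 := by
  rw [mem_closedBall, nq_eq]
  exact (sq_le_sq₀ dist_nonneg hr.le).symm

/-! ### General position and convex position in coordinates -/

lemma cr_ne_zero {S : Set Pt} (hgp : GenPos S) {u v p : Pt} (hu : u ∈ S) (hv : v ∈ S)
    (hp : p ∈ S) (huv : u ≠ v) (hup : p ≠ u) (hvp : p ≠ v) : cr u v p ≠ 0 := by
  intro h
  refine hgp.1 {u, v, p} ?_ ?_ ?_
  · rintro x (rfl | rfl | rfl) <;> assumption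
  · rw [Set.ncard_eq_three]
    exact ⟨u, v, p, huv, hup.symm, hvp.symm, rfl⟩
  · rw [collinear_iff_of_mem (p₀ := u) (by simp)]
    refine ⟨v - u, ?_⟩
    have hne : nq u v ≠ 0 := by
      rw [nq_eq]
      exact pow_ne_zero _ (dist_ne_zero.2 huv.symm)
    rintro x (rfl | rfl | rfl)
    · exact ⟨0, by simp⟩
    · exact ⟨1, by simp⟩
    · -- the coefficient of the orthogonal projection of `x - u` onto `v - u`
      refine ⟨((x 0 - u 0) * (v 0 - u 0) + (x 1 - u 1) * (v 1 - u 1)) / nq u v, ?_⟩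
      ext i
      simp only [vadd_eq_add, PiLp.add_apply, PiLp.smul_apply, PiLp.sub_apply, smul_eq_mul]
      unfold cr at h
      fin_cases i
      · simp only [Fin.zero_eta]
        field_simp
        unfold nq
        linear_combination -(v 1 - u 1) * h
      · simp only [Fin.mk_one]
        field_simp
        unfold nq
        linear_combination (v 0 - u 0) * h

/-- In a set in convex position no point is inside the triangle of three others. -/
lemma not_in_triangle {S : Set Pt} (hconv : ConvexPos S) {a p q r : Pt} (ha : a ∈ S) (hp : p ∈ S)
    (hq : q ∈ S) (hr : r ∈ S) (h1 : 0 < cr p q a) (h2 : 0 < cr q r a) (h3 : 0 < cr r p a) :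
    False := by
  have hpa : p ≠ a := by
    rintro rfl
    unfold cr at h3
    linarith
  have hqa : q ≠ a := by
    rintro rfl
    unfold cr at h2
    linarith
  have hra : r ≠ a := by
    rintro rfl
    unfold cr at h2
    linarith
  apply hconv a ha
  have hC := convex_convexHull ℝ (S \ {a})
  have mp := subset_convexHull ℝ _ (show p ∈ S \ {a} from ⟨hp, hpa⟩)
  have mq := subset_convexHull ℝ _ (show q ∈ S \ {a} from ⟨hq, hqa⟩)
  have mr := subset_convexHull ℝ _ (show r ∈ S \ {a} from ⟨hr, hra⟩)
  set T := cr p q a + cr q r a + cr r p a with hT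
  have hT0 : 0 < T := by positivity
  -- barycentric coordinates of `a` are ratios of signed areas
  have key := hC.sum_mem (t := Finset.univ) (w := ![cr q r a / T, cr r p a / T, cr p q a / T])
    (z := ![p, q, r])
    (by intro i _; fin_cases i <;> simp <;> positivity)
    (by simp [Fin.sum_univ_three]; field_simp; rw [hT]; ring)
    (by intro i _; fin_cases i <;> simpa)
  convert key using 1
  ext i
  simp only [Fin.sum_univ_three, Matrix.cons_val, PiLp.add_apply, PiLp.smul_apply, smul_eq_mul]
  fin_cases i
  · simp only [Fin.zero_eta]
    field_simp
    simp only [hT, cr]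
    ring
  · simp only [Fin.mk_one]
    field_simp
    simp only [hT, cr]
    ring

/-! ### Disks through a spanned pair -/

/-- A disk containing a spanned pair contains all of `s` on one side of it: it cannot miss both a
point `p` on the left and a point `q` on the right. -/
lemma one_side {c d u v p q : Pt} {ρ : ℝ} (huv : nq c u = nq c v)
    (hpc : nq c p ≤ nq c u) (hqc : nq c q ≤ nq c u) (hp : 0 < cr u v p) (hq : 0 < cr v u q)
    (hu : nq d u ≤ ρ) (hv : nq d v ≤ ρ) (hpd : ρ < nq d p) (hqd : ρ < nq d q) : False := by
  set α := cr v u q with hα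
  set β := cr u v p with hβ
  have hne : 0 < nq u v := by
    rcases (by unfold nq; positivity : 0 ≤ nq u v).lt_or_eq with h | h
    · exact h
    · unfold nq at h
      have h0 : v 0 - u 0 = 0 := by nlinarith [sq_nonneg (v 0 - u 0), sq_nonneg (v 1 - u 1)]
      have h1 : v 1 - u 1 = 0 := by nlinarith [sq_nonneg (v 0 - u 0), sq_nonneg (v 1 - u 1)]
      simp [hβ, cr, h0, h1] at hp
  -- the crossing point `x` of the segment `pq` with the line `uv`
  set x0 := (α * p 0 + β * q 0) / (α + β) with hx0
  set x1 := (α * p 1 + β * q 1) / (α + β) with hx1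
  have hs : 0 < α + β := by positivity
  obtain ⟨s, hs0, hs1⟩ : ∃ s : ℝ, x0 = u 0 + s * (v 0 - u 0) ∧ x1 = u 1 + s * (v 1 - u 1) := by
    refine ⟨((x0 - u 0) * (v 0 - u 0) + (x1 - u 1) * (v 1 - u 1)) / nq u v, ?_, ?_⟩
    · have : (v 0 - u 0) * (x1 - u 1) - (v 1 - u 1) * (x0 - u 0) = 0 := by
        rw [hx0, hx1]; field_simp; rw [hα, hβ]; unfold cr; ring
      field_simp
      unfold nq
      linear_combination -(v 1 - u 1) * this
    · have : (v 0 - u 0) * (x1 - u 1) - (v 1 - u 1) * (x0 - u 0) = 0 := by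
        rw [hx0, hx1]; field_simp; rw [hα, hβ]; unfold cr; ring
      field_simp
      unfold nq
      linear_combination (v 0 - u 0) * this
  have e0 : (α + β) * x0 = α * p 0 + β * q 0 := by rw [hx0]; field_simp
  have e1 : (α + β) * x1 = α * p 1 + β * q 1 := by rw [hx1]; field_simp
  have hmono : (α + β) * ((x0 - c 0) ^ 2 + (x1 - c 1) ^ 2) ≤ α * nq c p + β * nq c q := by
    have : (α + β) * (α * nq c p + β * nq c q
        - (α + β) * ((x0 - c 0) ^ 2 + (x1 - c 1) ^ 2))
        = α * β * ((p 0 - q 0) ^ 2 + (p 1 - q 1) ^ 2) := by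
      have f0 : (α + β) * (x0 - c 0) = α * (p 0 - c 0) + β * (q 0 - c 0) := by
        linear_combination e0
      have f1 : (α + β) * (x1 - c 1) = α * (p 1 - c 1) + β * (q 1 - c 1) := by
        linear_combination e1
      unfold nq
      linear_combination
        -((α + β) * (x0 - c 0) + (α * (p 0 - c 0) + β * (q 0 - c 0))) * f0
        -((α + β) * (x1 - c 1) + (α * (p 1 - c 1) + β * (q 1 - c 1))) * f1
    have h2 : 0 ≤ α * β * ((p 0 - q 0) ^ 2 + (p 1 - q 1) ^ 2) := by positivity
    rw [← this] at h2
    have := nonneg_of_mul_nonneg_right h2 hs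
    linarith
  have hxc : (x0 - c 0) ^ 2 + (x1 - c 1) ^ 2 ≤ nq c u := by
    have : (α + β) * ((x0 - c 0) ^ 2 + (x1 - c 1) ^ 2) ≤ (α + β) * nq c u := by
      have h1 := mul_le_mul_of_nonneg_left hpc hq.le
      have h2 := mul_le_mul_of_nonneg_left hqc hp.le
      linarith
    exact le_of_mul_le_mul_left this hs
  have hpow : (x0 - c 0) ^ 2 + (x1 - c 1) ^ 2 = nq c u - s * (1 - s) * nq u v := by
    rw [hs0, hs1]
    unfold nq at huv ⊢
    linear_combination -s * huv
  have hss : 0 ≤ s * (1 - s) := by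
    by_contra h
    push Not at h
    have := mul_neg_of_neg_of_pos h hne
    linarith
  have hsl : 0 ≤ s := by
    by_contra h
    push Not at h
    have := mul_neg_of_neg_of_pos h (by linarith : 0 < 1 - s)
    linarith
  have hsr : s ≤ 1 := by
    by_contra h
    push Not at h
    have := mul_neg_of_pos_of_neg (by linarith : 0 < s) (by linarith : 1 - s < 0)
    linarith
  -- the affine function `nq d - nq c`, evaluated at `x` along `pq` and along `uv`
  have a1 : α * (nq d p - nq c p) + β * (nq d q - nq c q)
      = (α + β) * (((1 - s) * (nq d u - nq c u)) + s * (nq d v - nq c v)) := by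
    rw [hs0] at e0
    rw [hs1] at e1
    unfold nq
    linear_combination (2 * (d 0 - c 0)) * e0 + (2 * (d 1 - c 1)) * e1
  have a2 : 0 < α * (nq d p - ρ - (nq c p - nq c u)) + β * (nq d q - ρ - (nq c q - nq c u)) := by
    have : 0 < nq d p - ρ - (nq c p - nq c u) := by linarith
    have : 0 < nq d q - ρ - (nq c q - nq c u) := by linarith
    positivity
  have a3 : (1 - s) * (nq d u - ρ) + s * (nq d v - ρ) ≤ 0 :=
    add_nonpos (mul_nonpos_of_nonneg_of_nonpos (by linarith) (by linarith))
      (mul_nonpos_of_nonneg_of_nonpos hsl (by linarith))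
  have a4 : (α + β) * ((1 - s) * (nq d u - ρ) + s * (nq d v - ρ)) ≤ 0 :=
    mul_nonpos_of_nonneg_of_nonpos hs.le a3
  rw [← huv] at a1
  linarith

/-- Enclosing circles exist: shrink a circle through the point of `s` farthest from the origin,
keeping that point on it, until it hits a second point. -/
lemma exists_spanned (s : Finset Pt) (hs : 1 < s.card) :
    ∃ u ∈ s, ∃ v ∈ s, u ≠ v ∧ Spanned s u v := by
  classical
  obtain ⟨u, hu, hmax⟩ := s.exists_max_image (fun p => nq 0 p) (Finset.card_pos.1 (by omega))
  obtain ⟨v, hv, hvmax⟩ := (s.erase u).exists_max_image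
    (fun p => nq u p / (-(u 0 * (p 0 - u 0) + u 1 * (p 1 - u 1))))
    (Finset.card_pos.1 (by rw [Finset.card_erase_of_mem hu]; omega))
  have hpos : ∀ p ∈ s.erase u, 0 < nq u p ∧ 0 < -(u 0 * (p 0 - u 0) + u 1 * (p 1 - u 1)) := by
    intro p hp
    have h1 : 0 < nq u p := by
      rw [nq_eq]
      have := dist_pos.2 (Finset.ne_of_mem_erase hp)
      positivity
    have h2 := hmax p (Finset.mem_of_mem_erase hp)
    simp [nq] at h1 h2
    exact ⟨by simpa [nq] using h1, by nlinarith⟩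
  refine ⟨u, hu, v, Finset.mem_of_mem_erase hv, (Finset.ne_of_mem_erase hv).symm, ?_⟩
  set t := nq u v / (-(u 0 * (v 0 - u 0) + u 1 * (v 1 - u 1))) with ht
  refine ⟨!₂[u 0 - t / 2 * u 0, u 1 - t / 2 * u 1], ?_, ?_⟩
  · have := (hpos v hv).2
    have h : t * (-(u 0 * (v 0 - u 0) + u 1 * (v 1 - u 1))) = nq u v := by
      rw [ht]; exact div_mul_cancel₀ _ this.ne'
    simp [nq] at h ⊢
    linear_combination h
  · intro p hp
    by_cases hpu : p = u
    · rw [hpu]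
    have hp' := Finset.mem_erase.2 ⟨hpu, hp⟩
    have h := hvmax p hp'
    rw [div_le_iff₀ (hpos p hp').2] at h
    simp [nq] at h ⊢
    linarith

/-- The circle of a spanned pair can be moved until it hits a third point on a given nonempty
side. -/
lemma exists_third {s : Finset Pt} {u v : Pt} (h : Spanned s u v) (hne : (leftOf s u v).Nonempty) :
    ∃ w ∈ leftOf s u v, Spanned s u w ∧ Spanned s w v := by
  obtain ⟨c, hc, hs⟩ := h
  obtain ⟨w, hw, hmin⟩ := (leftOf s u v).exists_min_image
    (fun p => (nq c u - nq c p) / cr u v p) hne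
  set t := (nq c u - nq c w) / cr u v w with ht
  have hw' := mem_leftOf.1 hw
  have ht0 : 0 ≤ t := div_nonneg (by linarith [hs w hw'.1]) hw'.2.le
  -- the centre moves away from the left side, along the bisector of `uv`
  set d : Pt := !₂[c 0 + t / 2 * (v 1 - u 1), c 1 - t / 2 * (v 0 - u 0)] with hd
  have hdp : ∀ p, nq d p - nq d u = nq c p - nq c u + t * cr u v p := by
    intro p
    simp [nq, hd, cr]
    ring
  have hv : nq d v = nq d u := by
    have := hdp v
    have h0 : cr u v v = 0 := by unfold cr; ring
    rw [h0] at this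
    linarith
  have hww : nq d w = nq d u := by
    have := hdp w
    have h0 : t * cr u v w = nq c u - nq c w := by
      have := hw'.2.ne'
      rw [ht]; field_simp
    linarith
  have hall : ∀ p ∈ s, nq d p ≤ nq d u := by
    intro p hp
    have h1 := hdp p
    rcases le_or_gt (cr u v p) 0 with h | h
    · nlinarith [hs p hp]
    · have h2 := hmin p (mem_leftOf.2 ⟨hp, h⟩)
      rw [le_div_iff₀ h] at h2
      linarith
  exact ⟨w, hw, ⟨d, hww.symm, hall⟩, ⟨d, hww.trans hv.symm, fun p hp => by rw [hww]; exact hall p hp⟩⟩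

/-! ### Counting points on the sides of a line -/

lemma card_sides {S : Set Pt} (hgp : GenPos S) {s : Finset Pt} (hsS : ∀ p, p ∈ s ↔ p ∈ S)
    {u v : Pt} (hu : u ∈ s) (hv : v ∈ s) (huv : u ≠ v) :
    s.card ≤ (leftOf s u v).card + (leftOf s v u).card + 2 := by
  classical
  have hsub : s ⊆ (leftOf s u v ∪ leftOf s v u) ∪ {u, v} := by
    intro p hp
    by_cases h1 : p = u
    · simp [h1]
    by_cases h2 : p = v
    · simp [h2]
    have := cr_ne_zero hgp ((hsS u).1 hu) ((hsS v).1 hv) ((hsS p).1 hp) huv h1 h2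
    have hneg : cr v u p = - cr u v p := by unfold cr; ring
    simp only [Finset.mem_union, mem_leftOf]
    rcases this.lt_or_gt with h | h
    · exact Or.inl (Or.inr ⟨hp, by linarith⟩)
    · exact Or.inl (Or.inl ⟨hp, h⟩)
  have h1 := Finset.card_le_card hsub
  have h2 := Finset.card_union_le (leftOf s u v ∪ leftOf s v u) {u, v}
  have h3 := Finset.card_union_le (leftOf s u v) (leftOf s v u)
  have h4 : ({u, v} : Finset Pt).card ≤ 2 := Finset.card_le_two
  omega

/-- Apart from `w`, the points beyond `uv` on the side of `w` are beyond `uw` or beyond `wv`. -/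
lemma card_split {S : Set Pt} (hgp : GenPos S) (hconv : ConvexPos S) {s : Finset Pt}
    (hsS : ∀ p, p ∈ s ↔ p ∈ S) {u v w : Pt} (hu : u ∈ s) (hv : v ∈ s) (hw : w ∈ leftOf s u v) :
    (leftOf s u v).card ≤ (leftOf s u w).card + (leftOf s w v).card + 1 := by
  classical
  obtain ⟨hws, hwl⟩ := mem_leftOf.1 hw
  have hsub : leftOf s u v ⊆ (leftOf s u w ∪ leftOf s w v) ∪ {w} := by
    intro p hp
    obtain ⟨hps, hpl⟩ := mem_leftOf.1 hp
    by_cases h0 : p = w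
    · simp [h0]
    by_contra hcon
    simp only [Finset.mem_union, mem_leftOf, hps, true_and, not_or, not_lt] at hcon
    obtain ⟨⟨h1, h2⟩, -⟩ := hcon
    have hpu : p ≠ u := by rintro rfl; simp [cr] at hpl
    have hpv : p ≠ v := by rintro rfl; simp [cr] at hpl; nlinarith
    have hwu : w ≠ u := by rintro rfl; simp [cr] at hwl
    have hwv : w ≠ v := by rintro rfl; simp [cr] at hwl; nlinarith
    have n1 := cr_ne_zero hgp ((hsS u).1 hu) ((hsS w).1 hws) ((hsS p).1 hps) hwu.symm hpu h0
    have n2 := cr_ne_zero hgp ((hsS w).1 hws) ((hsS v).1 hv) ((hsS p).1 hps) hwv h0 hpv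
    have e1 : cr w u p = - cr u w p := by unfold cr; ring
    have e2 : cr v w p = - cr w v p := by unfold cr; ring
    have l1 := lt_of_le_of_ne h1 n1
    have l2 := lt_of_le_of_ne h2 n2
    exact not_in_triangle hconv ((hsS p).1 hps) ((hsS u).1 hu) ((hsS v).1 hv) ((hsS w).1 hws) hpl
      (by linarith) (by linarith)
  have h1 := Finset.card_le_card hsub
  have h2 := Finset.card_union_le (leftOf s u w ∪ leftOf s w v) {w}
  have h3 := Finset.card_union_le (leftOf s u w) (leftOf s w v)
  simp only [Finset.card_singleton] at h2
  omega

/-- If `w` is to the left of `uv`, then everything to the right of `uv`, and also `v` (for the line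
`uw`) or `u` (for the line `wv`), lies on the inner side of the new line. -/
lemma card_grow {S : Set Pt} (hgp : GenPos S) (hconv : ConvexPos S) {s : Finset Pt}
    (hsS : ∀ p, p ∈ s ↔ p ∈ S) {u v w : Pt} (hu : u ∈ s) (hv : v ∈ s) (hw : w ∈ leftOf s u v) :
    (leftOf s v u).card < (leftOf s w u).card ∧ (leftOf s v u).card < (leftOf s v w).card := by
  classical
  obtain ⟨hws, hwl⟩ := mem_leftOf.1 hw
  have hwu : w ≠ u := by rintro rfl; simp [cr] at hwl
  have hwv : w ≠ v := by rintro rfl; simp [cr] at hwl; nlinarith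
  have hne : ∀ p, 0 < cr v u p → p ≠ u ∧ p ≠ v ∧ p ≠ w := by
    intro p hp
    refine ⟨?_, ?_, ?_⟩
    · rintro rfl; simp [cr] at hp; nlinarith
    · rintro rfl; simp [cr] at hp
    · rintro rfl; unfold cr at hp hwl; linarith
  constructor
  · refine Finset.card_lt_card (Finset.ssubset_iff_of_subset ?_ |>.2 ⟨v, ?_, ?_⟩)
    · intro p hp
      obtain ⟨hps, hpl⟩ := mem_leftOf.1 hp
      obtain ⟨a1, a2, a3⟩ := hne p hpl
      refine mem_leftOf.2 ⟨hps, ?_⟩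
      by_contra hcon
      have n1 := cr_ne_zero hgp ((hsS w).1 hws) ((hsS u).1 hu) ((hsS p).1 hps) hwu a3 a1
      have l1 := lt_of_le_of_ne (not_lt.1 hcon) n1
      -- otherwise `u` is inside the triangle `p v w`
      refine not_in_triangle hconv ((hsS u).1 hu) ((hsS p).1 hps) ((hsS v).1 hv) ((hsS w).1 hws)
        ?_ ?_ ?_ <;> unfold cr at * <;> linarith
    · refine mem_leftOf.2 ⟨hv, ?_⟩
      unfold cr at *; linarith
    · intro h
      exact (hne v (mem_leftOf.1 h).2).2.1 rfl
  · refine Finset.card_lt_card (Finset.ssubset_iff_of_subset ?_ |>.2 ⟨u, ?_, ?_⟩)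
    · intro p hp
      obtain ⟨hps, hpl⟩ := mem_leftOf.1 hp
      obtain ⟨a1, a2, a3⟩ := hne p hpl
      refine mem_leftOf.2 ⟨hps, ?_⟩
      by_contra hcon
      have n1 := cr_ne_zero hgp ((hsS v).1 hv) ((hsS w).1 hws) ((hsS p).1 hps) hwv.symm a2 a3
      have l1 := lt_of_le_of_ne (not_lt.1 hcon) n1
      -- otherwise `v` is inside the triangle `u p w`
      refine not_in_triangle hconv ((hsS v).1 hv) ((hsS u).1 hu) ((hsS p).1 hps) ((hsS w).1 hws)
        ?_ ?_ ?_ <;> unfold cr at * <;> linarith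
    · refine mem_leftOf.2 ⟨hu, ?_⟩
      unfold cr at *; linarith
    · intro h
      exact (hne u (mem_leftOf.1 h).2).1 rfl

/-! ### A balanced spanned pair -/

lemma Spanned.symm {s : Finset Pt} {u v : Pt} (h : Spanned s u v) : Spanned s v u := by
  obtain ⟨c, h1, h2⟩ := h
  exact ⟨c, h1.symm, fun p hp => by rw [← h1]; exact h2 p hp⟩

/-- If the right side of a spanned pair has `L` points with `3 L + 4 ≤ |s|`, then another spanned
pair has more than `L` points on both sides. -/
lemma improve {S : Set Pt} (hgp : GenPos S) (hconv : ConvexPos S) {s : Finset Pt}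
    (hsS : ∀ p, p ∈ s ↔ p ∈ S) {u v : Pt} (hu : u ∈ s) (hv : v ∈ s) (huv : u ≠ v)
    (h : Spanned s u v) (hL : 3 * (leftOf s v u).card + 4 ≤ s.card) :
    ∃ a ∈ s, ∃ b ∈ s, a ≠ b ∧ Spanned s a b ∧
      (leftOf s v u).card < min (leftOf s a b).card (leftOf s b a).card := by
  have h1 := card_sides hgp hsS hu hv huv
  obtain ⟨w, hw, s1, s2⟩ := exists_third h (Finset.card_pos.1 (by omega))
  obtain ⟨hws, hwl⟩ := mem_leftOf.1 hw
  have hwu : u ≠ w := by rintro rfl; simp [cr] at hwl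
  have hwv : w ≠ v := by rintro rfl; simp [cr] at hwl; nlinarith
  have h2 := card_split hgp hconv hsS hu hv hw
  obtain ⟨g1, g2⟩ := card_grow hgp hconv hsS hu hv hw
  by_cases hc : (leftOf s v u).card < (leftOf s u w).card
  · exact ⟨u, hu, w, hws, hwu, s1, lt_min hc g1⟩
  · exact ⟨w, hws, v, hv, hwv, s2, lt_min (by omega) g2⟩

/-- A spanned pair with both sides large, by maximality of the smaller side. -/
lemma exists_balanced {S : Set Pt} (hgp : GenPos S) (hconv : ConvexPos S) {s : Finset Pt}
    (hsS : ∀ p, p ∈ s ↔ p ∈ S) (hs : 1 < s.card) :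
    ∃ u ∈ s, ∃ v ∈ s, u ≠ v ∧ Spanned s u v ∧
      s.card ≤ 3 * (leftOf s u v).card + 3 ∧ s.card ≤ 3 * (leftOf s v u).card + 3 := by
  classical
  obtain ⟨a, ha, b, hb, hab, hsp⟩ := exists_spanned s hs
  obtain ⟨⟨u, v⟩, hm, hmax⟩ :=
    ((s ×ˢ s).filter (fun x => x.1 ≠ x.2 ∧ Spanned s x.1 x.2)).exists_max_image
      (fun x => min (leftOf s x.1 x.2).card (leftOf s x.2 x.1).card)
      ⟨(a, b), by simp [ha, hb, hab, hsp]⟩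
  simp only [Finset.mem_filter, Finset.mem_product] at hm
  obtain ⟨⟨hu, hv⟩, huv, h⟩ := hm
  refine ⟨u, hu, v, hv, huv, h, ?_, ?_⟩
  · by_contra hcon
    obtain ⟨p, hp, q, hq, hpq, hs', hlt⟩ := improve hgp hconv hsS hv hu huv.symm h.symm (by omega)
    have := hmax (p, q) (by simp [hp, hq, hpq, hs'])
    simp only at this
    omega
  · by_contra hcon
    obtain ⟨p, hp, q, hq, hpq, hs', hlt⟩ := improve hgp hconv hsS hu hv huv h (by omega)
    have := hmax (p, q) (by simp [hp, hq, hpq, hs'])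
    simp only at this
    omega

/-! ### The lower bound -/

/-- A set containing `u`, `v` and every point to the left of `uv` contains at least two points
more than there are on the left. -/
lemma count_bound {S : Set Pt} (hfin : S.Finite) {s : Finset Pt} (hsS : ∀ p, p ∈ s ↔ p ∈ S)
    {u v : Pt} (hu : u ∈ s) (hv : v ∈ s) (huv : u ≠ v) (B : Set Pt) (huB : u ∈ B) (hvB : v ∈ B)
    (hB : ∀ p ∈ leftOf s u v, p ∈ B) : (leftOf s u v).card + 2 ≤ (S ∩ B).ncard := by
  classical
  have h1 : u ∉ leftOf s u v := by simp [mem_leftOf, cr]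
  have h2 : v ∉ leftOf s u v := by
    intro h
    have := (mem_leftOf.1 h).2
    unfold cr at this
    linarith
  have hc : (insert u (insert v (leftOf s u v))).card = (leftOf s u v).card + 2 := by
    rw [Finset.card_insert_of_notMem (by simp [huv, h1]), Finset.card_insert_of_notMem h2]
  rw [← hc, ← Set.ncard_coe_finset]
  refine Set.ncard_le_ncard ?_ (hfin.inter_of_left B)
  intro p hp
  simp only [Finset.coe_insert, Set.mem_insert_iff, Finset.mem_coe] at hp
  rcases hp with rfl | rfl | hp
  · exact ⟨(hsS _).1 hu, huB⟩
  · exact ⟨(hsS _).1 hv, hvB⟩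
  · exact ⟨(hsS _).1 (mem_leftOf.1 hp).1, hB p hp⟩

/-- For every `n ≥ 4` and every set `S` of `n` points in the plane in general position
and in convex position, there exist two distinct points `u, v ∈ S` such that every
closed disk containing both `u` and `v` contains at least `⌈n/3⌉ + 1` points of `S`. -/
theorem pi_convex_lower_bound_n_over_3 (n : ℕ) (hn : 4 ≤ n) (S : Set Pt)
    (hfin : S.Finite) (hcard : S.ncard = n) (hgp : GenPos S) (hconv : ConvexPos S) :
    ∃ u ∈ S, ∃ v ∈ S, u ≠ v ∧
      ∀ (c : Pt) (r : ℝ), 0 < r → u ∈ closedBall c r → v ∈ closedBall c r →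
        ⌈(n : ℝ) / 3⌉ + 1 ≤ ((S ∩ closedBall c r).ncard : ℤ) := by
  have hsS : ∀ p, p ∈ hfin.toFinset ↔ p ∈ S := fun p => hfin.mem_toFinset
  have hsc : hfin.toFinset.card = n := by rw [← hcard, Set.ncard_eq_toFinset_card S hfin]
  generalize hfin.toFinset = s at hsS hsc
  obtain ⟨u, hu, v, hv, huv, ⟨c, hc, hall⟩, b1, b2⟩ :=
    exists_balanced hgp hconv hsS (by omega)
  refine ⟨u, (hsS u).1 hu, v, (hsS v).1 hv, huv, ?_⟩
  intro d r hr hud hvd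
  have fin : ∀ k : ℕ, s.card ≤ 3 * k + 3 → k + 2 ≤ (S ∩ closedBall d r).ncard →
      ⌈(n : ℝ) / 3⌉ + 1 ≤ ((S ∩ closedBall d r).ncard : ℤ) := by
    intro k h1 h2
    have h3 : ⌈(n : ℝ) / 3⌉ ≤ (k : ℤ) + 1 := by
      rw [Int.ceil_le]
      rw [hsc] at h1
      have : (n : ℝ) ≤ 3 * k + 3 := by exact_mod_cast h1
      push_cast
      linarith
    omega
  by_cases hleft : ∀ p ∈ leftOf s u v, p ∈ closedBall d r
  · exact fin _ b1 (count_bound hfin hsS hu hv huv _ hud hvd hleft)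
  · refine fin _ b2 (count_bound hfin hsS hv hu huv.symm _ hvd hud ?_)
    push Not at hleft
    obtain ⟨p, hp, hpd⟩ := hleft
    intro q hq
    by_contra hqd
    rw [mem_ball_iff hr] at hud hvd hpd hqd
    obtain ⟨hps, hpl⟩ := mem_leftOf.1 hp
    obtain ⟨hqs, hql⟩ := mem_leftOf.1 hq
    exact one_side hc (hall p hps) (hall q hqs) hpl hql hud hvd (not_le.1 hpd) (not_le.1 hqd)
end
end

section
/- For every integer n ≥ 3 and every set S of n points in the Euclidean plane in general position, there exist two distinct points u, v ∈ S such that the closed disk having the segment uv as a diameter (i.e., the closed disk centered at the midpoint of u and v with radius dist(u,v)/2) contains at least ⌈n/3⌉ + 1 points of S. -/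
/-!
Consider the smallest disk enclosing `S`. Its center `o` is a convex combination of points of `S`
on its boundary (`enclosing`), and by Carathéodory at most three of them suffice.

One boundary point is impossible, since the disk would be a single point. With two boundary points
the disk is itself diametral and contains all of `S` (`two_cover`). With three boundary points
`a`, `b`, `c`, the three diametral disks of the triangle cover the enclosing disk (`cover`), and
every vertex lies in two of them; hence their cardinalities sum to at least `n + 3` (`count`),
and one of them has at least `⌈n / 3⌉ + 1` points.

For `cover`, a point `x` outside all three diametral disks sees the vertices at pairwise acute
angles (`mem_diametral_iff`), so one vertex, say `b`, is seen between the two others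
(`exists_middle`). Since `x` is in the disk, `b` lies beyond the chord `ac`, and so does the
center `o`, which is incompatible with the angle `axc` being acute (`no_middle`).
-/

open EuclideanGeometry Metric

noncomputable section

/-- The closed disk with diameter `uv` is the set of points seeing `uv` under a
non-acute angle (Thales). -/
lemma mem_diametral_iff (u v x : Pt) :
    x ∈ closedBall (midpoint ℝ u v) (dist u v / 2) ↔ inner ℝ (u - x) (v - x) ≤ 0 := by
  rw [mem_closedBall, dist_comm, dist_eq_norm, dist_eq_norm]
  have h1 : midpoint ℝ u v - x = (1 / 2 : ℝ) • ((u - x) + (v - x)) := by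
    rw [midpoint_eq_smul_add, invOf_eq_inv]
    module
  have h2 : u - v = (u - x) - (v - x) := by abel
  rw [h1, h2, norm_smul]
  generalize u - x = p
  generalize v - x = q
  have h3 := norm_add_sq_real p q
  have h4 := norm_sub_sq_real p q
  have h5 : ‖(1 / 2 : ℝ)‖ * ‖p + q‖ ≤ ‖p - q‖ / 2 ↔ ‖p + q‖ ≤ ‖p - q‖ := by
    norm_num
    constructor <;> intro h <;> linarith
  rw [h5, ← sq_le_sq₀ (norm_nonneg _) (norm_nonneg _), h3, h4]
  constructor <;> intro h <;> linarith

/-- Of three plane vectors, one of which makes acute angles with the other two, some one lies in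
the cone spanned by the remaining two. -/
lemma exists_middle (p q r : Pt) (hpq : 0 < inner ℝ p q) (hpr : 0 < inner ℝ p r) :
    (∃ e f : ℝ, 0 ≤ e ∧ 0 ≤ f ∧ p = e • q + f • r) ∨
    (∃ e f : ℝ, 0 ≤ e ∧ 0 ≤ f ∧ q = e • p + f • r) ∨
    (∃ e f : ℝ, 0 ≤ e ∧ 0 ≤ f ∧ r = e • p + f • q) := by
  have hdep : ¬ LinearIndependent ℝ ![p, q, r] := by
    intro h
    have := h.fintype_card_le_finrank
    simp at this
  obtain ⟨g, hg, i, hi⟩ := Fintype.not_linearIndependent_iff.1 hdep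
  have hrel : g 0 • p + g 1 • q + g 2 • r = 0 := by
    simpa [Fin.sum_univ_three] using hg
  have hne : g 0 ≠ 0 ∨ g 1 ≠ 0 ∨ g 2 ≠ 0 := by
    fin_cases i
    · exact Or.inl hi
    · exact Or.inr (Or.inl hi)
    · exact Or.inr (Or.inr hi)
  have hp : 0 < inner ℝ p p := real_inner_self_pos.2 (by rintro rfl; simp at hpq)
  have e1 : g 0 * inner ℝ p p + g 1 * inner ℝ p q + g 2 * inner ℝ p r = 0 := by
    simpa [inner_add_right, inner_smul_right] using congrArg (inner ℝ p) hrel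
  generalize g 0 = l at *
  generalize g 1 = m at *
  generalize g 2 = k at *
  -- Pairing the relation with `p` shows that its coefficients do not all have one sign.
  have hnn : ¬ (0 ≤ l ∧ 0 ≤ m ∧ 0 ≤ k) := by
    rintro ⟨h1, h2, h3⟩
    have a1 := mul_nonneg h1 hp.le
    have a2 := mul_nonneg h2 hpq.le
    have a3 := mul_nonneg h3 hpr.le
    rcases hne with h | h | h
    · have := mul_pos (lt_of_le_of_ne h1 h.symm) hp; linarith
    · have := mul_pos (lt_of_le_of_ne h2 h.symm) hpq; linarith
    · have := mul_pos (lt_of_le_of_ne h3 h.symm) hpr; linarith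
  have hnp : ¬ (l ≤ 0 ∧ m ≤ 0 ∧ k ≤ 0) := by
    rintro ⟨h1, h2, h3⟩
    have a1 := mul_nonpos_of_nonpos_of_nonneg h1 hp.le
    have a2 := mul_nonpos_of_nonpos_of_nonneg h2 hpq.le
    have a3 := mul_nonpos_of_nonpos_of_nonneg h3 hpr.le
    rcases hne with h | h | h
    · have := mul_neg_of_neg_of_pos (lt_of_le_of_ne h1 h) hp; linarith
    · have := mul_neg_of_neg_of_pos (lt_of_le_of_ne h2 h) hpq; linarith
    · have := mul_neg_of_neg_of_pos (lt_of_le_of_ne h3 h) hpr; linarith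
  -- A vector whose coefficient has sign opposite to the two others is the middle one.
  have solve : ∀ (x y z : Pt) (a b c : ℝ), a • x + b • y + c • z = 0 →
      (a < 0 ∧ 0 ≤ b ∧ 0 ≤ c ∨ 0 < a ∧ b ≤ 0 ∧ c ≤ 0) →
      ∃ e f : ℝ, 0 ≤ e ∧ 0 ≤ f ∧ x = e • y + f • z := by
    intro x y z a b c h hs
    have ha : a ≠ 0 := by rcases hs with hs | hs; exacts [hs.1.ne, hs.1.ne']
    refine ⟨-b / a, -c / a, ?_, ?_, ?_⟩
    · rcases hs with ⟨h1, h2, h3⟩ | ⟨h1, h2, h3⟩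
      · exact div_nonneg_of_nonpos (by linarith) h1.le
      · exact div_nonneg (by linarith) h1.le
    · rcases hs with ⟨h1, h2, h3⟩ | ⟨h1, h2, h3⟩
      · exact div_nonneg_of_nonpos (by linarith) h1.le
      · exact div_nonneg (by linarith) h1.le
    · have h' : a • x = (-b) • y + (-c) • z := by
        rw [← sub_eq_zero, ← h]; module
      have : x = a⁻¹ • (a • x) := by rw [smul_smul, inv_mul_cancel₀ ha, one_smul]
      rw [this, h', smul_add, smul_smul, smul_smul]
      congr 2 <;> field_simp
  have r1 : m • q + l • p + k • r = 0 := by rw [← hrel]; abel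
  have r2 : k • r + l • p + m • q = 0 := by rw [← hrel]; abel
  have key : (l < 0 ∧ 0 ≤ m ∧ 0 ≤ k ∨ 0 < l ∧ m ≤ 0 ∧ k ≤ 0) ∨
      (m < 0 ∧ 0 ≤ l ∧ 0 ≤ k ∨ 0 < m ∧ l ≤ 0 ∧ k ≤ 0) ∨
      (k < 0 ∧ 0 ≤ l ∧ 0 ≤ m ∨ 0 < k ∧ l ≤ 0 ∧ m ≤ 0) := by
    grind
  rcases key with h | h | h
  · exact Or.inl (solve _ _ _ _ _ _ hrel h)
  · exact Or.inr (Or.inl (solve _ _ _ _ _ _ r1 h))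
  · exact Or.inr (Or.inr (solve _ _ _ _ _ _ r2 h))

/-- The covering statement seen from the covered point, placed at the origin: `p`, `q`, `r` are
the vectors to the vertices and `z` the vector to the circumcenter; the common value `d` of
`‖p‖² - 2⟪z, p⟫` is the negated power of the point, and `d ≥ 0` says that it lies in the disk.
If `q` lay between `p` and `r`, it would lie beyond the chord `pr`, hence so would `z`;
but `z` projects onto `p` and `r` within their first halves. -/
lemma no_middle (p q r z : Pt) (d α β γ e f : ℝ) (hd : 0 ≤ d)
    (hp : inner ℝ p p - 2 * inner ℝ z p = d)
    (hq : inner ℝ q q - 2 * inner ℝ z q = d)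
    (hr : inner ℝ r r - 2 * inner ℝ z r = d)
    (hα : 0 ≤ α) (hβ : 0 ≤ β) (hγ : 0 ≤ γ) (hsum : α + β + γ = 1)
    (hz : z = α • p + β • q + γ • r)
    (hpr : 0 < inner ℝ p r) (hpq : 0 < inner ℝ p q)
    (he : 0 ≤ e) (hf : 0 ≤ f) (hmid : q = e • p + f • r) : False := by
  have hP : 0 < inner ℝ p p := real_inner_self_pos.2 (by rintro rfl; simp at hpr)
  have hR : 0 < inner ℝ r r := real_inner_self_pos.2 (by rintro rfl; simp at hpr)
  have hdiff : 0 ≤ inner ℝ (p - r) (p - r) := real_inner_self_nonneg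
  have hrp : inner ℝ r p = inner ℝ p r := real_inner_comm _ _
  have hz' : z = (α + β * e) • p + (γ + β * f) • r := by
    rw [hz, hmid]; module
  have zp : inner ℝ z p = (α + β * e) * inner ℝ p p + (γ + β * f) * inner ℝ p r := by
    rw [hz', inner_add_left, real_inner_smul_left, real_inner_smul_left, hrp]
  have zr : inner ℝ z r = (α + β * e) * inner ℝ p r + (γ + β * f) * inner ℝ r r := by
    rw [hz', inner_add_left, real_inner_smul_left, real_inner_smul_left]
  have zq : inner ℝ z q = e * inner ℝ z p + f * inner ℝ z r := by
    rw [hmid, inner_add_right, real_inner_smul_right, real_inner_smul_right]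
  have qq : inner ℝ q q = e ^ 2 * inner ℝ p p + 2 * (e * f) * inner ℝ p r
      + f ^ 2 * inner ℝ r r := by
    rw [hmid]
    simp only [inner_add_left, inner_add_right, real_inner_smul_left, real_inner_smul_right, hrp]
    ring
  have pq : inner ℝ p q = e * inner ℝ p p + f * inner ℝ p r := by
    rw [hmid, inner_add_right, real_inner_smul_right, real_inner_smul_right]
  have hd' : inner ℝ (p - r) (p - r) = inner ℝ p p - 2 * inner ℝ p r + inner ℝ r r := by
    simp only [inner_sub_left, inner_sub_right, hrp]; ring
  rw [hd'] at hdiff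
  rw [zq, qq] at hq
  rw [pq] at hpq
  generalize (inner ℝ p p : ℝ) = P at *
  generalize (inner ℝ r r : ℝ) = R at *
  generalize (inner ℝ p r : ℝ) = c at *
  generalize (inner ℝ z p : ℝ) = x at *
  generalize (inner ℝ z r : ℝ) = y at *
  have hbeyond : 1 ≤ e + f := by
    by_contra hlt
    push Not at hlt
    have h1 : (1 - (e + f)) * (d + (e * P + f * R)) = - (e * f * (P - 2 * c + R)) := by
      linear_combination e * hp + f * hr - hq
    have h2 : 0 ≤ e * f * (P - 2 * c + R) := by positivity
    have h3 : 0 < e * P + f * R := by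
      rcases he.eq_or_lt with h | h
      · rcases hf.eq_or_lt with h' | h'
        · rw [← h, ← h'] at hpq; simp at hpq
        · positivity
      · positivity
    have := mul_pos (sub_pos.2 hlt) (add_pos_of_nonneg_of_pos hd h3)
    linarith
  have hs : 0 ≤ α + β * e := by positivity
  have ht : 0 ≤ γ + β * f := by positivity
  have hst : 1 ≤ (α + β * e) + (γ + β * f) := by nlinarith
  generalize α + β * e = s at *
  generalize γ + β * f = t at *
  have k1 : 0 ≤ P * (1 - 2 * s) - 2 * t * c := by
    have : P * (1 - 2 * s) - 2 * t * c = d := by rw [← hp, zp]; ring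
    linarith
  have k2 : 0 ≤ R * (1 - 2 * t) - 2 * s * c := by
    have : R * (1 - 2 * t) - 2 * s * c = d := by rw [← hr, zr]; ring
    linarith
  have htc : 0 ≤ t * c := by positivity
  have hsc : 0 ≤ s * c := by positivity
  have hs2 : 0 ≤ 1 - 2 * s := nonneg_of_mul_nonneg_right (by linarith : 0 ≤ P * (1 - 2 * s)) hP
  have ht2 : 0 ≤ 1 - 2 * t := nonneg_of_mul_nonneg_right (by linarith : 0 ≤ R * (1 - 2 * t)) hR
  have s1 : s = 1 / 2 := by linarith
  have t1 : t = 1 / 2 := by linarith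
  subst s1 t1
  linarith

/-- If the center `o` of a disk lies in the convex hull of three points `a`, `b`, `c` of its
boundary, the three diametral disks of the triangle `abc` cover the disk. -/
lemma cover (a b c o x : Pt) (R α β γ : ℝ)
    (ha : dist a o = R) (hb : dist b o = R) (hc : dist c o = R) (hx : dist x o ≤ R)
    (hα : 0 ≤ α) (hβ : 0 ≤ β) (hγ : 0 ≤ γ) (hsum : α + β + γ = 1)
    (ho : o = α • a + β • b + γ • c) :
    inner ℝ (a - x) (b - x) ≤ 0 ∨ inner ℝ (b - x) (c - x) ≤ 0 ∨ inner ℝ (a - x) (c - x) ≤ 0 := by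
  by_contra! h
  obtain ⟨h1, h2, h3⟩ := h
  have hz : o - x = α • (a - x) + β • (b - x) + γ • (c - x) := by
    have : x = (α + β + γ) • x := by rw [hsum, one_smul]
    rw [ho]
    nth_rewrite 1 [this]
    module
  have pow : ∀ u : Pt, dist u o = R →
      inner ℝ (u - x) (u - x) - 2 * inner ℝ (o - x) (u - x) = R ^ 2 - (dist x o) ^ 2 := by
    intro u hu
    have e1 : u - o = (u - x) - (o - x) := by abel
    have := norm_sub_sq_real (u - x) (o - x)
    rw [← e1, ← dist_eq_norm u o, hu, ← dist_eq_norm o x, dist_comm o x] at this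
    rw [real_inner_self_eq_norm_sq, real_inner_comm]
    linarith
  have hd : 0 ≤ R ^ 2 - (dist x o) ^ 2 := by
    have := pow_le_pow_left₀ dist_nonneg hx 2
    linarith
  have pa := pow a ha
  have pb := pow b hb
  have pc := pow c hc
  have h1' : 0 < inner ℝ (b - x) (a - x) := by rwa [real_inner_comm]
  have h3' : 0 < inner ℝ (c - x) (a - x) := by rwa [real_inner_comm]
  rcases exists_middle _ _ _ h1 h3 with ⟨e, f, he, hf, hm⟩ | ⟨e, f, he, hf, hm⟩ |
    ⟨e, f, he, hf, hm⟩
  · exact no_middle _ _ _ _ _ β α γ e f hd pb pa pc hβ hα hγ (by linarith)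
      (by rw [hz]; abel) h2 h1' he hf hm
  · exact no_middle _ _ _ _ _ α β γ e f hd pa pb pc hα hβ hγ (by linarith)
      hz h3 h1 he hf hm
  · exact no_middle _ _ _ _ _ α γ β e f hd pa pc pb hα hγ hβ (by linarith)
      (by rw [hz]; abel) h1 h3 he hf hm

/-- Smallest enclosing disk: its center is a convex combination of the points of `S` on the
boundary. The weights are found by maximizing the variance `∑ wₛ‖s‖² - ‖∑ wₛ s‖²` over the
standard simplex. -/
lemma enclosing (S : Finset Pt) (hS : S.Nonempty) :
    ∃ (o : Pt) (R : ℝ), (∀ x ∈ S, dist x o ≤ R) ∧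
      o ∈ convexHull ℝ {x : Pt | x ∈ S ∧ dist x o = R} := by
  classical
  have : Nonempty S := hS.to_subtype
  let V : (S → ℝ) → ℝ := fun w => ∑ s, w s * ‖(s : Pt)‖ ^ 2 - ‖∑ s, w s • (s : Pt)‖ ^ 2
  have hV : Continuous V := by fun_prop
  obtain ⟨w, hw, hmax⟩ := (isCompact_stdSimplex ℝ S).exists_isMaxOn
    ⟨_, single_mem_stdSimplex ℝ (Classical.arbitrary S)⟩ hV.continuousOn
  obtain ⟨hw0, hw1⟩ := hw
  set o : Pt := ∑ s, w s • (s : Pt) with ho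
  -- Steiner's formula: second moments about `o` and about `∑ vₛ s`.
  have steiner : ∀ v : S → ℝ, ∑ s, v s = 1 →
      V v = ∑ s, v s * dist (s : Pt) o ^ 2 - ‖(∑ s, v s • (s : Pt)) - o‖ ^ 2 := by
    intro v hv
    have h1 : ∑ s, v s * dist (s : Pt) o ^ 2 =
        ∑ s, v s * ‖(s : Pt)‖ ^ 2 - 2 * inner ℝ (∑ s, v s • (s : Pt)) o + ‖o‖ ^ 2 := by
      rw [sum_inner, Finset.mul_sum, ← Finset.sum_sub_distrib]
      conv_rhs => rw [← one_mul (‖o‖ ^ 2), ← hv, Finset.sum_mul, ← Finset.sum_add_distrib]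
      refine Finset.sum_congr rfl fun s _ => ?_
      rw [dist_eq_norm, norm_sub_sq_real, real_inner_smul_left]
      ring
    rw [h1, norm_sub_sq_real]
    simp only [V]
    ring
  have hVw : V w = ∑ s, w s * dist (s : Pt) o ^ 2 := by
    rw [steiner w hw1, ← ho]; simp
  have hV0 : 0 ≤ V w := by
    rw [hVw]
    exact Finset.sum_nonneg fun s _ => mul_nonneg (hw0 s) (sq_nonneg _)
  have hle : ∀ s : S, dist (s : Pt) o ^ 2 ≤ V w := by
    intro s
    -- Moving a mass `t` to `s` does not increase the variance.
    have step : ∀ t : ℝ, 0 < t → t ≤ 1 → (1 - t) * dist (s : Pt) o ^ 2 ≤ V w := by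
      intro t ht0 ht1
      let v : S → ℝ := (1 - t) • w + t • Pi.single s 1
      have hvmem : v ∈ stdSimplex ℝ S :=
        (convex_stdSimplex ℝ S) ⟨hw0, hw1⟩ (single_mem_stdSimplex ℝ s)
          (by linarith) ht0.le (by ring)
      have hvV : V v ≤ V w := hmax hvmem
      have hvs : ∀ s', v s' = (1 - t) * w s' + t * (Pi.single s 1 : S → ℝ) s' := fun s' => rfl
      have c1 : ∑ s', v s' • (s' : Pt) - o = t • ((s : Pt) - o) := by
        have : ∑ s', v s' • (s' : Pt) = (1 - t) • o + t • (s : Pt) := by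
          simp only [hvs, add_smul, mul_smul, Finset.sum_add_distrib, ← Finset.smul_sum, ← ho]
          congr 2
          simp [Pi.single_apply, ite_smul]
        rw [this]; module
      have c2 : ∑ s', v s' * dist (s' : Pt) o ^ 2 = (1 - t) * V w + t * dist (s : Pt) o ^ 2 := by
        simp only [hvs, add_mul, mul_assoc, Finset.sum_add_distrib, ← Finset.mul_sum, ← hVw]
        congr 2
        simp [Pi.single_apply, ite_mul]
      rw [steiner v hvmem.2, c1, c2, norm_smul, ← dist_eq_norm, mul_pow, Real.norm_eq_abs,
        sq_abs] at hvV
      have : t * ((1 - t) * dist (s : Pt) o ^ 2) ≤ t * V w := by nlinarith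
      exact le_of_mul_le_mul_left this ht0
    by_contra! hlt
    have hD : 0 < dist (s : Pt) o ^ 2 := lt_of_le_of_lt hV0 hlt
    have := step ((dist (s : Pt) o ^ 2 - V w) / (2 * dist (s : Pt) o ^ 2))
      (by apply div_pos <;> linarith) (by rw [div_le_one (by linarith)]; linarith)
    have e : (1 - (dist (s : Pt) o ^ 2 - V w) / (2 * dist (s : Pt) o ^ 2)) * dist (s : Pt) o ^ 2
        = (dist (s : Pt) o ^ 2 + V w) / 2 := by
      have := hD.ne'
      generalize dist (s : Pt) o ^ 2 = y at *
      field_simp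
      ring
    rw [e] at this
    linarith
  have hsupp : ∀ s : S, w s ≠ 0 → dist (s : Pt) o ^ 2 = V w := by
    have hz : ∑ s, w s * (V w - dist (s : Pt) o ^ 2) = 0 := by
      simp only [mul_sub, Finset.sum_sub_distrib, ← Finset.sum_mul, hw1, ← hVw]
      ring
    rw [Finset.sum_eq_zero_iff_of_nonneg
      (fun s _ => mul_nonneg (hw0 s) (sub_nonneg.2 (hle s)))] at hz
    intro s hs
    rcases mul_eq_zero.1 (hz s (Finset.mem_univ _)) with h | h
    · exact absurd h hs
    · linarith
  refine ⟨o, √(V w), fun x hx => Real.le_sqrt_of_sq_le (hle ⟨x, hx⟩), ?_⟩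
  have hmem : ∑ s ∈ Finset.univ.filter (fun s => w s ≠ 0), w s • (s : Pt) ∈
      convexHull ℝ {x : Pt | x ∈ S ∧ dist x o = √(V w)} := by
    refine (convex_convexHull ℝ _).sum_mem (fun s _ => hw0 s) ?_ ?_
    · rw [Finset.sum_filter_ne_zero, hw1]
    · intro s hs
      refine subset_convexHull ℝ _ ⟨s.2, ?_⟩
      rw [← hsupp s (Finset.mem_filter.1 hs).2, Real.sqrt_sq dist_nonneg]
  convert hmem using 1
  rw [ho, Finset.sum_filter]
  refine Finset.sum_congr rfl fun s _ => ?_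
  by_cases h : w s = 0 <;> simp [h]

/-- Each of `a`, `b`, `c` lies in two of the three covering sets: `b` is counted in `A ∩ B`, while `a` and `c` are counted in `(A ∪ B) ∩ C`. -/
lemma count (S A B C : Finset Pt) (a b c : Pt) (hac : a ≠ c) (hS : S ⊆ A ∪ B ∪ C)
    (aA : a ∈ A) (bA : b ∈ A) (bB : b ∈ B) (cB : c ∈ B) (aC : a ∈ C) (cC : c ∈ C) :
    S.card + 3 ≤ A.card + B.card + C.card := by
  classical
  have h1 : S.card ≤ (A ∪ B ∪ C).card := Finset.card_le_card hS
  have h2 := Finset.card_union_add_card_inter A B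
  have h3 := Finset.card_union_add_card_inter (A ∪ B) C
  have h4 : 1 ≤ (A ∩ B).card := Finset.card_pos.2 ⟨b, by simp [bA, bB]⟩
  have h5 : 2 ≤ ((A ∪ B) ∩ C).card := by
    have h6 : ({a, c} : Finset Pt) ⊆ (A ∪ B) ∩ C := by
      intro x
      simp only [Finset.mem_insert, Finset.mem_singleton]
      rintro (rfl | rfl) <;> simp [*]
    exact (Finset.card_pair hac).symm.le.trans (Finset.card_le_card h6)
  omega

/-- If the center of a disk lies on a segment between two points of its boundary, that segment
is a diameter. -/
lemma two_cover (a b o x : Pt) (R α β : ℝ) (hab : a ≠ b)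
    (ha : dist a o = R) (hb : dist b o = R) (hx : dist x o ≤ R)
    (hsum : α + β = 1) (ho : o = α • a + β • b) :
    x ∈ closedBall (midpoint ℝ a b) (dist a b / 2) := by
  have hβ : β = 1 - α := by linarith
  subst hβ
  have e1 : a - o = (1 - α) • (a - b) := by rw [ho]; module
  have e2 : b - o = (-α) • (a - b) := by rw [ho]; module
  have hpos : 0 < ‖a - b‖ := norm_pos_iff.2 (sub_ne_zero.2 hab)
  have hαeq : α = 1 / 2 := by
    have : |1 - α| = |-α| := by
      rw [dist_eq_norm, e1, norm_smul, Real.norm_eq_abs] at ha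
      rw [dist_eq_norm, e2, norm_smul, Real.norm_eq_abs] at hb
      exact mul_right_cancel₀ hpos.ne' (ha.trans hb.symm)
    rcases abs_eq_abs.1 this with h | h <;> linarith
  subst hαeq
  have hm : o = midpoint ℝ a b := by
    rw [ho, midpoint_eq_smul_add, invOf_eq_inv]; module
  have hR : R = dist a b / 2 := by
    rw [← ha, dist_eq_norm a o, e1, norm_smul, dist_eq_norm]; norm_num; ring
  rw [mem_closedBall, ← hm, ← hR]
  exact hx

/-- For every `n ≥ 3` and every set `S` of `n` points in the plane in general position,
there exist two distinct points `u, v ∈ S` such that the closed disk having the segment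
`uv` as diameter contains at least `⌈n/3⌉ + 1` points of `S`. -/
theorem pi_diametral_lower_bound_n_over_3 (n : ℕ) (hn : 3 ≤ n) (S : Set Pt)
    (hfin : S.Finite) (hcard : S.ncard = n) (hgp : GenPos S) :
    ∃ u ∈ S, ∃ v ∈ S, u ≠ v ∧
      ⌈(n : ℝ) / 3⌉ + 1 ≤
        ((S ∩ closedBall (midpoint ℝ u v) (dist u v / 2)).ncard : ℤ) := by
  classical
  obtain ⟨F, rfl⟩ := hfin.exists_finset_coe
  rw [Set.ncard_coe_finset] at hcard
  let D : Pt → Pt → Finset Pt :=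
    fun u v => F.filter (fun x => x ∈ closedBall (midpoint ℝ u v) (dist u v / 2))
  have hD : ∀ u v, ((F : Set Pt) ∩ closedBall (midpoint ℝ u v) (dist u v / 2)).ncard
      = (D u v).card := by
    intro u v
    rw [← Set.ncard_coe_finset]
    congr 1
    ext x
    simp [D]
  have hDmem : ∀ u v x, x ∈ D u v ↔ x ∈ F ∧ inner ℝ (u - x) (v - x) ≤ 0 := by
    intro u v x
    rw [← mem_diametral_iff]
    simp [D]
  -- Integer form of the bound.
  suffices h : ∃ u ∈ F, ∃ v ∈ F, u ≠ v ∧ n + 3 ≤ 3 * (D u v).card by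
    obtain ⟨u, hu, v, hv, huv, hc⟩ := h
    refine ⟨u, hu, v, hv, huv, ?_⟩
    rw [hD]
    have : ⌈(n : ℝ) / 3⌉ ≤ ((D u v).card : ℤ) - 1 := by
      rw [Int.ceil_le]
      have hc' : (n : ℝ) + 3 ≤ 3 * ((D u v).card : ℝ) := by exact_mod_cast hc
      push_cast
      linarith
    linarith
  obtain ⟨o, R, hball, hhull⟩ := enclosing F (Finset.card_pos.1 (by omega))
  rw [convexHull_eq_union] at hhull
  simp only [Set.mem_iUnion] at hhull
  obtain ⟨t, hts, hind, hot⟩ := hhull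
  have ht3 : t.card ≤ 3 := by
    have := hind.card_le_finrank_succ
    have h2 := Submodule.finrank_le (vectorSpan ℝ (Set.range ((↑) : t → Pt)))
    simp at this h2
    omega
  have htne : t.Nonempty := by
    rw [Finset.nonempty_iff_ne_empty]
    rintro rfl
    simp at hot
  obtain ⟨w, hw0, hw1, hwo⟩ := Finset.mem_convexHull'.1 hot
  have htpos := Finset.card_pos.2 htne
  have hcases : t.card = 1 ∨ t.card = 2 ∨ t.card = 3 := by omega
  rcases hcases with h | h | h
  · -- A single boundary point forces radius zero, so that `F` is a singleton.
    obtain ⟨a, rfl⟩ := Finset.card_eq_one.1 h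
    exfalso
    have ha := hts (Finset.mem_coe.2 (Finset.mem_singleton_self a))
    have hoa : o = a := by simpa using hot
    have hR : R = 0 := by rw [← ha.2, hoa, dist_self]
    have : F ⊆ {o} := fun x hx => by
      have := hball x hx
      rw [hR] at this
      simpa using this
    have := Finset.card_le_card this
    simp at this
    omega
  · obtain ⟨a, b, hab, rfl⟩ := Finset.card_eq_two.1 h
    obtain ⟨haF, haR⟩ := hts (show a ∈ (({a, b} : Finset Pt) : Set Pt) by simp)
    obtain ⟨hbF, hbR⟩ := hts (show b ∈ (({a, b} : Finset Pt) : Set Pt) by simp)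
    rw [Finset.sum_pair hab] at hw1 hwo
    refine ⟨a, haF, b, hbF, hab, ?_⟩
    have : D a b = F := Finset.filter_true_of_mem fun x hx =>
      two_cover a b o x R _ _ hab haR hbR (hball x hx) hw1 hwo.symm
    rw [this]
    omega
  · obtain ⟨a, b, c, hab, hac, hbc, rfl⟩ := Finset.card_eq_three.1 h
    obtain ⟨haF, haR⟩ := hts (show a ∈ (({a, b, c} : Finset Pt) : Set Pt) by simp)
    obtain ⟨hbF, hbR⟩ := hts (show b ∈ (({a, b, c} : Finset Pt) : Set Pt) by simp)
    obtain ⟨hcF, hcR⟩ := hts (show c ∈ (({a, b, c} : Finset Pt) : Set Pt) by simp)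
    have hs : ∀ {M : Type} [AddCommMonoid M] (g : Pt → M),
        ∑ y ∈ ({a, b, c} : Finset Pt), g y = g a + g b + g c := by
      intro M _ g
      rw [Finset.sum_insert (by simp [hab, hac]), Finset.sum_pair hbc, add_assoc]
    rw [hs] at hw1 hwo
    have hcount := count F (D a b) (D b c) (D a c) a b c hac
      (fun x hx => by
        have := cover a b c o x R _ _ _ haR hbR hcR (hball x hx)
          (hw0 a (by simp)) (hw0 b (by simp)) (hw0 c (by simp)) hw1 hwo.symm
        simp only [Finset.mem_union, hDmem]
        tauto)
      (by simp [hDmem, haF]) (by simp [hDmem, hbF]) (by simp [hDmem, hbF])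
      (by simp [hDmem, hcF]) (by simp [hDmem, haF]) (by simp [hDmem, hcF])
    have hbig : n + 3 ≤ 3 * (D a b).card ∨ n + 3 ≤ 3 * (D b c).card ∨
        n + 3 ≤ 3 * (D a c).card := by omega
    rcases hbig with h | h | h
    · exact ⟨a, haF, b, hbF, hab, h⟩
    · exact ⟨b, hbF, c, hcF, hbc, h⟩
    · exact ⟨a, haF, c, hcF, hac, h⟩
end
end

section
/- Let u, v, p, q be four distinct points in the Euclidean plane such that the set {u,v,p,q} is in general position and the open segment from u to v intersects the open segment from p to q. Then either every closed disk having both p and q on its boundary contains u or contains v, or every closed disk having both u and v on its boundary contains p or contains q. -/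
/-!
The intersection point `x = a u + b v = s p + t q` has power `-s t |p - q|²` with respect to every
circle through `p` and `q`, and power `-a b |u - v|²` with respect to every circle through `u`
and `v`. If a disk with `p, q` on its boundary misses both `u` and `v`, then Stewart's identity
(`stewart`) shows that the power of `x` exceeds `-a b |u - v|²`, so
`s t |p - q|² < a b |u - v|²` (`chord_product_lt`). Failure of both alternatives would
give this inequality and its reverse.
-/

open EuclideanGeometry Metric

noncomputable section

/-- Stewart's identity for the point `a u + b v` dividing a segment, measured from `c`. -/
lemma stewart (u v c : Pt) {a b : ℝ} (hab : a + b = 1) :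
    dist (a • u + b • v) c ^ 2 =
      a * dist u c ^ 2 + b * dist v c ^ 2 - a * b * dist u v ^ 2 := by
  obtain rfl : b = 1 - a := by linarith
  simp only [EuclideanSpace.dist_eq, Fin.sum_univ_two, PiLp.add_apply, PiLp.smul_apply,
    smul_eq_mul, Real.dist_eq, sq_abs]
  repeat rw [Real.sq_sqrt (by positivity)]
  ring

/-- If a disk with `p` and `q` on its boundary contains neither `u` nor `v`, then the product of
the two parts into which the common point divides `pq` is less than that for `uv`. -/
lemma chord_product_lt (u v p q c : Pt) {a b s t r : ℝ} (ha : 0 < a) (hb : 0 < b)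
    (hab : a + b = 1) (hst : s + t = 1) (hx : a • u + b • v = s • p + t • q)
    (hr : 0 < r) (hp : dist p c = r) (hq : dist q c = r)
    (hu : r < dist u c) (hv : r < dist v c) :
    s * t * dist p q ^ 2 < a * b * dist u v ^ 2 := by
  have h1 := stewart u v c hab
  have h2 := stewart p q c hst
  rw [hx, h2, hp, hq] at h1
  have hu2 : r ^ 2 < dist u c ^ 2 := by gcongr
  have hv2 : r ^ 2 < dist v c ^ 2 := by gcongr
  have hsr : s * r ^ 2 + t * r ^ 2 = r ^ 2 := by rw [← add_mul, hst, one_mul]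
  have har : a * r ^ 2 + b * r ^ 2 = r ^ 2 := by rw [← add_mul, hab, one_mul]
  have := mul_lt_mul_of_pos_left hu2 ha
  have := mul_lt_mul_of_pos_left hv2 hb
  linarith

/-- Let `u, v, p, q` be four distinct points of the plane in general position such that
the open segment `uv` intersects the open segment `pq`. Then either every closed disk
having both `p` and `q` on its boundary contains `u` or `v`, or every closed disk having
both `u` and `v` on its boundary contains `p` or `q`. -/
theorem intersecting_segments_disk_containment (u v p q : Pt)
    (huv : u ≠ v) (hup : u ≠ p) (huq : u ≠ q) (hvp : v ≠ p) (hvq : v ≠ q) (hpq : p ≠ q)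
    (hgp : GenPos {u, v, p, q})
    (hint : (openSegment ℝ u v ∩ openSegment ℝ p q).Nonempty) :
    (∀ (c : Pt) (r : ℝ), 0 < r → dist p c = r → dist q c = r →
        u ∈ closedBall c r ∨ v ∈ closedBall c r) ∨
    (∀ (c : Pt) (r : ℝ), 0 < r → dist u c = r → dist v c = r →
        p ∈ closedBall c r ∨ q ∈ closedBall c r) := by
  obtain ⟨x, ⟨a, b, ha, hb, hab, hx⟩, ⟨s, t, hs, ht, hst, hy⟩⟩ := hint
  by_contra! h
  obtain ⟨⟨c, r, hr, hp, hq, hu, hv⟩, ⟨c', r', hr', hu', hv', hp', hq'⟩⟩ := h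
  simp only [mem_closedBall, not_le] at hu hv hp' hq'
  have h1 := chord_product_lt u v p q c ha hb hab hst (hx.trans hy.symm) hr hp hq hu hv
  have h2 := chord_product_lt p q u v c' hs ht hst hab (hy.trans hx.symm) hr' hu' hv' hp' hq'
  exact lt_asymm h1 h2
end
end

section
/- Let u, v, p, q be four distinct points in the Euclidean plane such that the set {u,v,p,q} is in general position and the open segment from u to v intersects the open segment from p to q. Then either for every closed disk D having both p and q on its boundary at least one of u, v lies outside D, or for every closed disk D' having both u and v on its boundary at least one of p, q lies outside D'. -/
/-!
Suppose the claim fails: some disk `D(c, r)` has `p, q` on its boundary and contains `u, v`, and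
some disk `D(c', r')` has `u, v` on its boundary and contains `p, q`. The difference
`y ↦ dist y c ^ 2 - dist y c' ^ 2 - (r ^ 2 - r' ^ 2)` of the powers of `y` with respect to the two
circles is affine (`sq_dist_sub_sq_dist_combo`), nonpositive at `u, v` and nonnegative at `p, q`.
At the common point of the open segments it is therefore zero, and since that point is a convex
combination of `u, v` with positive weights, it vanishes at `u` and `v`. Hence `u, v` also lie on the circle of
`D(c, r)`, so the four points are concyclic, contrary to general position.
-/

open EuclideanGeometry Metric

noncomputable section

/-- The quadratic parts of two squared distances cancel, so their difference is affine. -/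
lemma sq_dist_sub_sq_dist_combo (x y c c' : Pt) (a b : ℝ) (hab : a + b = 1) :
    dist (a • x + b • y) c ^ 2 - dist (a • x + b • y) c' ^ 2 =
      a * (dist x c ^ 2 - dist x c' ^ 2) + b * (dist y c ^ 2 - dist y c' ^ 2) := by
  obtain rfl : b = 1 - a := by linarith
  simp only [dist_eq_norm, norm_sub_sq_real, inner_add_left, real_inner_smul_left]
  ring

/-- Let `u, v, p, q` be four distinct points of the plane in general position such that
the open segment `uv` intersects the open segment `pq`. Then either every closed disk
having both `p` and `q` on its boundary leaves `u` or `v` strictly outside, or every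
closed disk having both `u` and `v` on its boundary leaves `p` or `q` strictly
outside. -/
theorem intersecting_segments_disk_exclusion (u v p q : Pt)
    (huv : u ≠ v) (hup : u ≠ p) (huq : u ≠ q) (hvp : v ≠ p) (hvq : v ≠ q) (hpq : p ≠ q)
    (hgp : GenPos {u, v, p, q})
    (hint : (openSegment ℝ u v ∩ openSegment ℝ p q).Nonempty) :
    (∀ (c : Pt) (r : ℝ), 0 < r → dist p c = r → dist q c = r →
        r < dist u c ∨ r < dist v c) ∨
    (∀ (c : Pt) (r : ℝ), 0 < r → dist u c = r → dist v c = r →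
        r < dist p c ∨ r < dist q c) := by
  by_contra! hcon
  obtain ⟨⟨c, r, hr, hpc, hqc, huc, hvc⟩, ⟨c', r', hr', huc', hvc', hpc', hqc'⟩⟩ := hcon
  obtain ⟨x, ⟨a, b, ha, hb, hab, hx⟩, ⟨s, t, hs, ht, hst, hx'⟩⟩ := hint
  have key := sq_dist_sub_sq_dist_combo u v c c' a b hab
  rw [hx, ← hx', sq_dist_sub_sq_dist_combo p q c c' s t hst] at key
  rw [hpc, hqc, huc', hvc'] at key
  have hp2 : dist p c' ^ 2 ≤ r' ^ 2 := pow_le_pow_left₀ dist_nonneg hpc' 2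
  have hq2 : dist q c' ^ 2 ≤ r' ^ 2 := pow_le_pow_left₀ dist_nonneg hqc' 2
  have hu2 : dist u c ^ 2 ≤ r ^ 2 := pow_le_pow_left₀ dist_nonneg huc 2
  have hv2 : dist v c ^ 2 ≤ r ^ 2 := pow_le_pow_left₀ dist_nonneg hvc 2
  -- The weighted deficits of all four points are nonnegative and sum to zero.
  have hsum : a * (r ^ 2 - dist u c ^ 2) + b * (r ^ 2 - dist v c ^ 2)
      + s * (r' ^ 2 - dist p c' ^ 2) + t * (r' ^ 2 - dist q c' ^ 2) = 0 := by
    linear_combination (r ^ 2 - r' ^ 2) * (hab - hst) + key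
  have h1 := mul_nonneg ha.le (sub_nonneg.2 hu2)
  have h2 := mul_nonneg hb.le (sub_nonneg.2 hv2)
  have h3 := mul_nonneg hs.le (sub_nonneg.2 hp2)
  have h4 := mul_nonneg ht.le (sub_nonneg.2 hq2)
  have hu0 : r ^ 2 - dist u c ^ 2 = 0 :=
    (mul_eq_zero.1 (by linarith : a * (r ^ 2 - dist u c ^ 2) = 0)).resolve_left ha.ne'
  have hv0 : r ^ 2 - dist v c ^ 2 = 0 :=
    (mul_eq_zero.1 (by linarith : b * (r ^ 2 - dist v c ^ 2) = 0)).resolve_left hb.ne'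
  have hu : dist u c = r := (sq_eq_sq₀ dist_nonneg hr.le).1 (by linarith)
  have hv : dist v c = r := (sq_eq_sq₀ dist_nonneg hr.le).1 (by linarith)
  refine hgp.2 _ subset_rfl ?_ ⟨c, r, ?_⟩
  · rw [Set.ncard_eq_toFinset_card']
    simp [huv, hup, huq, hvp, hvq, hpq]
  · rintro y (rfl | rfl | rfl | rfl) <;> assumption
end
end

section
/- For every even integer n ≥ 6 and every set S of n points in the Euclidean plane in general position that is partitioned into a set R of n/2 red points and a set B of n/2 blue points, there exist a red point u ∈ R and a blue point v ∈ B such that every closed disk containing both u and v contains at least ⌈(n−2)/72⌉ points of S. -/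
/-!
The bound comes from double counting over the drawings of `K₃,₃` spanned by three red and three
blue points.

*Geometry.* Among three non-collinear red points `a` and three blue points `b` there are two
vertex-disjoint red–blue edges whose segments meet (`exists_not_separated`). To see this, take
barycentric coordinates with respect to `a` and consider the median of the three coordinates, a
continuous odd function. Two of the blue points, `b k` and `b l`, have medians of the same weak
sign, so the median vanishes at some `(1 - t) b k - t b l`; a vector with vanishing median has the
form `α a i - β a j` with `α, β ≥ 0`, and `(1 - t) b k + β a j = t b l + α a i` is, after
normalisation, a common point of the edges `a j — b k` and `a i — b l`.
If two edges meet, then for one of them every disk containing it also contains an endpoint of the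
other (`exists_hits`): otherwise the difference of the power functions of two offending disks is
an affine function that is negative on one edge and positive on the other.

*Counting.* With `m` points of each colour, each pair of triples supplies such a pair of edges,
and a pair of edges is supplied by few pairs of triples; hence some edge `u v` hits at least
`(m - 1)² / 36` edges disjoint from it (`exists_many_related`). A disk containing `u`, `v` and
`k` points in total meets at most `k (m - 1)` of these, so `k ≥ (m - 1) / 36 = (n - 2) / 72`.
-/

open EuclideanGeometry Metric

noncomputable section

/-! ### Medians -/

/-- The middle one of three real numbers. -/
def med (v : Fin 3 → ℝ) : ℝ := max (min (v 0) (v 1)) (min (max (v 0) (v 1)) (v 2))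

lemma continuous_med : Continuous med := by
  unfold med; fun_prop

lemma med_neg (v : Fin 3 → ℝ) : med (-v) = -med v := by
  simp only [med, Pi.neg_apply]
  grind

/-- A vector with vanishing median has one entry `α ≥ 0`, one entry `-β ≤ 0`, and a zero;
this is stated through its pairing with arbitrary vectors `f`. -/
lemma exists_of_med_eq_zero (v : Fin 3 → ℝ) (hv : med v = 0) :
    ∃ i j : Fin 3, i ≠ j ∧ ∃ α β : ℝ, 0 ≤ α ∧ 0 ≤ β ∧
      ∀ f : Fin 3 → ℝ, ∑ m, v m * f m = α * f i - β * f j := by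
  have key : ∀ i j k : Fin 3, i ≠ j → i ≠ k → j ≠ k → 0 ≤ v i → v j ≤ 0 → v k = 0 →
      ∃ i j : Fin 3, i ≠ j ∧ ∃ α β : ℝ, 0 ≤ α ∧ 0 ≤ β ∧
        ∀ f : Fin 3 → ℝ, ∑ m, v m * f m = α * f i - β * f j := by
    intro i j k hij hik hjk hi hj hk
    refine ⟨i, j, hij, v i, -v j, hi, by linarith, fun f => ?_⟩
    have hu : (Finset.univ : Finset (Fin 3)) = {i, j, k} := by
      clear hi hj hk; revert i j k; decide
    rw [hu, Finset.sum_insert (by simp [hij, hik]), Finset.sum_pair hjk, hk]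
    ring
  have h01 : (0 : Fin 3) ≠ 1 := by decide
  have h02 : (0 : Fin 3) ≠ 2 := by decide
  have h12 : (1 : Fin 3) ≠ 2 := by decide
  have hcases : (0 ≤ v 0 ∧ v 1 ≤ 0 ∧ v 2 = 0) ∨ (0 ≤ v 1 ∧ v 0 ≤ 0 ∧ v 2 = 0) ∨
      (0 ≤ v 0 ∧ v 2 ≤ 0 ∧ v 1 = 0) ∨ (0 ≤ v 2 ∧ v 0 ≤ 0 ∧ v 1 = 0) ∨
      (0 ≤ v 1 ∧ v 2 ≤ 0 ∧ v 0 = 0) ∨ (0 ≤ v 2 ∧ v 1 ≤ 0 ∧ v 0 = 0) := by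
    unfold med at hv
    grind
  rcases hcases with ⟨hpos, hneg, hzero⟩ | ⟨hpos, hneg, hzero⟩ | ⟨hpos, hneg, hzero⟩ |
    ⟨hpos, hneg, hzero⟩ | ⟨hpos, hneg, hzero⟩ | ⟨hpos, hneg, hzero⟩
  · exact key 0 1 2 h01 h02 h12 hpos hneg hzero
  · exact key 1 0 2 h01.symm h12 h02 hpos hneg hzero
  · exact key 0 2 1 h02 h01 h12.symm hpos hneg hzero
  · exact key 2 0 1 h02.symm h12.symm h01 hpos hneg hzero
  · exact key 1 2 0 h12 h01.symm h02.symm hpos hneg hzero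
  · exact key 2 1 0 h12.symm h02.symm h01.symm hpos hneg hzero

/-- If the medians of `p` and `q` have the same weak sign, then those of `p` and `-q` have
opposite signs, so the median vanishes somewhere on the segment from `p` to `-q`. -/
lemma exists_med_segment_eq_zero (p q : Fin 3 → ℝ)
    (h : (0 ≤ med p ∧ 0 ≤ med q) ∨ (med p ≤ 0 ∧ med q ≤ 0)) :
    ∃ t : ℝ, 0 ≤ t ∧ t ≤ 1 ∧ med (fun m => (1 - t) * p m - t * q m) = 0 := by
  let g : ℝ → ℝ := fun t => med (fun m => (1 - t) * p m - t * q m)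
  have hg : Continuous g := continuous_med.comp (by fun_prop)
  have h0 : g 0 = med p := by simp [g]
  have h1 : g 1 = -med q := by
    rw [← med_neg]; simp only [g]; congr 1; ext m; simp
  have hmem : (0 : ℝ) ∈ Set.uIcc (g 0) (g 1) := by
    rw [h0, h1, Set.mem_uIcc]
    rcases h with ⟨hp, hq⟩ | ⟨hp, hq⟩
    · right; constructor <;> linarith
    · left; constructor <;> linarith
  obtain ⟨t, ht, hgt⟩ := intermediate_value_uIcc (hg.continuousOn (s := Set.uIcc 0 1)) hmem
  rw [Set.uIcc_of_le zero_le_one] at ht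
  exact ⟨t, ht.1, ht.2, hgt⟩

/-! ### Crossing edges and disks -/

/-- The straight-line drawing of `K₃,₃` on three non-collinear points `a` and three points `b` has
two vertex-disjoint edges `a j — b k` and `a i — b l` that meet; hence no function of the form
`x ↦ ⟪w, x⟫ + d` separates them strictly. -/
lemma exists_not_separated (a b : Fin 3 → Pt) (ha : AffineIndependent ℝ a) :
    ∃ i j k l : Fin 3, i ≠ j ∧ k ≠ l ∧ ∀ (w : Pt) (d : ℝ),
      ¬ (inner ℝ w (a j) + d < 0 ∧ inner ℝ w (b k) + d < 0 ∧
        0 < inner ℝ w (a i) + d ∧ 0 < inner ℝ w (b l) + d) := by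
  let A : AffineBasis (Fin 3) ℝ Pt :=
    ⟨a, ha, by
      rw [ha.affineSpan_eq_top_iff_card_eq_finrank_add_one]; simp⟩
  let p : Fin 3 → Fin 3 → ℝ := fun k m => A.coord m (b k)
  -- Two of the three medians have the same weak sign.
  obtain ⟨k, l, hkl, hs⟩ : ∃ k l : Fin 3, k ≠ l ∧
      ((0 ≤ med (p k) ∧ 0 ≤ med (p l)) ∨ (med (p k) ≤ 0 ∧ med (p l) ≤ 0)) := by
    have h01 : (0 : Fin 3) ≠ 1 := by decide
    have h02 : (0 : Fin 3) ≠ 2 := by decide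
    have h12 : (1 : Fin 3) ≠ 2 := by decide
    rcases le_total 0 (med (p 0)) with h0 | h0 <;> rcases le_total 0 (med (p 1)) with h1 | h1 <;>
      rcases le_total 0 (med (p 2)) with h2 | h2
    all_goals first
      | exact ⟨0, 1, h01, by tauto⟩
      | exact ⟨0, 2, h02, by tauto⟩
      | exact ⟨1, 2, h12, by tauto⟩
  obtain ⟨t, ht0, ht1, hmed⟩ := exists_med_segment_eq_zero _ _ hs
  obtain ⟨i, j, hij, α, β, hα, hβ, hsum⟩ := exists_of_med_eq_zero _ hmed
  refine ⟨i, j, k, l, hij, hkl, fun w d => ?_⟩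
  rintro ⟨h1, h2, h3, h4⟩
  -- An affine function at `x` is the barycentric average of its values at the points `a`.
  have hbary : ∀ x : Pt, inner ℝ w x + d = ∑ m, A.coord m x * (inner ℝ w (a m) + d) := by
    intro x
    have hx : ∑ m, A.coord m x • a m = x := A.linear_combination_coord_eq_self x
    have hone : ∑ m, A.coord m x = 1 := A.sum_coord_apply_eq_one x
    simp only [mul_add, Finset.sum_add_distrib, ← Finset.sum_mul, hone, one_mul]
    conv_lhs => rw [← hx, inner_sum]
    simp [inner_smul_right]
  have hH := hsum (fun m => inner ℝ w (a m) + d)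
  have hM := hsum (fun _ => 1)
  simp only [p, sub_mul, Finset.sum_sub_distrib, mul_assoc, ← Finset.mul_sum] at hH hM
  rw [← hbary, ← hbary] at hH
  simp only [mul_one, A.sum_coord_apply_eq_one] at hM
  -- `hH` equates two averages, one nonpositive and one nonnegative; the total mass is positive.
  have e1 : (1 - t) * (inner ℝ w (b k) + d) ≤ 0 :=
    mul_nonpos_of_nonneg_of_nonpos (by linarith) h2.le
  have e2 : β * (inner ℝ w (a j) + d) ≤ 0 := mul_nonpos_of_nonneg_of_nonpos hβ h1.le
  have e3 : 0 ≤ t * (inner ℝ w (b l) + d) := mul_nonneg ht0 h4.le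
  have e4 : 0 ≤ α * (inner ℝ w (a i) + d) := mul_nonneg hα h3.le
  have z1 : (1 - t) * (inner ℝ w (b k) + d) = 0 := by linarith
  have z3 : t * (inner ℝ w (b l) + d) = 0 := by linarith
  rcases mul_eq_zero.mp z1 with h | h
  · rcases mul_eq_zero.mp z3 with h' | h'
    · linarith
    · linarith
  · linarith

/-- Every closed disk containing `u` and `v` contains `u'` or `v'`. -/
def Hits (u v u' v' : Pt) : Prop :=
  ∀ (c : Pt) (r : ℝ), u ∈ closedBall c r → v ∈ closedBall c r →
    u' ∈ closedBall c r ∨ v' ∈ closedBall c r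

/-- If two edges meet, one of them hits the other: disks violating both would make the difference
of their power functions an affine function separating the edges. -/
lemma exists_hits (a b : Fin 3 → Pt) (ha : AffineIndependent ℝ a) :
    ∃ i j k l : Fin 3, i ≠ j ∧ k ≠ l ∧ Hits (a i) (b k) (a j) (b l) := by
  obtain ⟨i, j, k, l, hij, hkl, h⟩ := exists_not_separated a b ha
  by_contra! hcon
  have h1 := hcon j i k l hij.symm hkl
  have h2 := hcon i j l k hij hkl.symm
  simp only [Hits, not_forall, not_or] at h1 h2
  obtain ⟨c, r, hj, hk, hi, hl⟩ := h1
  obtain ⟨c', r', hi', hl', hj', hk'⟩ := h2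
  have hr : 0 ≤ r := dist_nonneg.trans (mem_closedBall.mp hj)
  have hr' : 0 ≤ r' := dist_nonneg.trans (mem_closedBall.mp hi')
  have hin : ∀ (x c : Pt) (r : ℝ), x ∈ closedBall c r →
      ‖x‖ ^ 2 - 2 * inner ℝ c x + ‖c‖ ^ 2 ≤ r ^ 2 := by
    intro x c r hx
    rw [mem_closedBall, dist_eq_norm] at hx
    have := pow_le_pow_left₀ (norm_nonneg _) hx 2
    rwa [norm_sub_sq_real, real_inner_comm] at this
  have hout : ∀ (x c : Pt) (r : ℝ), 0 ≤ r → x ∉ closedBall c r →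
      r ^ 2 < ‖x‖ ^ 2 - 2 * inner ℝ c x + ‖c‖ ^ 2 := by
    intro x c r hr hx
    rw [mem_closedBall, dist_eq_norm, not_le] at hx
    have := pow_lt_pow_left₀ hx hr two_ne_zero
    rwa [norm_sub_sq_real, real_inner_comm] at this
  have hw : ∀ x : Pt, inner ℝ ((2 : ℝ) • (c' - c)) x = 2 * inner ℝ c' x - 2 * inner ℝ c x := by
    intro x
    rw [real_inner_smul_left, inner_sub_left]; ring
  refine h ((2 : ℝ) • (c' - c)) (‖c‖ ^ 2 - r ^ 2 - ‖c'‖ ^ 2 + r' ^ 2) ⟨?_, ?_, ?_, ?_⟩ <;> rw [hw]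
  · linarith [hin _ _ _ hj, hout _ _ _ hr' hj']
  · linarith [hin _ _ _ hk, hout _ _ _ hr' hk']
  · linarith [hin _ _ _ hi', hout _ _ _ hr hi]
  · linarith [hin _ _ _ hl', hout _ _ _ hr hl]

/-! ### Double counting -/

open Classical in
/-- Double counting: if every pair of triples from `α` and `β` contains two disjoint pairs related
by `H`, some pair `(u, v)` is related to at least `(m - 1)² / 36` pairs. A pair of disjoint pairs
extends to at most `36 (m - 2)²` pairs of ordered triples. -/
lemma exists_many_related {α β : Type*} [Fintype α] [Fintype β] (m : ℕ) (hm : 3 ≤ m)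
    (hα : Fintype.card α = m) (hβ : Fintype.card β = m) (H : α → β → α → β → Prop)
    (hH : ∀ (a : Fin 3 ↪ α) (b : Fin 3 ↪ β), ∃ i j k l : Fin 3, i ≠ j ∧ k ≠ l ∧
      H (a i) (b k) (a j) (b l)) :
    ∃ u v, (m - 1) ^ 2 ≤ 36 *
      (Finset.univ.filter fun q : α × β => q.1 ≠ u ∧ q.2 ≠ v ∧ H u v q.1 q.2).card := by
  let N : α × β → Finset (α × β) := fun p =>
    Finset.univ.filter fun q => q.1 ≠ p.1 ∧ q.2 ≠ p.2 ∧ H p.1 p.2 q.1 q.2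
  let Q : Finset ((α × β) × (α × β)) := Finset.univ.filter fun x => x.2 ∈ N x.1
  let O : Finset (Fin 3 × Fin 3) := Finset.univ.offDiag
  have hO : O.card = 6 := by decide
  let T : Finset ((_ : (α × β) × (α × β)) × (α × β)) :=
    Q.sigma fun x => ({x.1.1, x.2.1}ᶜ : Finset α) ×ˢ ({x.1.2, x.2.2}ᶜ : Finset β)
  have hT : T.card = Q.card * ((m - 2) * (m - 2)) := by
    rw [Finset.card_sigma, Finset.sum_const_nat]
    intro x hx
    simp only [Q, N, Finset.mem_filter, Finset.mem_univ, true_and] at hx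
    rw [Finset.card_product, Finset.card_compl, Finset.card_compl, Finset.card_pair hx.1.symm,
      Finset.card_pair hx.2.1.symm, hα, hβ]
  choose I J K L hIJ hKL hHit using hH
  -- `third i j` is the index different from `i` and `j`.
  obtain ⟨third, hthird⟩ : ∃ third : Fin 3 → Fin 3 → Fin 3, ∀ i j, i ≠ j →
      third i j ≠ i ∧ third i j ≠ j ∧ ∀ x, x = i ∨ x = j ∨ x = third i j :=
    ⟨fun i j => -(i + j), by decide⟩
  let F : (Fin 3 ↪ α) × (Fin 3 ↪ β) →
      ((Fin 3 × Fin 3) × (Fin 3 × Fin 3)) × ((_ : (α × β) × (α × β)) × (α × β)) := fun x =>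
    (((I x.1 x.2, J x.1 x.2), (K x.1 x.2, L x.1 x.2)),
      ⟨((x.1 (I x.1 x.2), x.2 (K x.1 x.2)), (x.1 (J x.1 x.2), x.2 (L x.1 x.2))),
        (x.1 (third (I x.1 x.2) (J x.1 x.2)), x.2 (third (K x.1 x.2) (L x.1 x.2)))⟩)
  have hcard : (Finset.univ : Finset ((Fin 3 ↪ α) × (Fin 3 ↪ β))).card ≤
      ((O ×ˢ O) ×ˢ T).card := by
    refine Finset.card_le_card_of_injOn F ?_ ?_
    · rintro ⟨a, b⟩ -
      have h1 := hthird _ _ (hIJ a b)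
      have h2 := hthird _ _ (hKL a b)
      simp [F, O, T, Q, N, hIJ, hKL, hHit, h1.1, h1.2.1, h2.1, h2.2.1, (hIJ a b).symm,
        (hKL a b).symm]
    · rintro ⟨a, b⟩ - ⟨a', b'⟩ - hab
      simp only [F, Prod.mk.injEq, Sigma.mk.injEq, heq_eq_eq] at hab
      obtain ⟨⟨⟨hI, hJ⟩, hK, hL⟩, ⟨⟨h1, h2⟩, h3, h4⟩, h5, h6⟩ := hab
      rw [← hI] at h1 h5
      rw [← hJ] at h3 h5
      rw [← hK] at h2 h6
      rw [← hL] at h4 h6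
      rw [Prod.mk.injEq]
      constructor
      · ext x
        rcases (hthird _ _ (hIJ a b)).2.2 x with rfl | rfl | rfl <;> assumption
      · ext x
        rcases (hthird _ _ (hKL a b)).2.2 x with rfl | rfl | rfl <;> assumption
  rw [Finset.card_univ, Fintype.card_prod, Fintype.card_embedding_eq, Fintype.card_embedding_eq,
    Finset.card_product, Finset.card_product, hO, hT, Fintype.card_fin, hα, hβ] at hcard
  have hQ : Q.card = ∑ p : α × β, (N p).card := by
    have : Q = (Finset.univ.sigma N).map (Equiv.sigmaEquivProd _ _).toEmbedding := by
      ext ⟨x, y⟩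
      simp [Q]
    rw [this, Finset.card_map, Finset.card_sigma]
  obtain ⟨s, rfl⟩ : ∃ s, m = s + 3 := ⟨m - 3, by omega⟩
  have hmain : ((s + 3) * (s + 2)) ^ 2 ≤ 36 * Q.card := by
    have hd : (s + 3).descFactorial 3 = (s + 1) * ((s + 2) * (s + 3)) := by
      simp [Nat.descFactorial]
    rw [hd, show s + 3 - 2 = s + 1 by omega] at hcard
    have hpos : 0 < (s + 1) ^ 2 := by positivity
    refine Nat.le_of_mul_le_mul_left ?_ hpos
    calc _ = _ := by ring
      _ ≤ _ := hcard
      _ = _ := by ring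
  by_contra! hcon
  have hne : (Finset.univ : Finset (α × β)).Nonempty := by
    rw [← Finset.card_pos, Finset.card_univ, Fintype.card_prod, hα, hβ]; positivity
  have hlt : ∑ p : α × β, 36 * (N p).card < ∑ _p : α × β, (s + 3 - 1) ^ 2 :=
    Finset.sum_lt_sum_of_nonempty hne fun p _ => hcon p.1 p.2
  rw [← Finset.mul_sum, ← hQ, Finset.sum_const, Finset.card_univ, Fintype.card_prod, hα, hβ,
    smul_eq_mul, show s + 3 - 1 = s + 2 by omega] at hlt
  nlinarith

/-- For every even `n ≥ 6` and every set of `n` points in the plane in general position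
partitioned into `n/2` red points `R` and `n/2` blue points `B`, there exist a red point
`u ∈ R` and a blue point `v ∈ B` such that every closed disk containing both `u` and `v`
contains at least `⌈(n−2)/72⌉` points of the set. -/
theorem pi_bichrom_lower_bound_n_over_72 (n : ℕ) (hn : 6 ≤ n) (heven : Even n)
    (R B : Set Pt) (hfinR : R.Finite) (hfinB : B.Finite) (hdisj : Disjoint R B)
    (hR : R.ncard = n / 2) (hB : B.ncard = n / 2) (hgp : GenPos (R ∪ B)) :
    ∃ u ∈ R, ∃ v ∈ B,
      ∀ (c : Pt) (r : ℝ), 0 < r → u ∈ closedBall c r → v ∈ closedBall c r →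
        ⌈((n : ℝ) - 2) / 72⌉ ≤ (((R ∪ B) ∩ closedBall c r).ncard : ℤ) := by
  classical
  obtain ⟨m, rfl⟩ := heven
  have hm : (m + m) / 2 = m := by omega
  rw [hm] at hR hB
  have := hfinR.fintype
  have := hfinB.fintype
  have hRc : Fintype.card R = m := by
    rw [← Nat.card_eq_fintype_card, Nat.card_coe_set_eq, hR]
  have hBc : Fintype.card B = m := by
    rw [← Nat.card_eq_fintype_card, Nat.card_coe_set_eq, hB]
  obtain ⟨u, v, huv⟩ := exists_many_related (α := R) (β := B) m (by omega) hRc hBc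
    (fun u v u' v' => Hits u v u' v') (by
      intro a b
      refine exists_hits (fun i => (a i : Pt)) (fun i => (b i : Pt)) ?_
      have hinj : Function.Injective fun i => (a i : Pt) := Subtype.val_injective.comp a.injective
      rw [affineIndependent_iff_not_collinear]
      refine hgp.1 _ ?_ ?_
      · rintro _ ⟨i, rfl⟩
        exact Or.inl (a i).2
      · rw [← Set.image_univ, Set.ncard_image_of_injective _ hinj, Set.ncard_univ]
        simp)
  refine ⟨u, u.2, v, v.2, fun c r _ hu hv => ?_⟩
  let X : Finset R := Finset.univ.filter fun x => (x : Pt) ∈ closedBall c r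
  let Y : Finset B := Finset.univ.filter fun x => (x : Pt) ∈ closedBall c r
  have hle : (m - 1) ^ 2 ≤
      36 * (X ×ˢ ({v}ᶜ : Finset B) ∪ ({u}ᶜ : Finset R) ×ˢ Y).card := by
    refine huv.trans (Nat.mul_le_mul_left _ (Finset.card_le_card ?_))
    rintro ⟨x, y⟩ hq
    simp only [Finset.mem_filter, Finset.mem_univ, true_and] at hq
    have := hq.2.2 c r hu hv
    simp only [X, Y, Finset.mem_union, Finset.mem_product, Finset.mem_filter, Finset.mem_univ,
      true_and, Finset.mem_compl, Finset.mem_singleton]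
    tauto
  replace hle := hle.trans (Nat.mul_le_mul_left _ (Finset.card_union_le _ _))
  rw [Finset.card_product, Finset.card_product, Finset.card_compl, Finset.card_compl,
    Finset.card_singleton, Finset.card_singleton, hRc, hBc] at hle
  have hXY : X.card + Y.card ≤ ((R ∪ B) ∩ closedBall c r).ncard := by
    have hX : (X.map (Function.Embedding.subtype _) : Set Pt) = R ∩ closedBall c r := by
      ext x; simp [X, and_comm]
    have hY : (Y.map (Function.Embedding.subtype _) : Set Pt) = B ∩ closedBall c r := by
      ext x; simp [Y, and_comm]
    rw [Set.union_inter_distrib_right,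
      Set.ncard_union_eq (hdisj.mono Set.inter_subset_left Set.inter_subset_left)
        (hfinR.inter_of_left _) (hfinB.inter_of_left _), ← hX, ← hY, Set.ncard_coe_finset,
      Set.ncard_coe_finset, Finset.card_map, Finset.card_map]
  have hfin : m - 1 ≤ 36 * (X.card + Y.card) := by
    have hpos : 0 < m - 1 := by omega
    refine Nat.le_of_mul_le_mul_left ?_ hpos
    linarith
  rw [Int.ceil_le]
  have hnat : m ≤ 36 * ((R ∪ B) ∩ closedBall c r).ncard + 1 := by omega
  have hreal : (m : ℝ) ≤ 36 * (((R ∪ B) ∩ closedBall c r).ncard : ℝ) + 1 := by exact_mod_cast hnat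
  push_cast
  linarith
end
end

section
/- For every even integer n ≥ 6 and every set S of n points in the Euclidean plane in general position that is partitioned into a set R of n/2 red points and a set B of n/2 blue points, there exist a red point u ∈ R and a blue point v ∈ B such that every closed disk containing both u and v contains at least ⌈(n−2)/36⌉ + 2 points of S. -/
/-!
Put `n = 2a` and suppose that every red-blue pair `uv` has a disk `D_uv` containing `u`, `v` and
fewer than `(n - 2) / 36 = (a - 1) / 18` further points of the set.

*Six points* (`disks_not_empty`). For three red and three blue points, some disk `D_uv` of one of
the nine pairs contains a third of the six points. Lifting the plane to the paraboloid turns disks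
into half-spaces, i.e. into linear functionals on `ℝ⁴` (`power`, `lift`), and six vectors of `ℝ⁴`
have an at least two-dimensional space of linear dependencies. A functional that is nonpositive on
`u`, `v` and positive on the other four vectors rules out any nonzero dependency whose negative (or, after a
change of sign, positive) coefficients are confined to `{u, v}`; so it suffices to find a dependency
of this kind for some red-blue pair (`no_separation`). Take a nonzero dependency whose red
coefficients sum to `0`; then so do the blue ones. In each colour one sign occurs at most once. If
it is the same sign in both colours, the dependency is as required. Otherwise, up to sign, the
pattern is `+ - -` in red and `- + +` in blue. Deforming the dependency without letting the red sum
become negative, the first coefficient to vanish is not the red `+` nor the blue `-`, and when any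
of the other four vanishes, one of the two signs is confined to a red-blue pair.

*Counting* (`exists_free_triples`). Every copy of `K_{3,3}` thus contains an incidence, that is, a
pair `uv` and a third point `x` in `D_uv`. There are `a² (a-1)² (a-2)² / 36` copies, and each
incidence lies in `(a-1) (a-2)² / 2` of them, so there are at least `a² (a-1) / 18` incidences.
Since there are `a²` pairs, some disk contains at least `(a-1) / 18` further points, a contradiction.
In the formal count, copies of `K_{3,3}` are pairs of ordered triples.
-/

open EuclideanGeometry Metric

noncomputable section

/-! ### Dependencies among three red and three blue vectors -/

/-- `x` and `y` are the coefficients of a linear dependency among the six vectors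
`r 0, r 1, r 2, b 0, b 1, b 2`. -/
def IsDep {E : Type*} [AddCommGroup E] [Module ℝ E] (r b : Fin 3 → E)
    (x y : Fin 3 → ℝ) : Prop :=
  ∑ i, x i • r i + ∑ j, y j • b j = 0

/-- Six vectors of a four-dimensional space have at least a two-dimensional space of dependencies,
so one further linear condition `ψ` still leaves a nonzero dependency. -/
lemma exists_dep {E : Type*} [AddCommGroup E] [Module ℝ E] [FiniteDimensional ℝ E]
    (hE : Module.finrank ℝ E = 4) (r b : Fin 3 → E)
    (ψ : ((Fin 3 → ℝ) × (Fin 3 → ℝ)) →ₗ[ℝ] ℝ) :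
    ∃ x y, IsDep r b x y ∧ ψ (x, y) = 0 ∧ (x, y) ≠ 0 := by
  let L : ((Fin 3 → ℝ) × (Fin 3 → ℝ)) →ₗ[ℝ] E :=
    ((Fintype.linearCombination ℝ r).coprod (Fintype.linearCombination ℝ b))
  have hker : (L.prod ψ).ker ≠ ⊥ := by
    apply LinearMap.ker_ne_bot_of_finrank_lt
    simp [hE]
  obtain ⟨⟨x, y⟩, hxy, hne⟩ := Submodule.exists_mem_ne_zero_of_ne_bot hker
  rw [LinearMap.mem_ker] at hxy
  refine ⟨x, y, ?_, congrArg Prod.snd hxy, hne⟩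
  simpa [IsDep, L, Fintype.linearCombination_apply] using congrArg Prod.fst hxy

/-- A functional `F` that is nonpositive exactly on the ends of the edge `(r i, b j)` forbids any
nonzero dependency whose negative coefficients all sit on that edge. -/
lemma dep_contra {E : Type*} [AddCommGroup E] [Module ℝ E] {r b : Fin 3 → E} {x y : Fin 3 → ℝ}
    (hd : IsDep r b x y) (φ : E →ₗ[ℝ] ℝ) (hφr : ∀ i, φ (r i) = 1) (hφb : ∀ j, φ (b j) = 1)
    (i j : Fin 3) (F : E →ₗ[ℝ] ℝ) (hri : F (r i) ≤ 0) (hbj : F (b j) ≤ 0)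
    (hr : ∀ k ≠ i, 0 < F (r k)) (hb : ∀ k ≠ j, 0 < F (b k))
    (hxi : x i ≤ 0) (hyj : y j ≤ 0) (hx : ∀ k ≠ i, 0 ≤ x k) (hy : ∀ k ≠ j, 0 ≤ y k) :
    (x, y) = 0 := by
  have hF : ∑ k, x k * F (r k) + ∑ k, y k * F (b k) = 0 := by
    simpa using congrArg F hd
  have h1 : ∑ k, x k + ∑ k, y k = 0 := by
    simpa [hφr, hφb] using congrArg φ hd
  have hx0 : ∀ k, 0 ≤ x k * F (r k) := fun k => by
    by_cases hk : k = i
    · subst hk; exact mul_nonneg_of_nonpos_of_nonpos hxi hri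
    · exact mul_nonneg (hx k hk) (hr k hk).le
  have hy0 : ∀ k, 0 ≤ y k * F (b k) := fun k => by
    by_cases hk : k = j
    · subst hk; exact mul_nonneg_of_nonpos_of_nonpos hyj hbj
    · exact mul_nonneg (hy k hk) (hb k hk).le
  have hsx := Finset.sum_nonneg fun k (_ : k ∈ Finset.univ) => hx0 k
  have hsy := Finset.sum_nonneg fun k (_ : k ∈ Finset.univ) => hy0 k
  have hxz : ∀ k ≠ i, x k = 0 := fun k hk => by
    have := (Finset.sum_eq_zero_iff_of_nonneg fun k _ => hx0 k).1 (by linarith) k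
      (Finset.mem_univ k)
    exact (mul_eq_zero.1 this).resolve_right (hr k hk).ne'
  have hyz : ∀ k ≠ j, y k = 0 := fun k hk => by
    have := (Finset.sum_eq_zero_iff_of_nonneg fun k _ => hy0 k).1 (by linarith) k
      (Finset.mem_univ k)
    exact (mul_eq_zero.1 this).resolve_right (hb k hk).ne'
  rw [Finset.sum_eq_single i (fun k _ hk => hxz k hk) (by simp),
    Finset.sum_eq_single j (fun k _ hk => hyz k hk) (by simp)] at h1
  refine Prod.ext (funext fun k => ?_) (funext fun k => ?_)
  · by_cases hk : k = i
    · subst hk; simp only [Prod.fst_zero, Pi.zero_apply]; linarith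
    · exact hxz k hk
  · by_cases hk : k = j
    · subst hk; simp only [Prod.snd_zero, Pi.zero_apply]; linarith
    · exact hyz k hk

lemma IsDep.neg {E : Type*} [AddCommGroup E] [Module ℝ E] {r b : Fin 3 → E} {x y : Fin 3 → ℝ}
    (hd : IsDep r b x y) : IsDep r b (-x) (-y) := by
  unfold IsDep at *
  simp only [Pi.neg_apply, neg_smul, Finset.sum_neg_distrib]
  rw [← neg_add, hd, neg_zero]

lemma IsDep.comb {E : Type*} [AddCommGroup E] [Module ℝ E] {r b : Fin 3 → E}
    {x y x' y' : Fin 3 → ℝ} (hd : IsDep r b x y) (hd' : IsDep r b x' y') (s t : ℝ) :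
    IsDep r b (s • x + t • x') (s • y + t • y') := by
  unfold IsDep at *
  simp only [Pi.add_apply, Pi.smul_apply, smul_eq_mul, add_smul, mul_smul,
    Finset.sum_add_distrib, ← Finset.smul_sum]
  rw [show ∀ A B C D : E, A + B + (C + D) = (A + C) + (B + D) by intros; abel,
    ← smul_add, ← smul_add, hd, hd']
  simp

lemma sign_split (x : Fin 3 → ℝ) (hx : ∑ k, x k = 0) :
    (∃ i, 0 ≤ x i ∧ ∀ k ≠ i, x k ≤ 0) ∨ (∃ i, x i ≤ 0 ∧ ∀ k ≠ i, 0 ≤ x k) := by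
  have h : ∀ i : Fin 3, (∀ k ≠ i, x k ≤ 0) → 0 ≤ x i := by
    intro i hi
    rw [← Finset.add_sum_erase _ _ (Finset.mem_univ i)] at hx
    have := Finset.sum_nonpos (s := Finset.univ.erase i) (f := x)
      (fun k hk => hi k (Finset.ne_of_mem_erase hk))
    linarith
  have h' : ∀ i : Fin 3, (∀ k ≠ i, 0 ≤ x k) → x i ≤ 0 := by
    intro i hi
    rw [← Finset.add_sum_erase _ _ (Finset.mem_univ i)] at hx
    have := Finset.sum_nonneg (s := Finset.univ.erase i) (f := x)
      (fun k hk => hi k (Finset.ne_of_mem_erase hk))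
    linarith
  suffices (∃ i, ∀ k ≠ i, x k ≤ 0) ∨ (∃ i, ∀ k ≠ i, 0 ≤ x k) by
    rcases this with ⟨i, hi⟩ | ⟨i, hi⟩
    · exact Or.inl ⟨i, h i hi, hi⟩
    · exact Or.inr ⟨i, h' i hi, hi⟩
  have pos : ∀ i k l : Fin 3, (∀ t, t = i ∨ t = k ∨ t = l) → x k ≤ 0 → x l ≤ 0 →
      ∃ i, ∀ k ≠ i, x k ≤ 0 := fun i k l hall hk hl => ⟨i, fun t ht => by
    rcases hall t with rfl | rfl | rfl
    exacts [absurd rfl ht, hk, hl]⟩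
  have neg : ∀ i k l : Fin 3, (∀ t, t = i ∨ t = k ∨ t = l) → 0 ≤ x k → 0 ≤ x l →
      ∃ i, ∀ k ≠ i, 0 ≤ x k := fun i k l hall hk hl => ⟨i, fun t ht => by
    rcases hall t with rfl | rfl | rfl
    exacts [absurd rfl ht, hk, hl]⟩
  -- By pigeonhole two of the three values have the same weak sign.
  rcases le_total (x 0) 0 with h0 | h0
  · rcases le_total (x 1) 0 with h1 | h1
    · exact Or.inl (pos 2 0 1 (by decide) h0 h1)
    · rcases le_total (x 2) 0 with h2 | h2
      · exact Or.inl (pos 1 0 2 (by decide) h0 h2)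
      · exact Or.inr (neg 0 1 2 (by decide) h1 h2)
  · rcases le_total (x 1) 0 with h1 | h1
    · rcases le_total (x 2) 0 with h2 | h2
      · exact Or.inl (pos 0 1 2 (by decide) h1 h2)
      · exact Or.inr (neg 1 0 2 (by decide) h0 h2)
    · exact Or.inr (neg 2 0 1 (by decide) h0 h1)

/-- Moving along the segment from `p` to `q`, there is a moment at which some coordinate vanishes
while all are still nonpositive. -/
lemma ivt_family {ι : Type*} [Fintype ι] (p q : ι → ℝ) (hp : ∀ i, p i ≤ 0)
    (i₀ : ι) (hq : 0 ≤ q i₀) :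
    ∃ s ∈ Set.Icc (0 : ℝ) 1, (∀ i, (1 - s) * p i + s * q i ≤ 0) ∧
      ∃ i, (1 - s) * p i + s * q i = 0 := by
  have : Nonempty ι := ⟨i₀⟩
  let M : ℝ → ℝ := fun s => Finset.univ.sup' Finset.univ_nonempty
    fun i => (1 - s) * p i + s * q i
  have hM : Continuous M := by
    refine Continuous.finset_sup'_apply _ fun i _ => by fun_prop
  have h0 : M 0 ≤ 0 := Finset.sup'_le _ _ fun i _ => by simpa using hp i
  have h1 : 0 ≤ M 1 := by
    refine le_trans ?_ (Finset.le_sup' _ (Finset.mem_univ i₀))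
    simpa using hq
  obtain ⟨s, hs, hMs⟩ := intermediate_value_Icc zero_le_one hM.continuousOn ⟨h0, h1⟩
  refine ⟨s, hs, fun i => ?_, ?_⟩
  · rw [← hMs]
    exact Finset.le_sup' (fun i => (1 - s) * p i + s * q i) (Finset.mem_univ i)
  · obtain ⟨i, -, hi⟩ := Finset.exists_mem_eq_sup' Finset.univ_nonempty
      fun i => (1 - s) * p i + s * q i
    exact ⟨i, hi.symm.trans hMs⟩

/-- Six vectors in the hyperplane `φ = 1` of a four-dimensional space, three red and three blue,
cannot have all nine red-blue pairs separated from the other four vectors by linear functionals. -/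
lemma no_separation {E : Type*} [AddCommGroup E] [Module ℝ E] [FiniteDimensional ℝ E]
    (hE : Module.finrank ℝ E = 4) (r b : Fin 3 → E) (φ : E →ₗ[ℝ] ℝ)
    (hφr : ∀ i, φ (r i) = 1) (hφb : ∀ j, φ (b j) = 1) (F : Fin 3 → Fin 3 → E →ₗ[ℝ] ℝ)
    (hri : ∀ i j, F i j (r i) ≤ 0) (hbj : ∀ i j, F i j (b j) ≤ 0)
    (hr : ∀ i j, ∀ k ≠ i, 0 < F i j (r k)) (hb : ∀ i j, ∀ k ≠ j, 0 < F i j (b k)) : False := by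
  have neg_case : ∀ {x y : Fin 3 → ℝ}, IsDep r b x y → ∀ i j, x i ≤ 0 → y j ≤ 0 →
      (∀ k ≠ i, 0 ≤ x k) → (∀ k ≠ j, 0 ≤ y k) → (x, y) = 0 := fun hd i j =>
    dep_contra hd φ hφr hφb i j (F i j) (hri i j) (hbj i j) (hr i j) (hb i j)
  have pos_case : ∀ {x y : Fin 3 → ℝ}, IsDep r b x y → ∀ i j, 0 ≤ x i → 0 ≤ y j →
      (∀ k ≠ i, x k ≤ 0) → (∀ k ≠ j, y k ≤ 0) → (x, y) = 0 := fun hd i j h1 h2 h3 h4 => by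
    have := neg_case hd.neg i j (by simpa using h1) (by simpa using h2)
      (by simpa using h3) (by simpa using h4)
    simpa using this
  have hsum : ∀ {x y : Fin 3 → ℝ}, IsDep r b x y → ∑ k, x k + ∑ k, y k = 0 := fun hd => by
    simpa [hφr, hφb] using congrArg φ hd
  -- The remaining sign pattern: the minority signs of red and blue are opposite.
  have mixed : ∀ {x y : Fin 3 → ℝ}, IsDep r b x y → ∑ k, x k = 0 → ∀ i j, 0 ≤ x i →
      (∀ k ≠ i, x k ≤ 0) → y j ≤ 0 → (∀ k ≠ j, 0 ≤ y k) → (x, y) = 0 := by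
    intro x y hd hx0 i j hxi hx hyj hy
    obtain ⟨k₀, hk₀⟩ : ∃ k₀ : Fin 3, k₀ ≠ i := exists_ne i
    have third : ∀ i k : Fin 3, k ≠ i → ∃ l, l ≠ i ∧ l ≠ k ∧ ∀ t, t ≠ l → t = i ∨ t = k := by
      decide
    -- A vanishing coefficient outside positions `i`, `j` leaves a sign class consisting of at most
    -- one red and one blue vector.
    have final : ∀ {x y : Fin 3 → ℝ}, IsDep r b x y → 0 ≤ ∑ k, x k → (∀ k ≠ i, x k ≤ 0) →
        (∀ k ≠ j, 0 ≤ y k) → ((∃ k ≠ i, x k = 0) ∨ (∃ k ≠ j, y k = 0)) → (x, y) = 0 := by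
      intro x y hd hs hx hy hz
      have hs' := hsum hd
      have hxi : 0 ≤ x i := by
        rw [← Finset.add_sum_erase _ _ (Finset.mem_univ i)] at hs
        have := Finset.sum_nonpos (s := Finset.univ.erase i) (f := x)
          (fun k hk => hx k (Finset.ne_of_mem_erase hk))
        linarith
      have hyj : y j ≤ 0 := by
        rw [← Finset.add_sum_erase _ y (Finset.mem_univ j)] at hs'
        have := Finset.sum_nonneg (s := Finset.univ.erase j) (f := y)
          (fun k hk => hy k (Finset.ne_of_mem_erase hk))
        linarith
      rcases hz with ⟨k, hk, hz⟩ | ⟨k, hk, hz⟩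
      · obtain ⟨l, hl, -, hall⟩ := third i k hk
        refine neg_case hd l j (hx l hl) hyj (fun t ht => ?_) hy
        rcases hall t ht with rfl | rfl
        · exact hxi
        · exact hz.ge
      · obtain ⟨l, hl, -, hall⟩ := third j k hk
        refine pos_case hd i l hxi (hy l hl) hx (fun t ht => ?_)
        rcases hall t ht with rfl | rfl
        · exact hyj
        · exact hz.le
    by_contra hne
    have hxk : x k₀ < 0 := lt_of_le_of_ne (hx k₀ hk₀) fun h =>
      hne (final hd hx0.ge hx hy (Or.inl ⟨k₀, hk₀, h⟩))
    -- Deform towards a dependency with zero coefficient at `k₀` and nonnegative red sum. The red sum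
    -- stays nonnegative and the blue sum nonpositive, which prevents the coefficients at `i` and `j`
    -- from changing sign before another coefficient vanishes.
    obtain ⟨x', y', hd', hk', hne', hs'⟩ : ∃ x' y', IsDep r b x' y' ∧ x' k₀ = 0 ∧
        (x', y') ≠ 0 ∧ 0 ≤ ∑ k, x' k := by
      obtain ⟨x', y', hd', hψ, hne'⟩ := exists_dep hE r b
        (LinearMap.proj k₀ ∘ₗ LinearMap.fst ℝ (Fin 3 → ℝ) (Fin 3 → ℝ))
      have hψ' : x' k₀ = 0 := by simpa using hψ
      rcases le_total 0 (∑ k, x' k) with h | h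
      · exact ⟨x', y', hd', hψ', hne', h⟩
      · refine ⟨-x', -y', hd'.neg, by simp [hψ'], fun h0 => hne' ?_, by simpa using h⟩
        simpa using h0
    obtain ⟨s, ⟨hs0, hs1⟩, hle, t, ht⟩ := ivt_family
      (ι := {k : Fin 3 // k ≠ i} ⊕ {k : Fin 3 // k ≠ j})
      (Sum.elim (fun k => x k) (fun k => -y k)) (Sum.elim (fun k => x' k) (fun k => -y' k))
      (by
        rintro (⟨k, hk⟩ | ⟨k, hk⟩)
        · exact hx k hk
        · simpa using hy k hk)
      (Sum.inl ⟨k₀, hk₀⟩) (by simp [hk'])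
    have hz := final (hd.comb hd' (1 - s) s)
      (by
        simp only [Pi.add_apply, Pi.smul_apply, smul_eq_mul, Finset.sum_add_distrib,
          ← Finset.mul_sum, hx0]
        rw [mul_zero, zero_add]; exact mul_nonneg hs0 hs')
      (fun k hk => by simpa using hle (Sum.inl ⟨k, hk⟩))
      (fun k hk => by
        have := hle (Sum.inr ⟨k, hk⟩)
        simp only [Sum.elim_inr] at this
        simp only [Pi.add_apply, Pi.smul_apply, smul_eq_mul]
        linarith)
      (by
        rcases t with ⟨k, hk⟩ | ⟨k, hk⟩
        · exact Or.inl ⟨k, hk, by simpa using ht⟩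
        · refine Or.inr ⟨k, hk, ?_⟩
          simp only [Sum.elim_inr] at ht
          simp only [Pi.add_apply, Pi.smul_apply, smul_eq_mul]
          linarith)
    -- The deformed dependency is nonzero: its coefficient at `k₀` vanishes only at time `s = 1`.
    have hz1 := congrFun (congrArg Prod.fst hz) k₀
    simp only [Pi.add_apply, Pi.smul_apply, smul_eq_mul, hk', mul_zero, add_zero,
      Prod.fst_zero, Pi.zero_apply, mul_eq_zero, hxk.ne, or_false] at hz1
    have hs : s = 1 := by linarith
    subst hs
    apply hne'
    simpa using hz
  -- Start from a nonzero dependency whose red and blue coefficient sums both vanish.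
  obtain ⟨x, y, hd, hψ, hne⟩ := exists_dep hE r b
    ((∑ k, LinearMap.proj k) ∘ₗ LinearMap.fst ℝ (Fin 3 → ℝ) (Fin 3 → ℝ))
  have hx0 : ∑ k, x k = 0 := by simpa using hψ
  have hy0 : ∑ k, y k = 0 := by have := hsum hd; linarith
  apply hne
  rcases sign_split x hx0 with ⟨i, hi, hi'⟩ | ⟨i, hi, hi'⟩ <;>
    rcases sign_split y hy0 with ⟨j, hj, hj'⟩ | ⟨j, hj, hj'⟩
  · exact pos_case hd i j hi hj hi' hj'
  · exact mixed hd hx0 i j hi hi' hj hj'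
  · have := mixed hd.neg (by simpa using hx0) i j (by simpa using hi) (by simpa using hi')
      (by simpa using hj) (by simpa using hj')
    simpa using this
  · apply neg_case hd i j <;> assumption

/-! ### Lifting disks to half-spaces -/

/-- The homogenized lift of a point of the plane to the paraboloid `z = x² + y²`. -/
def lift (p : Pt) : Fin 4 → ℝ := ![1, p 0, p 1, p 0 ^ 2 + p 1 ^ 2]

/-- The power of a point with respect to the circle of centre `c` and radius `ρ`, as a linear
functional of the lifted point. -/
def power (c : Pt) (ρ : ℝ) : (Fin 4 → ℝ) →ₗ[ℝ] ℝ :=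
  LinearMap.proj 3 - (2 * c 0) • LinearMap.proj 1 - (2 * c 1) • LinearMap.proj 2 +
    (c 0 ^ 2 + c 1 ^ 2 - ρ ^ 2) • LinearMap.proj 0

lemma power_lift (c : Pt) (ρ : ℝ) (p : Pt) : power c ρ (lift p) = dist p c ^ 2 - ρ ^ 2 := by
  rw [EuclideanSpace.dist_eq, Real.sq_sqrt (by positivity)]
  simp [power, lift, Real.dist_eq, sq_abs]
  ring

lemma power_lift_nonpos {c : Pt} {ρ : ℝ} (hρ : 0 < ρ) {p : Pt} :
    power c ρ (lift p) ≤ 0 ↔ p ∈ closedBall c ρ := by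
  rw [power_lift, mem_closedBall, sub_nonpos, sq_le_sq₀ dist_nonneg hρ.le]

/-- If each of the nine red-blue pairs of three red and three blue points is given a disk
containing it, then one of these disks contains a third point. -/
lemma disks_not_empty (r b : Fin 3 → Pt) (c : Fin 3 → Fin 3 → Pt) (ρ : Fin 3 → Fin 3 → ℝ)
    (hρ : ∀ i j, 0 < ρ i j) (hr : ∀ i j, r i ∈ closedBall (c i j) (ρ i j))
    (hb : ∀ i j, b j ∈ closedBall (c i j) (ρ i j))
    (hr' : ∀ i j, ∀ k ≠ i, r k ∉ closedBall (c i j) (ρ i j))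
    (hb' : ∀ i j, ∀ k ≠ j, b k ∉ closedBall (c i j) (ρ i j)) : False := by
  refine no_separation (by simp) (fun i => lift (r i)) (fun j => lift (b j)) (LinearMap.proj 0)
    (fun _ => rfl) (fun _ => rfl) (fun i j => power (c i j) (ρ i j))
    (fun i j => (power_lift_nonpos (hρ i j)).2 (hr i j))
    (fun i j => (power_lift_nonpos (hρ i j)).2 (hb i j)) (fun i j k hk => ?_) (fun i j k hk => ?_)
  · exact not_le.1 fun h => hr' i j k hk ((power_lift_nonpos (hρ i j)).1 h)
  · exact not_le.1 fun h => hb' i j k hk ((power_lift_nonpos (hρ i j)).1 h)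

/-! ### Counting copies of `K_{3,3}` -/

open Finset in
lemma card_fiber_one {α : Type*} [Fintype α] [DecidableEq α] (i : Fin 3) (x : α) :
    #{f : Fin 3 ↪ α | f i = x} ≤ (Fintype.card α - 1) * (Fintype.card α - 2) := by
  obtain ⟨k, l, hki, hli, hkl⟩ : ∃ k l : Fin 3, k ≠ i ∧ l ≠ i ∧ k ≠ l := by
    revert i; decide
  have hall : ∀ t : Fin 3, t = i ∨ t = k ∨ t = l := by omega
  have h1 : #{f : Fin 3 ↪ α | f i = x} ≤ #((univ.erase x).offDiag) := by
    refine card_le_card_of_injOn (fun f => (f k, f l)) ?_ ?_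
    · intro f hf
      simp only [coe_filter, mem_univ, true_and, Set.mem_ofPred_eq] at hf
      subst hf
      simp [hki, hli, hkl]
    · intro f hf g hg hfg
      simp only [coe_filter, mem_univ, true_and, Set.mem_ofPred_eq, Prod.mk.injEq] at hf hg hfg
      ext t
      rcases hall t with rfl | rfl | rfl
      · rw [hf, hg]
      · exact hfg.1
      · exact hfg.2
  refine h1.trans (le_of_eq ?_)
  rw [offDiag_card, card_erase_of_mem (mem_univ _), card_univ, ← Nat.mul_sub_one, Nat.sub_sub]

open Finset in
lemma card_fiber_two {α : Type*} [Fintype α] [DecidableEq α] {i k : Fin 3} (hki : k ≠ i)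
    (x y : α) : #{f : Fin 3 ↪ α | f i = x ∧ f k = y} ≤ Fintype.card α - 2 := by
  obtain ⟨l, hli, hlk⟩ : ∃ l : Fin 3, l ≠ i ∧ l ≠ k := by
    revert i k; decide
  have hall : ∀ t : Fin 3, t = i ∨ t = k ∨ t = l := by omega
  by_cases hxy : x = y
  · rw [card_eq_zero.2]
    · exact Nat.zero_le _
    · ext f
      simp only [mem_filter, mem_univ, true_and, notMem_empty, iff_false, not_and]
      rintro rfl h
      exact hki (f.injective (h.trans hxy.symm))
  have h1 : #{f : Fin 3 ↪ α | f i = x ∧ f k = y} ≤ #((univ.erase x).erase y) := by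
    refine card_le_card_of_injOn (fun f => f l) ?_ ?_
    · intro f hf
      simp only [coe_filter, mem_univ, true_and, Set.mem_ofPred_eq] at hf
      obtain ⟨rfl, rfl⟩ := hf
      simp [hli, hlk]
    · intro f hf g hg hfg
      simp only [coe_filter, mem_univ, true_and, Set.mem_ofPred_eq] at hf hg hfg
      ext t
      rcases hall t with rfl | rfl | rfl
      · rw [hf.1, hg.1]
      · rw [hf.2, hg.2]
      · exact hfg
  refine h1.trans (le_of_eq ?_)
  rw [card_erase_of_mem (by simp [Ne.symm hxy]), card_erase_of_mem (mem_univ _), card_univ,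
    Nat.sub_sub]

open Finset in
/-- A fixed triple `(u, v, x)` with `P u v x` appears at the positions `(i, j, k)` of at most
`(|α| - 2) (|β| - 1) (|β| - 2)` pairs of ordered triples. -/
lemma card_incident {α β : Type*} [Fintype α] [DecidableEq α] [Fintype β] [DecidableEq β]
    (P : α → β → α → Prop) [∀ u v x, Decidable (P u v x)] {i k : Fin 3} (hki : k ≠ i) (j : Fin 3) :
    #{p : (Fin 3 ↪ α) × (Fin 3 ↪ β) | P (p.1 i) (p.2 j) (p.1 k)} ≤
      ((Fintype.card α - 2) * ((Fintype.card β - 1) * (Fintype.card β - 2))) *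
        #{q : (α × β) × α | q.2 ≠ q.1.1 ∧ P q.1.1 q.1.2 q.2} := by
  refine card_le_mul_card_image_of_maps_to (f := fun p => ((p.1 i, p.2 j), p.1 k)) ?_ _ ?_
  · intro p hp
    simp only [mem_filter, mem_univ, true_and] at hp ⊢
    exact ⟨fun h => hki (p.1.injective h), hp⟩
  · rintro ⟨⟨u, v⟩, x⟩ -
    refine le_trans ?_ (Nat.mul_le_mul (card_fiber_two hki u x) (card_fiber_one j v))
    rw [← card_product]
    refine card_le_card ?_
    intro p hp
    simp only [mem_filter, mem_univ, true_and, Prod.mk.injEq, mem_product] at hp ⊢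
    tauto

open Finset in
/-- Double counting. Read `P u v x` (`Q u v y`) as: the point `x` of `α` (`y` of `β`) lies in the
disk assigned to the edge `uv`. If every disk contains at most `m` points besides the ends of its
edge and `18 m < a - 1`, then some copy of `K_{3,3}` has no point in the disk of an edge not
incident to it. -/
lemma exists_free_triples {α β : Type*} [Fintype α] [DecidableEq α] [Fintype β] [DecidableEq β]
    (a m : ℕ) (hα : Fintype.card α = a) (hβ : Fintype.card β = a) (ha : 3 ≤ a)
    (hm : 18 * m + 2 ≤ a)
    (P : α → β → α → Prop) (Q : α → β → β → Prop)
    [∀ u v x, Decidable (P u v x)] [∀ u v x, Decidable (Q u v x)]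
    (h : ∀ u v, #{x | x ≠ u ∧ P u v x} + #{y | y ≠ v ∧ Q u v y} ≤ m) :
    ∃ (f : Fin 3 ↪ α) (g : Fin 3 ↪ β), (∀ i j k, k ≠ i → ¬ P (f i) (g j) (f k)) ∧
      (∀ i j k, k ≠ j → ¬ Q (f i) (g j) (g k)) := by
  by_contra hcon
  set C := (a - 2) * ((a - 1) * (a - 2)) with hC
  set NP := #{q : (α × β) × α | q.2 ≠ q.1.1 ∧ P q.1.1 q.1.2 q.2} with hNP
  set NQ := #{q : (β × α) × β | q.2 ≠ q.1.1 ∧ Q q.1.2 q.1.1 q.2} with hNQ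
  -- Index triples: a position in one colour, one in the other, and a further one in the first.
  set I : Finset ((Fin 3 × Fin 3) × Fin 3) := {t | t.2 ≠ t.1.1} with hI
  have hIc : #I = 18 := by rw [hI]; decide
  have hcover : (univ : Finset ((Fin 3 ↪ α) × (Fin 3 ↪ β))) ⊆
      (I.biUnion fun t => {p | P (p.1 t.1.1) (p.2 t.1.2) (p.1 t.2)}) ∪
      (I.biUnion fun t => {p | Q (p.1 t.1.2) (p.2 t.1.1) (p.2 t.2)}) := by
    rintro ⟨f, g⟩ -
    by_contra hp
    simp only [hI, mem_union, mem_biUnion, mem_filter, mem_univ, true_and, not_or, not_exists,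
      not_and, Prod.forall] at hp
    exact hcon ⟨f, g, fun i j k hk => hp.1 i j k hk, fun i j k hk => hp.2 j i k hk⟩
  have hP : ∀ t ∈ I, #{p : (Fin 3 ↪ α) × (Fin 3 ↪ β) | P (p.1 t.1.1) (p.2 t.1.2) (p.1 t.2)} ≤
      C * NP := by
    intro t ht
    have := card_incident P (i := t.1.1) (k := t.2) (by simpa [hI] using ht) t.1.2
    rwa [hα, hβ] at this
  have hQ : ∀ t ∈ I, #{p : (Fin 3 ↪ α) × (Fin 3 ↪ β) | Q (p.1 t.1.2) (p.2 t.1.1) (p.2 t.2)} ≤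
      C * NQ := by
    intro t ht
    have := card_incident (fun v u y => Q u v y) (i := t.1.1) (k := t.2)
      (by simpa [hI] using ht) t.1.2
    rw [hα, hβ] at this
    refine le_trans (le_of_eq ?_) this
    -- `card_incident` is applied with the two colours exchanged.
    refine card_bij (fun p _ => p.swap) ?_ ?_ ?_
    · intro p hp; simpa using hp
    · intro p _ q _ hpq; exact Prod.swap_injective hpq
    · intro p hp; exact ⟨p.swap, by simpa using hp, by simp⟩
  have hN : NP + NQ ≤ a * a * m := by
    have e1 : NP = ∑ u : α, ∑ v : β, #{x | x ≠ u ∧ P u v x} := by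
      rw [hNP]; simp only [card_filter, Fintype.sum_prod_type]
    have e2 : NQ = ∑ u : α, ∑ v : β, #{y | y ≠ v ∧ Q u v y} := by
      rw [sum_comm, hNQ]; simp only [card_filter, Fintype.sum_prod_type]
    rw [e1, e2, ← sum_add_distrib]
    simp only [← sum_add_distrib]
    refine (sum_le_sum fun u _ => sum_le_sum fun v _ => h u v).trans (le_of_eq ?_)
    simp [hα, hβ, mul_assoc]
  have htot : (a * (a - 1) * (a - 2)) * (a * (a - 1) * (a - 2)) ≤ 18 * (C * NP) + 18 * (C * NQ) := by
    have hc : #(univ : Finset ((Fin 3 ↪ α) × (Fin 3 ↪ β))) =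
        (a * (a - 1) * (a - 2)) * (a * (a - 1) * (a - 2)) := by
      rw [card_univ, Fintype.card_prod, Fintype.card_embedding_eq, Fintype.card_embedding_eq,
        hα, hβ, Fintype.card_fin]
      simp [Nat.descFactorial]
      ring
    rw [← hc]
    refine (card_le_card hcover).trans ((card_union_le _ _).trans (add_le_add ?_ ?_))
    · rw [← hIc]; exact card_biUnion_le_card_mul _ _ _ hP
    · rw [← hIc]; exact card_biUnion_le_card_mul _ _ _ hQ
  obtain ⟨b, rfl⟩ : ∃ b, a = b + 2 := ⟨a - 2, by omega⟩
  have hb : 0 < b := by omega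
  simp only [Nat.add_sub_cancel, show b + 2 - 1 = b + 1 by omega] at *
  have hlt : 18 * m < b + 1 := by omega
  have hpos : 0 < C * ((b + 2) * (b + 2)) := by rw [hC]; positivity
  have h2 : C * ((b + 2) * (b + 2)) * (b + 1) ≤ C * ((b + 2) * (b + 2)) * (18 * m) := by
    calc C * ((b + 2) * (b + 2)) * (b + 1)
        = ((b + 2) * (b + 1) * b) * ((b + 2) * (b + 1) * b) := by rw [hC]; ring
      _ ≤ 18 * (C * NP) + 18 * (C * NQ) := htot
      _ = 18 * C * (NP + NQ) := by ring
      _ ≤ 18 * C * ((b + 2) * (b + 2) * m) := Nat.mul_le_mul_left _ hN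
      _ = _ := by ring
  exact absurd (Nat.le_of_mul_le_mul_left h2 hpos) (by omega)

/-! ### The lower bound -/

open Finset Classical in
/-- The points of `R` in `D` other than `u`, counted in the subtype `R`. -/
lemma card_subtype_ne_add_one {R D : Set Pt} [Fintype R] (u : R) (hu : (u : Pt) ∈ D) :
    #{x : R | x ≠ u ∧ (x : Pt) ∈ D} + 1 = (R ∩ D).ncard := by
  have h1 : (R ∩ D).ncard = #{x : R | (x : Pt) ∈ D} := by
    have : R ∩ D = Subtype.val '' (({x : R | (x : Pt) ∈ D} : Finset R) : Set R) := by
      ext p; simp [and_comm]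
    rw [this, Set.ncard_image_of_injective _ Subtype.val_injective, Set.ncard_coe_finset]
  have h2 : ({x : R | x ≠ u ∧ (x : Pt) ∈ D} : Finset R) =
      ({x : R | (x : Pt) ∈ D} : Finset R).erase u := by
    ext x; simp
  rw [h1, h2, card_erase_add_one (by simpa using hu)]

/-- For every even `n ≥ 6` and every set of `n` points in the plane in general position
partitioned into `n/2` red points `R` and `n/2` blue points `B`, there exist a red point
`u ∈ R` and a blue point `v ∈ B` such that every closed disk containing both `u` and `v`
contains at least `⌈(n−2)/36⌉ + 2` points of the set. -/
theorem pi_bichrom_lower_bound_n_over_36 (n : ℕ) (hn : 6 ≤ n) (heven : Even n)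
    (R B : Set Pt) (hfinR : R.Finite) (hfinB : B.Finite) (hdisj : Disjoint R B)
    (hR : R.ncard = n / 2) (hB : B.ncard = n / 2) (hgp : GenPos (R ∪ B)) :
    ∃ u ∈ R, ∃ v ∈ B,
      ∀ (c : Pt) (r : ℝ), 0 < r → u ∈ closedBall c r → v ∈ closedBall c r →
        ⌈((n : ℝ) - 2) / 36⌉ + 2 ≤ (((R ∪ B) ∩ closedBall c r).ncard : ℤ) := by
  classical
  by_contra hcon
  push Not at hcon
  obtain ⟨a, rfl⟩ := heven
  have hhalf : (a + a) / 2 = a := by omega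
  rw [hhalf] at hR hB
  have : Fintype R := hfinR.fintype
  have : Fintype B := hfinB.fintype
  have hcR : Fintype.card R = a := by rw [← hR, ← Nat.card_eq_fintype_card, Nat.card_coe_set_eq]
  have hcB : Fintype.card B = a := by rw [← hB, ← Nat.card_eq_fintype_card, Nat.card_coe_set_eq]
  choose c ρ hρ huc hvc hlt using fun (u : R) (v : B) => hcon u u.2 v v.2
  -- With `n = 2a`, fewer than `(n - 2) / 36 = (a - 1) / 18` further points means at most
  -- `(a - 2) / 18`, rounded down.
  obtain ⟨f, g, hf, hg⟩ := exists_free_triples a ((a - 2) / 18) hcR hcB (by omega) (by omega)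
    (fun (u : R) (v : B) (x : R) => (x : Pt) ∈ closedBall (c u v) (ρ u v))
    (fun (u : R) (v : B) (y : B) => (y : Pt) ∈ closedBall (c u v) (ρ u v)) (by
      intro u v
      have h1 := card_subtype_ne_add_one u (huc u v)
      have h2 := card_subtype_ne_add_one v (hvc u v)
      have h3 : ((R ∪ B) ∩ closedBall (c u v) (ρ u v)).ncard =
          (R ∩ closedBall (c u v) (ρ u v)).ncard + (B ∩ closedBall (c u v) (ρ u v)).ncard := by
        rw [Set.union_inter_distrib_right]
        exact Set.ncard_union_eq (hdisj.mono Set.inter_subset_left Set.inter_subset_left)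
          (hfinR.inter_of_left _) (hfinB.inter_of_left _)
      set p := Finset.card {x : R | x ≠ u ∧ (x : Pt) ∈ closedBall (c u v) (ρ u v)}
      set q := Finset.card {y : B | y ≠ v ∧ (y : Pt) ∈ closedBall (c u v) (ρ u v)}
      have h4 : ((p + q : ℕ) : ℤ) < ⌈(((a + a : ℕ) : ℝ) - 2) / 36⌉ := by
        have := hlt u v
        rw [h3, ← h1, ← h2] at this
        push_cast at this ⊢
        linarith
      have h5 : 18 * (p + q) + 1 < a := by
        rw [Int.lt_ceil] at h4
        have : (18 * (p + q) + 1 : ℝ) < a := by push_cast at h4; linarith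
        exact_mod_cast this
      rw [Nat.le_div_iff_mul_le (by norm_num)]
      omega)
  exact disks_not_empty (fun i => f i) (fun j => g j) (fun i j => c (f i) (g j))
    (fun i j => ρ (f i) (g j)) (fun i j => hρ _ _) (fun i j => huc _ _) (fun i j => hvc _ _)
    hf hg
end
end
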